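/- arXiv:2505.13371 — 9 statements merged into one kernel-verified Lean document; each statement's English description precedes it below -/
import Mathlib

section
/- There exists an absolute constant c > 0 with the following property. For every integer n ≥ 2 and every simple graph G on n vertices whose average degree d := 2·e(G)/n satisfies d ≥ (log n)⁴, there exists a nonempty set S of vertices of G such that the induced subgraph G[S] has average degree at least c·(log d / log n)·d and maximum degree at most 2·d^{3/2}. -/
open scoped Classical

namespace AlmostRegular

variable {V : Type*}

/-- The number of neighbours of `v` in `S`, as a real number. -/
noncomputable def degIn (G : SimpleGraph V) (S : Finset V) (v : V) : ℝ :=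
  ((S.filter fun w => G.Adj v w).card : ℝ)

lemma degIn_nonneg (G : SimpleGraph V) (S : Finset V) (v : V) : 0 ≤ degIn G S v :=
  Nat.cast_nonneg _

lemma degIn_eq_sum (G : SimpleGraph V) (S : Finset V) (v : V) :
    degIn G S v = ∑ w ∈ S, if G.Adj v w then (1 : ℝ) else 0 := by
  simp [degIn]

lemma degIn_mono (G : SimpleGraph V) {S T : Finset V} (h : S ⊆ T) (v : V) :
    degIn G S v ≤ degIn G T v := by
  unfold degIn
  exact_mod_cast Finset.card_le_card (Finset.filter_subset_filter _ h)

lemma degIn_le_card (G : SimpleGraph V) (S : Finset V) (v : V) :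
    degIn G S v ≤ S.card := by
  unfold degIn
  exact_mod_cast Finset.card_filter_le _ _

lemma degIn_union (G : SimpleGraph V) {S T : Finset V} (h : Disjoint S T) (v : V) :
    degIn G (S ∪ T) v = degIn G S v + degIn G T v := by
  simp only [degIn_eq_sum, Finset.sum_union h]

lemma sum_degIn_comm (G : SimpleGraph V) (S T : Finset V) :
    ∑ v ∈ S, degIn G T v = ∑ v ∈ T, degIn G S v := by
  simp only [degIn_eq_sum]
  rw [Finset.sum_comm]
  simp only [G.adj_comm]

/-- The sum of the degrees in the subgraph induced on a disjoint union. -/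
lemma sum_degIn_union (G : SimpleGraph V) {S T : Finset V} (h : Disjoint S T) :
    ∑ v ∈ S ∪ T, degIn G (S ∪ T) v =
      ∑ v ∈ S, degIn G S v + 2 * ∑ v ∈ T, degIn G S v + ∑ v ∈ T, degIn G T v := by
  simp only [degIn_union G h, Finset.sum_union h, Finset.sum_add_distrib]
  rw [sum_degIn_comm G S T]
  ring

/-- Deleting the vertices of degree greater than `T` loses at most the quadratic term. -/
lemma sum_degIn_filter_ge (G : SimpleGraph V) (S : Finset V) {T : ℝ} (hT : 0 < T) :
    ∑ v ∈ S, degIn G S v - 2 / T * ∑ v ∈ S, degIn G S v ^ 2 ≤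
      ∑ v ∈ S with degIn G S v ≤ T, degIn G (S.filter fun u => degIn G S u ≤ T) v := by
  set A := S.filter fun u => degIn G S u ≤ T with hA
  set B := S.filter fun u => ¬ degIn G S u ≤ T with hB
  have hdisj : Disjoint A B := Finset.disjoint_filter_filter_not _ _ _
  have hunion : A ∪ B = S := Finset.filter_union_filter_not_eq _ _
  have hsum := sum_degIn_union G hdisj
  rw [hunion] at hsum
  have hBS : ∑ v ∈ B, degIn G S v = ∑ v ∈ B, degIn G A v + ∑ v ∈ B, degIn G B v := by
    rw [← Finset.sum_add_distrib]
    refine Finset.sum_congr rfl fun v _ => ?_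
    rw [← degIn_union G hdisj, hunion]
  have hBnn : 0 ≤ ∑ v ∈ B, degIn G B v := Finset.sum_nonneg fun v _ => degIn_nonneg _ _ _
  have hsq : ∑ v ∈ B, degIn G S v ≤ 1 / T * ∑ v ∈ S, degIn G S v ^ 2 := by
    calc ∑ v ∈ B, degIn G S v ≤ ∑ v ∈ B, 1 / T * degIn G S v ^ 2 := by
          refine Finset.sum_le_sum fun v hv => ?_
          have hv' : T < degIn G S v := not_le.mp (Finset.mem_filter.mp hv).2
          rw [div_mul_eq_mul_div, le_div_iff₀ hT]
          nlinarith
      _ ≤ ∑ v ∈ S, 1 / T * degIn G S v ^ 2 :=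
          Finset.sum_le_sum_of_subset_of_nonneg (Finset.filter_subset _ _)
            fun v _ _ => by positivity
      _ = _ := by rw [Finset.mul_sum]
  have h2 : 2 / T * ∑ v ∈ S, degIn G S v ^ 2 = 2 * (1 / T * ∑ v ∈ S, degIn G S v ^ 2) := by ring
  rw [h2]
  linarith

lemma prod_triple_le {p : V → ℝ} (h0 : ∀ v, 0 ≤ p v) {u v w : V} (huv : u ≠ v) (huw : u ≠ w) :
    ∏ x ∈ ({u, v, w} : Finset V), p x ≤ p u * (p v * p w + if v = w then p v else 0) := by
  by_cases hvw : v = w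
  · subst hvw
    have : ({u, v, v} : Finset V) = {u, v} := by simp
    rw [this, Finset.prod_pair huv, if_pos rfl]
    exact mul_le_mul_of_nonneg_left (by nlinarith [h0 v, mul_self_nonneg (p v)]) (h0 u)
  · rw [Finset.prod_insert (by simp [huv, huw]), Finset.prod_pair hvw, if_neg hvw, add_zero]

section Sampling

variable [Fintype V]

/-- The probability of the set `S` when each vertex `v` is kept independently with
probability `p v`. -/
noncomputable def sampleWeight (p : V → ℝ) (S : Finset V) : ℝ :=
  (∏ v ∈ S, p v) * ∏ v ∈ Finset.univ \ S, (1 - p v)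

lemma sampleWeight_nonneg {p : V → ℝ} (h0 : ∀ v, 0 ≤ p v) (h1 : ∀ v, p v ≤ 1) (S : Finset V) :
    0 ≤ sampleWeight p S :=
  mul_nonneg (Finset.prod_nonneg fun v _ => h0 v)
    (Finset.prod_nonneg fun v _ => sub_nonneg.mpr (h1 v))

lemma sum_sampleWeight_subset (p : V → ℝ) (A : Finset V) :
    ∑ S : Finset V, sampleWeight p S * (if A ⊆ S then 1 else 0) = ∏ v ∈ A, p v := by
  have h := Finset.prod_add p (fun v => if v ∈ A then 0 else 1 - p v) Finset.univ
  have hl : ∏ v : V, (p v + if v ∈ A then 0 else 1 - p v) = ∏ v ∈ A, p v := by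
    rw [← Finset.prod_subset (Finset.subset_univ A)]
    · exact Finset.prod_congr rfl fun v hv => by simp [hv]
    · intro v _ hv
      simp [hv]
  rw [← hl, h, Finset.powerset_univ]
  refine Finset.sum_congr rfl fun S _ => ?_
  unfold sampleWeight
  by_cases hS : A ⊆ S
  · rw [if_pos hS, mul_one]
    congr 1
    refine Finset.prod_congr rfl fun v hv => ?_
    rw [if_neg fun hvA => (Finset.mem_sdiff.mp hv).2 (hS hvA)]
  · obtain ⟨v, hvA, hvS⟩ := Finset.not_subset.mp hS
    rw [if_neg hS, mul_zero, Finset.prod_eq_zero (i := v) (s := Finset.univ \ S)]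
    · simp
    · simp [hvS]
    · simp [hvA]

lemma sum_sampleWeight_card (p : V → ℝ) :
    ∑ S : Finset V, sampleWeight p S * (S.card : ℝ) = ∑ v, p v := by
  have h : ∀ S : Finset V, (S.card : ℝ) = ∑ v, if {v} ⊆ S then (1 : ℝ) else 0 := by
    intro S; simp
  simp only [h, Finset.mul_sum]
  rw [Finset.sum_comm]
  simp only [sum_sampleWeight_subset, Finset.prod_singleton]

lemma sum_sampleWeight_degIn (G : SimpleGraph V) (p : V → ℝ) :
    ∑ S : Finset V, sampleWeight p S * ∑ u ∈ S, degIn G S u =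
      ∑ u, p u * ∑ v, if G.Adj u v then p v else 0 := by
  have h : ∀ S : Finset V, ∑ u ∈ S, degIn G S u =
      ∑ u, ∑ v, (if G.Adj u v then (1 : ℝ) else 0) * if {u, v} ⊆ S then (1 : ℝ) else 0 := by
    intro S
    simp only [degIn_eq_sum]
    rw [← Finset.sum_subset (Finset.subset_univ S)]
    · refine Finset.sum_congr rfl fun u hu => ?_
      rw [← Finset.sum_subset (Finset.subset_univ S)]
      · refine Finset.sum_congr rfl fun v hv => ?_
        simp [Finset.insert_subset_iff, hu, hv]
      · intro v _ hv
        simp [Finset.insert_subset_iff, hv]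
    · intro u _ hu
      simp [Finset.insert_subset_iff, hu]
  simp only [h, Finset.mul_sum]
  rw [Finset.sum_comm]
  refine Finset.sum_congr rfl fun u _ => ?_
  rw [Finset.sum_comm]
  refine Finset.sum_congr rfl fun v _ => ?_
  by_cases huv : G.Adj u v
  · simp only [huv, if_true, one_mul]
    rw [sum_sampleWeight_subset, Finset.prod_pair huv.ne]
  · simp [huv]

lemma sum_sampleWeight_degIn_sq_le (G : SimpleGraph V) {p : V → ℝ} (h0 : ∀ v, 0 ≤ p v) :
    ∑ S : Finset V, sampleWeight p S * ∑ u ∈ S, degIn G S u ^ 2 ≤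
      ∑ u, p u * ((∑ v, if G.Adj u v then p v else 0) ^ 2 +
        ∑ v, if G.Adj u v then p v else 0) := by
  have h : ∀ S : Finset V, ∑ u ∈ S, degIn G S u ^ 2 =
      ∑ u, ∑ v, ∑ w, (if G.Adj u v ∧ G.Adj u w then (1 : ℝ) else 0) *
        if {u, v, w} ⊆ S then (1 : ℝ) else 0 := by
    intro S
    simp only [degIn_eq_sum, sq, Finset.sum_mul_sum]
    rw [← Finset.sum_subset (Finset.subset_univ S)]
    · refine Finset.sum_congr rfl fun u hu => ?_
      rw [← Finset.sum_subset (Finset.subset_univ S)]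
      · refine Finset.sum_congr rfl fun v hv => ?_
        rw [← Finset.sum_subset (Finset.subset_univ S)]
        · refine Finset.sum_congr rfl fun w hw => ?_
          by_cases huv : G.Adj u v <;> simp [Finset.insert_subset_iff, hu, hv, hw, huv]
        · intro w _ hw
          simp [Finset.insert_subset_iff, hw]
      · intro v _ hv
        simp [Finset.insert_subset_iff, hv]
    · intro u _ hu
      simp [Finset.insert_subset_iff, hu]
  simp only [h, Finset.mul_sum]
  rw [Finset.sum_comm]
  refine Finset.sum_le_sum fun u _ => ?_
  rw [Finset.sum_comm]
  have hsq : p u * ((∑ v, if G.Adj u v then p v else 0) ^ 2 +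
        ∑ v, if G.Adj u v then p v else 0) =
      ∑ v, ∑ w, (if G.Adj u v ∧ G.Adj u w then (1 : ℝ) else 0) *
        (p u * (p v * p w + if v = w then p v else 0)) := by
    rw [sq, Finset.sum_mul_sum, ← Finset.sum_add_distrib, Finset.mul_sum]
    refine Finset.sum_congr rfl fun v _ => ?_
    have : (if G.Adj u v then p v else 0) =
        ∑ w, if v = w then (if G.Adj u v then p v else 0) else 0 := by simp
    nth_rewrite 2 [this]
    rw [← Finset.sum_add_distrib, Finset.mul_sum]
    refine Finset.sum_congr rfl fun w _ => ?_
    by_cases hvw : v = w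
    · subst hvw
      by_cases huv : G.Adj u v <;> simp [huv]
    · by_cases huv : G.Adj u v <;> by_cases huw : G.Adj u w <;> simp [huv, huw, hvw]
  rw [hsq]
  refine Finset.sum_le_sum fun v _ => ?_
  rw [Finset.sum_comm]
  refine Finset.sum_le_sum fun w _ => ?_
  by_cases hadj : G.Adj u v ∧ G.Adj u w
  · simp only [hadj, and_self, if_true, one_mul]
    rw [sum_sampleWeight_subset]
    exact prod_triple_le h0 hadj.1.ne hadj.2.ne
  · simp [hadj]

/-- A random vertex subset, with the vertices of large degree deleted, spans a subgraph of
bounded maximum degree and large average degree. -/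
lemma exists_induced_of_sampling (G : SimpleGraph V) {p : V → ℝ} (h0 : ∀ v, 0 ≤ p v)
    (h1 : ∀ v, p v ≤ 1) {M T r : ℝ} (hT : 0 < T) (hMT : 4 * (M + 1) ≤ T) (hr : 0 ≤ r)
    (hM : ∀ u, p u ≠ 0 → (∑ v, if G.Adj u v then p v else 0) ≤ M)
    (hdense : r * ∑ v, p v < 1 / 2 * ∑ u, p u * ∑ v, if G.Adj u v then p v else 0) :
    ∃ S : Finset V, S.Nonempty ∧ r * S.card ≤ ∑ v ∈ S, degIn G S v ∧
      ∀ v ∈ S, degIn G S v ≤ T := by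
  obtain ⟨S, hS⟩ : ∃ S : Finset V,
      0 < ∑ u ∈ S, degIn G S u - 2 / T * ∑ u ∈ S, degIn G S u ^ 2 - r * S.card := by
    by_contra! hcon
    have hle : ∑ S : Finset V, sampleWeight p S *
        (∑ u ∈ S, degIn G S u - 2 / T * ∑ u ∈ S, degIn G S u ^ 2 - r * S.card) ≤ 0 :=
      Finset.sum_nonpos fun S _ =>
        mul_nonpos_of_nonneg_of_nonpos (sampleWeight_nonneg h0 h1 S) (hcon S)
    have hexp : ∑ S : Finset V, sampleWeight p S *
        (∑ u ∈ S, degIn G S u - 2 / T * ∑ u ∈ S, degIn G S u ^ 2 - r * S.card) =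
        ∑ S : Finset V, sampleWeight p S * ∑ u ∈ S, degIn G S u -
        2 / T * ∑ S : Finset V, sampleWeight p S * ∑ u ∈ S, degIn G S u ^ 2 -
        r * ∑ S : Finset V, sampleWeight p S * (S.card : ℝ) := by
      rw [Finset.mul_sum, Finset.mul_sum, ← Finset.sum_sub_distrib, ← Finset.sum_sub_distrib]
      exact Finset.sum_congr rfl fun S _ => by ring
    rw [hexp, sum_sampleWeight_degIn, sum_sampleWeight_card] at hle
    have hsq : 2 / T * ∑ S : Finset V, sampleWeight p S * ∑ u ∈ S, degIn G S u ^ 2 ≤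
        1 / 2 * ∑ u, p u * ∑ v, if G.Adj u v then p v else 0 := by
      refine (mul_le_mul_of_nonneg_left (sum_sampleWeight_degIn_sq_le G h0)
        (by positivity)).trans ?_
      rw [Finset.mul_sum, Finset.mul_sum]
      refine Finset.sum_le_sum fun u _ => ?_
      by_cases hu : p u = 0
      · simp [hu]
      have hm := hM u hu
      have hmnn : 0 ≤ ∑ v, if G.Adj u v then p v else 0 :=
        Finset.sum_nonneg fun v _ => by split_ifs <;> simp [h0]
      set m := ∑ v, if G.Adj u v then p v else 0
      rw [div_mul_eq_mul_div, div_le_iff₀ hT]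
      have hpm : 0 ≤ p u * m := mul_nonneg (h0 u) hmnn
      nlinarith [mul_le_mul_of_nonneg_left (show 4 * (m + 1) ≤ T by linarith) hpm]
    linarith
  have hge := sum_degIn_filter_ge G S hT
  set A := S.filter fun u => degIn G S u ≤ T with hA
  have hcard : r * (A.card : ℝ) ≤ r * S.card :=
    mul_le_mul_of_nonneg_left (by exact_mod_cast Finset.card_filter_le _ _) hr
  have hScard : 0 ≤ r * (S.card : ℝ) := by positivity
  refine ⟨A, ?_, by linarith, fun v hv => ?_⟩
  · rw [Finset.nonempty_iff_ne_empty]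
    intro hempty
    rw [hempty, Finset.sum_empty] at hge
    linarith
  · exact (degIn_mono G (Finset.filter_subset _ _) v).trans (Finset.mem_filter.mp hv).2

/-- Sampling from two disjoint sets at two constant rates. -/
lemma exists_induced_of_two_rates (G : SimpleGraph V) {A B : Finset V} (hAB : Disjoint A B)
    {a b M T r : ℝ} (ha0 : 0 ≤ a) (ha1 : a ≤ 1) (hb0 : 0 ≤ b) (hb1 : b ≤ 1)
    (hT : 0 < T) (hMT : 4 * (M + 1) ≤ T) (hr : 0 ≤ r)
    (hM : ∀ v ∈ A ∪ B, a * degIn G A v + b * degIn G B v ≤ M)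
    (hdense : r * (a * A.card + b * B.card) <
      1 / 2 * (a ^ 2 * ∑ v ∈ A, degIn G A v + 2 * (a * b * ∑ v ∈ B, degIn G A v))) :
    ∃ S : Finset V, S.Nonempty ∧ r * S.card ≤ ∑ v ∈ S, degIn G S v ∧
      ∀ v ∈ S, degIn G S v ≤ T := by
  have hsum : ∀ f : V → ℝ, ∑ v, (if v ∈ A then a else if v ∈ B then b else 0) * f v =
      a * ∑ v ∈ A, f v + b * ∑ v ∈ B, f v := by
    intro f
    have hf : ∀ v, (if v ∈ A then a else if v ∈ B then b else 0) * f v =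
        a * (if v ∈ A then f v else 0) + b * (if v ∈ B then f v else 0) := by
      intro v
      by_cases hA : v ∈ A
      · simp [hA, Finset.disjoint_left.mp hAB hA]
      · simp [hA]
    simp only [hf, Finset.sum_add_distrib, ← Finset.mul_sum]
    simp
  have hdeg : ∀ u, (∑ v, if G.Adj u v then (if v ∈ A then a else if v ∈ B then b else 0) else 0)
      = a * degIn G A u + b * degIn G B u := by
    intro u
    rw [degIn_eq_sum, degIn_eq_sum, ← hsum]
    exact Finset.sum_congr rfl fun v _ => by simp
  refine exists_induced_of_sampling G
    (p := fun v => if v ∈ A then a else if v ∈ B then b else 0) ?_ ?_ hT hMT hr ?_ ?_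
  · intro v; split_ifs <;> simp [*]
  · intro v; split_ifs <;> simp [*]
  · intro u hu
    rw [hdeg]
    apply hM
    by_contra hcon
    simp only [Finset.mem_union, not_or] at hcon
    simp [hcon.1, hcon.2] at hu
  · simp only [hdeg]
    rw [hsum]
    have hone := hsum fun _ => 1
    simp only [mul_one, Finset.sum_const, nsmul_eq_mul] at hone
    rw [hone]
    refine hdense.trans_le ?_
    have hBB : 0 ≤ b ^ 2 * ∑ v ∈ B, degIn G B v :=
      mul_nonneg (sq_nonneg b) (Finset.sum_nonneg fun v _ => degIn_nonneg _ _ _)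
    simp only [Finset.sum_add_distrib, ← Finset.mul_sum]
    rw [sum_degIn_comm G A B]
    nlinarith

end Sampling

/-- A real number in `[0, D * s ^ K]` is at most `D` or lies in one of `K` scales. -/
lemma le_add_sum_scales {x D s : ℝ} {K : ℕ} (hx : 0 ≤ x) (hxK : x ≤ D * s ^ K) (hD : 0 ≤ D) :
    x ≤ D + ∑ i ∈ Finset.range K,
      if D * s ^ i < x ∧ x ≤ D * s ^ (i + 1) then x else 0 := by
  have hnn : ∀ i ∈ Finset.range K, 0 ≤
      if D * s ^ i < x ∧ x ≤ D * s ^ (i + 1) then x else 0 :=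
    fun i _ => by split_ifs <;> simp [hx]
  by_cases hle : x ≤ D
  · linarith [Finset.sum_nonneg hnn]
  · have hex : ∃ j, x ≤ D * s ^ j := ⟨K, hxK⟩
    have hjK : Nat.find hex ≤ K := Nat.find_min' hex hxK
    have hj0 : Nat.find hex ≠ 0 := by
      intro h
      have := Nat.find_spec hex
      rw [h, pow_zero, mul_one] at this
      exact hle this
    obtain ⟨i, hi⟩ := Nat.exists_eq_succ_of_ne_zero hj0
    have h1 : D * s ^ i < x := not_le.mp (Nat.find_min hex (by omega))
    have h2 : x ≤ D * s ^ (i + 1) := by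
      have := Nat.find_spec hex
      rwa [hi] at this
    have h3 := Finset.single_le_sum hnn (Finset.mem_range.mpr (show i < K by omega))
    rw [if_pos ⟨h1, h2⟩] at h3
    linarith

/-- The case of many edges between a set `L` of vertices of small degree and a set `C` of
vertices whose degrees into `L` are all about `Δ`. -/
lemma exists_induced_of_bipartite_class [Fintype V] (G : SimpleGraph V) {L C : Finset V}
    (hLC : Disjoint L C) {D d s Δ N k : ℝ} (hs : 16 ≤ s) (hd : d = s ^ 8) (hdD : d ≤ D)
    (hDΔ : D ≤ Δ) (hN : 0 < N) (hK0 : 0 < k) (hLcard : (L.card : ℝ) ≤ N)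
    (hLdeg : ∀ v ∈ L, degIn G L v ≤ s * D ∧ degIn G C v ≤ s * D)
    (hClow : ∀ v ∈ C, Δ ≤ degIn G L v) (hChigh : ∀ v ∈ C, degIn G L v ≤ Δ * s)
    (hCmax : ∑ v ∈ C, degIn G C v ≤ D * C.card)
    (hi : D * N / (4 * k) ≤ ∑ v ∈ C, degIn G L v)
    (hCU : ∑ v ∈ C, degIn G L v ≤ D * N) :
    ∃ S : Finset V, S.Nonempty ∧ d / (24 * k) * S.card ≤ ∑ v ∈ S, degIn G S v ∧
      ∀ v ∈ S, degIn G S v ≤ 2 * s ^ 12 := by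
  have hs0 : 0 < s := by linarith
  have hs1 : 1 ≤ s := by linarith
  have hd0 : 0 < d := by rw [hd]; positivity
  have hD0 : 0 < D := by linarith
  have hT : (0 : ℝ) < 2 * s ^ 12 := by positivity
  have hs10 : (1 : ℝ) ≤ s ^ 10 := one_le_pow₀ hs1
  have hMT : 4 * (2 * s ^ 10 + 1) ≤ 2 * s ^ 12 := by
    have h1 : s ^ 12 = s ^ 2 * s ^ 10 := by ring
    have h2 : 6 * s ^ 10 ≤ s ^ 2 * s ^ 10 := by
      gcongr
      nlinarith
    linarith
  have hds : d * s ^ 2 = s ^ 10 := by rw [hd]; ring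
  have hds1 : d * s ≤ s ^ 10 := by
    rw [← hds]; exact mul_le_mul_of_nonneg_left (by nlinarith) hd0.le
  have hr : 0 ≤ d / (24 * k) := by positivity
  have hΔ0 : 0 < Δ := by linarith
  set E := C.filter fun v => degIn G C v ≤ s ^ 2 * D with hE
  set B := C.filter fun v => ¬ degIn G C v ≤ s ^ 2 * D with hB
  have hEC : E ⊆ C := Finset.filter_subset _ _
  have hEB : ∑ v ∈ E, degIn G L v + ∑ v ∈ B, degIn G L v = ∑ v ∈ C, degIn G L v :=
    Finset.sum_filter_add_sum_filter_not _ _ _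
  have hCsum : Δ * C.card ≤ ∑ v ∈ C, degIn G L v := by
    have := Finset.card_nsmul_le_sum C (fun v => degIn G L v) Δ hClow
    rwa [nsmul_eq_mul, mul_comm] at this
  have hBcard : s ^ 2 * (B.card : ℝ) ≤ C.card := by
    have h1 : ∑ _v ∈ B, s ^ 2 * D ≤ ∑ v ∈ B, degIn G C v :=
      Finset.sum_le_sum fun v hv => (not_le.mp (Finset.mem_filter.mp hv).2).le
    rw [Finset.sum_const, nsmul_eq_mul] at h1
    have h2 : ∑ v ∈ B, degIn G C v ≤ ∑ v ∈ C, degIn G C v :=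
      Finset.sum_le_sum_of_subset_of_nonneg (Finset.filter_subset _ _)
        fun v _ _ => degIn_nonneg _ _ _
    have h3 : D * (s ^ 2 * B.card) ≤ D * C.card := by linarith [hCmax]
    exact le_of_mul_le_mul_left h3 hD0
  have hBsum : 2 * ∑ v ∈ B, degIn G L v ≤ ∑ v ∈ C, degIn G L v := by
    have h1 : ∑ v ∈ B, degIn G L v ≤ B.card * (Δ * s) := by
      have := Finset.sum_le_card_nsmul B (fun v => degIn G L v) (Δ * s)
        fun v hv => hChigh v (Finset.filter_subset _ _ hv)
      rwa [nsmul_eq_mul] at this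
    have h2 : 2 * (B.card * (Δ * s)) ≤ Δ * (s ^ 2 * B.card) := by
      have : 0 ≤ Δ * s * B.card := by positivity
      nlinarith
    have h3 := mul_le_mul_of_nonneg_left hBcard hΔ0.le
    linarith
  have hEsum : D * N / (8 * k) ≤ ∑ v ∈ E, degIn G L v := by
    have : D * N / (4 * k) = 2 * (D * N / (8 * k)) := by field_simp; norm_num
    linarith
  have hEcard : Δ * E.card ≤ D * N := by
    have h1 := Finset.card_nsmul_le_sum E (fun v => degIn G L v) Δ
      fun v hv => hClow v (hEC hv)
    rw [nsmul_eq_mul, mul_comm] at h1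
    have h2 : ∑ v ∈ E, degIn G L v ≤ ∑ v ∈ C, degIn G L v :=
      Finset.sum_le_sum_of_subset_of_nonneg hEC fun v _ _ => degIn_nonneg _ _ _
    linarith
  refine exists_induced_of_two_rates G (hLC.mono_right hEC) (a := d / Δ)
    (b := d / D) (by positivity) ((div_le_one hΔ0).mpr (hdD.trans hDΔ)) (by positivity)
    ((div_le_one hD0).mpr hdD) hT hMT hr ?_ ?_
  · have hcancel : d / D * (s * D) = d * s := by field_simp
    intro v hv
    rcases Finset.mem_union.mp hv with hv | hv
    · have h1 : d / Δ * degIn G L v ≤ d / D * (s * D) := by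
        have := (hLdeg v hv).1
        have := degIn_nonneg G L v
        gcongr
      have h2 : d / D * degIn G E v ≤ d / D * (s * D) :=
        mul_le_mul_of_nonneg_left ((degIn_mono G hEC v).trans (hLdeg v hv).2) (by positivity)
      linarith
    · have h1 : d / Δ * degIn G L v ≤ d / Δ * (Δ * s) :=
        mul_le_mul_of_nonneg_left (hChigh v (hEC hv)) (by positivity)
      have h2 : d / D * degIn G E v ≤ d / D * (s ^ 2 * D) :=
        mul_le_mul_of_nonneg_left
          ((degIn_mono G hEC v).trans (Finset.mem_filter.mp hv).2) (by positivity)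
      have h3 : d / Δ * (Δ * s) = d * s := by field_simp
      have h4 : d / D * (s ^ 2 * D) = d * s ^ 2 := by field_simp
      linarith
  · have hLL : 0 ≤ (d / Δ) ^ 2 * ∑ v ∈ L, degIn G L v :=
      mul_nonneg (sq_nonneg _) (Finset.sum_nonneg fun v _ => degIn_nonneg _ _ _)
    have h1 : d / Δ * (d / D) * (D * N / (8 * k)) ≤ d / Δ * (d / D) * ∑ v ∈ E, degIn G L v :=
      mul_le_mul_of_nonneg_left hEsum (by positivity)
    have h2 : d / Δ * (d / D) * (D * N / (8 * k)) = d / (24 * k) * (3 * (d / Δ * N)) := by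
      field_simp
      norm_num
    have h3 : d / D * E.card ≤ d / Δ * N := by
      rw [div_mul_eq_mul_div, div_mul_eq_mul_div, div_le_div_iff₀ hD0 hΔ0]
      nlinarith
    have h4 : d / Δ * L.card ≤ d / Δ * N := mul_le_mul_of_nonneg_left hLcard (by positivity)
    have h5 : d / (24 * k) * (d / Δ * L.card + d / D * E.card) ≤
        d / (24 * k) * (2 * (d / Δ * N)) := mul_le_mul_of_nonneg_left (by linarith) hr
    have h6 : 0 < d / (24 * k) * (d / Δ * N) := by positivity
    linarith

/-- The main construction, in a graph spanned by a set `U` of maximum density. -/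
lemma exists_induced_of_max_density [Fintype V] (G : SimpleGraph V) {U : Finset V}
    (hU : U.Nonempty) {D d s : ℝ} {K : ℕ} (hs : 16 ≤ s) (hd : d = s ^ 8) (hdD : d ≤ D)
    (hvol : ∑ v ∈ U, degIn G U v = D * U.card)
    (hmax : ∀ A : Finset V, ∑ v ∈ A, degIn G A v ≤ D * A.card)
    (hK : 0 < K) (hUK : (U.card : ℝ) ≤ D * s ^ K) :
    ∃ S : Finset V, S.Nonempty ∧ d / (24 * K) * S.card ≤ ∑ v ∈ S, degIn G S v ∧
      ∀ v ∈ S, degIn G S v ≤ 2 * s ^ 12 := by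
  have hs0 : 0 < s := by linarith
  have hs1 : 1 ≤ s := by linarith
  have hd0 : 0 < d := by rw [hd]; positivity
  have hD0 : 0 < D := by linarith
  have hN : (0 : ℝ) < U.card := by exact_mod_cast hU.card_pos
  have hK1 : (1 : ℝ) ≤ K := by exact_mod_cast hK
  have hK0 : (0 : ℝ) < K := by linarith
  have hT : (0 : ℝ) < 2 * s ^ 12 := by positivity
  have hs10 : (1 : ℝ) ≤ s ^ 10 := one_le_pow₀ hs1
  have hMT : 4 * (2 * s ^ 10 + 1) ≤ 2 * s ^ 12 := by
    have h1 : s ^ 12 = s ^ 2 * s ^ 10 := by ring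
    have h2 : 6 * s ^ 10 ≤ s ^ 2 * s ^ 10 := by
      gcongr
      nlinarith
    linarith
  have hds : d * s ^ 2 = s ^ 10 := by rw [hd]; ring
  have hds1 : d * s ≤ s ^ 10 := by
    rw [← hds]; exact mul_le_mul_of_nonneg_left (by nlinarith) hd0.le
  have hr : 0 ≤ d / (24 * K) := by positivity
  set N : ℝ := (U.card : ℝ) with hNdef
  set L := U.filter fun v => degIn G U v ≤ s * D with hL
  set H := U.filter fun v => ¬ degIn G U v ≤ s * D with hH
  have hLH : Disjoint L H := Finset.disjoint_filter_filter_not _ _ _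
  have hunion : L ∪ H = U := Finset.filter_union_filter_not_eq _ _
  have hLU : L ⊆ U := Finset.filter_subset _ _
  have hHU : H ⊆ U := Finset.filter_subset _ _
  have hLcard : (L.card : ℝ) ≤ N := Nat.cast_le.mpr (Finset.card_le_card hLU)
  have hLdeg : ∀ v ∈ L, ∀ A ⊆ U, degIn G A v ≤ s * D := fun v hv A hA =>
    (degIn_mono G hA v).trans (Finset.mem_filter.mp hv).2
  have hHvol : ∑ v ∈ H, degIn G U v ≤ D * N := by
    rw [← hvol]
    exact Finset.sum_le_sum_of_subset_of_nonneg hHU fun v _ _ => degIn_nonneg _ _ _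
  have hHcard : 16 * (H.card : ℝ) ≤ N := by
    have h1 : ∑ _v ∈ H, s * D ≤ ∑ v ∈ H, degIn G U v :=
      Finset.sum_le_sum fun v hv => (not_le.mp (Finset.mem_filter.mp hv).2).le
    rw [Finset.sum_const, nsmul_eq_mul] at h1
    have h2 : D * (s * H.card) ≤ D * N := by linarith
    have h3 := le_of_mul_le_mul_left h2 hD0
    nlinarith [(Nat.cast_nonneg H.card : (0 : ℝ) ≤ H.card)]
  have hsplit := sum_degIn_union G hLH
  rw [hunion, hvol] at hsplit
  by_cases hcase : D * N / 4 ≤ ∑ v ∈ L, degIn G L v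
  · refine exists_induced_of_two_rates G (Finset.disjoint_empty_right L) (a := d / D) (b := 0)
      (by positivity) ((div_le_one hD0).mpr hdD) le_rfl zero_le_one hT hMT hr ?_ ?_
    · intro v hv
      rw [Finset.union_empty] at hv
      have h1 : d / D * degIn G L v ≤ d / D * (s * D) :=
        mul_le_mul_of_nonneg_left (hLdeg v hv L hLU) (by positivity)
      have h2 : d / D * (s * D) = d * s := by field_simp
      linarith
    · simp only [zero_mul, add_zero, mul_zero, Finset.sum_empty]
      have h1 : d / (24 * K) * (d / D * L.card) ≤ d / 24 * (d / D * N) := by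
        gcongr
        linarith
      have h2 : (d / D) ^ 2 * (D * N / 4) ≤ (d / D) ^ 2 * ∑ v ∈ L, degIn G L v :=
        mul_le_mul_of_nonneg_left hcase (sq_nonneg _)
      have h3 : (d / D) ^ 2 * (D * N / 4) = d * (d / D * N) / 4 := by field_simp
      have h4 : 0 < d * (d / D * N) := by positivity
      linarith
  · push Not at hcase
    -- the classes of vertices of `H`, according to the degree into `L`
    set C : ℕ → Finset V := fun i =>
      H.filter fun v => D * s ^ i < degIn G L v ∧ degIn G L v ≤ D * s ^ (i + 1) with hC
    have hcover : ∑ v ∈ H, degIn G L v ≤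
        D * H.card + ∑ i ∈ Finset.range K, ∑ v ∈ C i, degIn G L v := by
      have hpt : ∀ v ∈ H, degIn G L v ≤ D + ∑ i ∈ Finset.range K,
          if D * s ^ i < degIn G L v ∧ degIn G L v ≤ D * s ^ (i + 1) then degIn G L v else 0 :=
        fun v _ => le_add_sum_scales (degIn_nonneg G L v)
          ((degIn_le_card G L v).trans (hLcard.trans hUK)) hD0.le
      refine (Finset.sum_le_sum hpt).trans (le_of_eq ?_)
      rw [Finset.sum_add_distrib, Finset.sum_const, nsmul_eq_mul, Finset.sum_comm, mul_comm]
      simp only [hC, Finset.sum_filter]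
    have hHmax := hmax H
    have hDH : D * (16 * H.card) ≤ D * N := mul_le_mul_of_nonneg_left hHcard hD0.le
    obtain ⟨i, -, hi⟩ : ∃ i ∈ Finset.range K, D * N / (4 * K) ≤ ∑ v ∈ C i, degIn G L v := by
      refine Finset.exists_le_of_sum_le (Finset.nonempty_range_iff.mpr hK.ne') ?_
      rw [Finset.sum_const, Finset.card_range, nsmul_eq_mul]
      have h1 : (K : ℝ) * (D * N / (4 * K)) = D * N / 4 := by field_simp
      have h2 : 0 < D * N := by positivity
      linarith
    set Δ := D * s ^ i with hΔ
    have hDΔ : D ≤ Δ := le_mul_of_one_le_right hD0.le (one_le_pow₀ hs1)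
    have hΔ0 : 0 < Δ := by linarith
    have hCH : C i ⊆ H := Finset.filter_subset _ _
    have hClow : ∀ v ∈ C i, Δ ≤ degIn G L v := fun v hv => (Finset.mem_filter.mp hv).2.1.le
    have hChigh : ∀ v ∈ C i, degIn G L v ≤ Δ * s := fun v hv => by
      have := (Finset.mem_filter.mp hv).2.2
      rwa [pow_succ, ← mul_assoc] at this
    have hCU : ∑ v ∈ C i, degIn G L v ≤ D * N :=
      ((Finset.sum_le_sum fun v _ => degIn_mono G hLU v).trans
        (Finset.sum_le_sum_of_subset_of_nonneg hCH fun v _ _ => degIn_nonneg _ _ _)).trans hHvol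
    exact exists_induced_of_bipartite_class G (hLH.mono_right hCH) hs hd hdD hDΔ hN hK0 hLcard
      (fun v hv => ⟨hLdeg v hv L hLU, hLdeg v hv _ (hCH.trans hHU)⟩) hClow hChigh
      (hmax (C i)) hi hCU

/-- Some nonempty vertex set has maximum density. -/
lemma exists_max_density [Fintype V] [Nonempty V] (G : SimpleGraph V) :
    ∃ (U : Finset V) (D : ℝ), U.Nonempty ∧ ∑ v ∈ U, degIn G U v = D * U.card ∧
      ∀ A : Finset V, ∑ v ∈ A, degIn G A v ≤ D * A.card := by
  obtain ⟨U, hU, hmax⟩ := Finset.exists_max_image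
    (Finset.univ.filter fun A : Finset V => A.Nonempty)
    (fun A => (∑ v ∈ A, degIn G A v) / A.card) ⟨Finset.univ, by simp⟩
  have hUne : U.Nonempty := (Finset.mem_filter.mp hU).2
  refine ⟨U, (∑ v ∈ U, degIn G U v) / U.card, hUne, ?_, fun A => ?_⟩
  · have : (U.card : ℝ) ≠ 0 := by exact_mod_cast hUne.card_pos.ne'
    field_simp
  · rcases A.eq_empty_or_nonempty with rfl | hA
    · simp
    · have : (0 : ℝ) < A.card := by exact_mod_cast hA.card_pos
      rw [← div_le_iff₀ this]
      exact hmax A (by simp [hA])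

lemma sum_degIn_univ [Fintype V] (G : SimpleGraph V) :
    ∑ v, degIn G Finset.univ v = 2 * (Nat.card G.edgeSet : ℝ) := by
  have h := G.sum_degrees_eq_twice_card_edges
  rw [SimpleGraph.edgeFinset_card, ← Nat.card_eq_fintype_card] at h
  have hdeg : ∀ v, degIn G Finset.univ v = (G.degree v : ℝ) := by
    intro v
    rw [degIn, ← SimpleGraph.card_neighborFinset_eq_degree, SimpleGraph.neighborFinset_eq_filter]
  simp only [hdeg]
  exact_mod_cast h

end AlmostRegular

open AlmostRegular

/-- **Lemma 6.2 of the paper.** There is an absolute constant `c > 0` such that every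
graph `G` on `n ≥ 2` vertices with average degree `d = 2·e(G)/n ≥ (log n)⁴` contains a
nonempty vertex set `S` such that the induced subgraph `G[S]` has average degree at least
`c·(log d/log n)·d` and maximum degree at most `2·d^{3/2}`.
(Here the degree of `v ∈ S` in `G[S]` is the number of neighbours of `v` lying in `S`.) -/
theorem dense_almost_regular_induced_subgraph :
    ∃ c : ℝ, 0 < c ∧
      ∀ n : ℕ, 2 ≤ n →
        ∀ G : SimpleGraph (Fin n),
          ∀ d : ℝ, d = 2 * (Nat.card G.edgeSet : ℝ) / n →
            (Real.log n) ^ 4 ≤ d →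
            ∃ S : Finset (Fin n), S.Nonempty ∧
              c * (Real.log d / Real.log n) * d ≤
                (∑ v ∈ S, ((S.filter fun w => G.Adj v w).card : ℝ)) / S.card ∧
              ∀ v ∈ S, ((S.filter fun w => G.Adj v w).card : ℝ) ≤ 2 * d ^ ((3 : ℝ) / 2) := by
  refine ⟨1 / 16 ^ 8, by positivity, fun n hn G d hd _ => ?_⟩
  have hn2 : (2 : ℝ) ≤ n := by exact_mod_cast hn
  have hn0 : (0 : ℝ) < n := by linarith
  have hlogn : 0 < Real.log n := Real.log_pos (by linarith)
  have hd0 : 0 ≤ d := by rw [hd]; positivity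
  have : Nonempty (Fin n) := ⟨⟨0, by omega⟩⟩
  have hsum : ∑ v, degIn G Finset.univ v = d * n := by
    rw [sum_degIn_univ, hd]
    field_simp
  have hdn : d ≤ n := by
    have h1 : ∑ v, degIn G Finset.univ v ≤ ∑ _v : Fin n, (n : ℝ) :=
      Finset.sum_le_sum fun v _ => by simpa using degIn_le_card G Finset.univ v
    rw [hsum] at h1
    simp only [Finset.sum_const, Finset.card_univ, Fintype.card_fin, nsmul_eq_mul] at h1
    exact le_of_mul_le_mul_right h1 hn0
  rcases le_or_gt d 1 with hd1 | hd1
  · refine ⟨{⟨0, by omega⟩}, Finset.singleton_nonempty _, ?_, ?_⟩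
    · refine le_trans ?_ (div_nonneg (Finset.sum_nonneg fun _ _ => Nat.cast_nonneg _)
        (Nat.cast_nonneg _))
      have h1 : Real.log d / Real.log n ≤ 0 :=
        div_nonpos_of_nonpos_of_nonneg (Real.log_nonpos hd0 hd1) hlogn.le
      exact mul_nonpos_of_nonpos_of_nonneg
        (mul_nonpos_of_nonneg_of_nonpos (by positivity) h1) hd0
    · intro v hv
      rw [Finset.mem_singleton] at hv
      subst hv
      simp only [Finset.filter_singleton, SimpleGraph.irrefl, if_false, Finset.card_empty,
        Nat.cast_zero]
      positivity
  have hlogd : 0 < Real.log d := Real.log_pos hd1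
  have hlogle : Real.log d ≤ Real.log n := Real.log_le_log (by linarith) hdn
  have hratio : Real.log d / Real.log n ≤ 1 := (div_le_one hlogn).mpr hlogle
  rcases lt_or_ge d (16 ^ 8) with hsmall | hlarge
  · obtain ⟨u, v, huv⟩ : ∃ u v, G.Adj u v := by
      by_contra! hcon
      have : ∑ v, degIn G Finset.univ v = 0 := by simp [degIn, hcon]
      rw [hsum] at this
      have : 0 < d * n := by positivity
      linarith
    have hone : ∀ w ∈ ({u, v} : Finset (Fin n)), degIn G {u, v} w = 1 := by
      intro w hw
      rw [degIn_eq_sum, Finset.sum_pair huv.ne]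
      rcases Finset.mem_insert.mp hw with rfl | hw
      · simp [huv]
      · rw [Finset.mem_singleton.mp hw]
        simp [huv.symm]
    refine ⟨{u, v}, Finset.insert_nonempty _ _, ?_, fun w hw => ?_⟩
    · change _ ≤ (∑ w ∈ ({u, v} : Finset (Fin n)), degIn G {u, v} w) / _
      rw [Finset.sum_congr rfl hone, Finset.sum_const, Finset.card_pair huv.ne]
      have h1 : Real.log d / Real.log n * d ≤ 1 * d := mul_le_mul_of_nonneg_right hratio hd0
      norm_num at hsmall ⊢
      linarith
    · change degIn G {u, v} w ≤ _
      rw [hone w hw]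
      have := Real.one_le_rpow hd1.le (show (0 : ℝ) ≤ 3 / 2 by norm_num)
      linarith
  obtain ⟨U, D, hU, hvol, hmax⟩ := exists_max_density G
  have hdD : d ≤ D := by
    have := hmax Finset.univ
    rw [hsum, Finset.card_univ, Fintype.card_fin] at this
    exact le_of_mul_le_mul_right this hn0
  set s : ℝ := d ^ ((1 : ℝ) / 8) with hs
  have hs8 : d = s ^ 8 := by
    rw [hs, ← Real.rpow_natCast, ← Real.rpow_mul hd0]
    norm_num
  have hs0 : 0 ≤ s := Real.rpow_nonneg hd0 _
  have hs16 : 16 ≤ s := by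
    rw [hs8] at hlarge
    exact le_of_pow_le_pow_left₀ (by norm_num) hs0 hlarge
  have hs12 : d ^ ((3 : ℝ) / 2) = s ^ 12 := by
    rw [hs, ← Real.rpow_natCast, ← Real.rpow_mul hd0]
    norm_num
  have hlogs : Real.log d = 8 * Real.log s := by
    rw [hs8, Real.log_pow]
    norm_num
  have hlogs0 : 0 < Real.log s := by linarith
  set K := ⌈Real.log n / Real.log s⌉₊ with hK
  have hK0 : 0 < K := Nat.ceil_pos.mpr (by positivity)
  have hK0' : (0 : ℝ) < K := by exact_mod_cast hK0
  have hsK : (n : ℝ) ≤ s ^ K := by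
    have h1 : Real.log n / Real.log s ≤ K := Nat.le_ceil _
    rw [div_le_iff₀ hlogs0, ← Real.log_pow] at h1
    exact (Real.log_le_log_iff hn0 (by positivity)).mp h1
  have hKle : (K : ℝ) * Real.log d ≤ 9 * Real.log n := by
    have h1 : (K : ℝ) < Real.log n / Real.log s + 1 := Nat.ceil_lt_add_one (by positivity)
    have h2 := mul_lt_mul_of_pos_right h1 hlogs0
    rw [add_mul, div_mul_cancel₀ _ hlogs0.ne'] at h2
    rw [hlogs] at hlogle ⊢
    linarith
  have hUK : (U.card : ℝ) ≤ D * s ^ K := by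
    have h1 : (U.card : ℝ) ≤ n := by
      exact_mod_cast (Finset.card_le_univ U).trans_eq (Fintype.card_fin n)
    nlinarith
  obtain ⟨S, hS, havg, hdeg⟩ :=
    exists_induced_of_max_density G hU hs16 hs8 hdD hvol hmax hK0 hUK
  refine ⟨S, hS, ?_, fun v hv => ?_⟩
  · change _ ≤ (∑ v ∈ S, degIn G S v) / _
    rw [le_div_iff₀ (by exact_mod_cast hS.card_pos)]
    refine le_trans (mul_le_mul_of_nonneg_right ?_ (Nat.cast_nonneg _)) havg
    have h1 : Real.log d / Real.log n ≤ 9 / K := by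
      rw [div_le_div_iff₀ hlogn hK0']
      linarith
    have h2 : 1 / 16 ^ 8 * (Real.log d / Real.log n) * d ≤ 1 / 216 * (9 / K) * d := by
      gcongr
      norm_num
    refine h2.trans (le_of_eq ?_)
    field_simp
    norm_num
  · rw [hs12]
    exact hdeg v hv
end

section
/- Let O and G' be graphs on a finite vertex set V with O ∩ G' = ∅, and let e = xy ∈ O be an edge such that there is no vertex v with both xv ∈ G' and yv ∈ G'. Let p ∈ [0,1] and let G₁ be a random subgraph of O in which each edge of O is included independently with probability p. Define O' = { f ∈ O \ G₁ : f does not form a triangle with two edges of G' ∪ G₁ }. Then the probability that e ∈ O' equals (1−p²)^{X(e)} · (1−p)^{Y(e)}. -/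
open scoped Classical

namespace Stmt4

variable {V : Type*}

/-- `e`, `f`, `g` are the three edges of a triangle.  (With this parametrization the
predicate is symmetric in `f` and `g`.) -/
def FormTriangle (e f g : Sym2 V) : Prop :=
  ∃ x y z : V, x ≠ y ∧ x ≠ z ∧ y ≠ z ∧ e = s(x, y) ∧ f = s(x, z) ∧ g = s(y, z)

/-- `𝒳(e)`: the set of unordered pairs `{f, g} ⊆ O` such that `e, f, g` form an open
triangle. -/
def openTrianglePairs (O : Set (Sym2 V)) (e : Sym2 V) : Set (Sym2 (Sym2 V)) :=
  {p | ∃ f g : Sym2 V, p = s(f, g) ∧ f ∈ O ∧ g ∈ O ∧ FormTriangle e f g}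

/-- `X(e) = |𝒳(e)|`. -/
noncomputable def X (O : Set (Sym2 V)) (e : Sym2 V) : ℕ := (openTrianglePairs O e).ncard

/-- `e` and `f ∈ O` span a clopen triangle: the third edge of the triangle lies in `G'`. -/
def SpanClopen (O G' : Set (Sym2 V)) (e f : Sym2 V) : Prop :=
  f ∈ O ∧ ∃ g ∈ G', FormTriangle e f g

/-- `𝒴(e) = {f ∈ O : e, f span a clopen triangle} ∪ {e}`. -/
def Yset (O G' : Set (Sym2 V)) (e : Sym2 V) : Set (Sym2 V) :=
  {f | SpanClopen O G' e f} ∪ {e}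

/-- `Y(e) = |𝒴(e)|`. -/
noncomputable def Y (O G' : Set (Sym2 V)) (e : Sym2 V) : ℕ := (Yset O G' e).ncard

/-- The edge `f = uv` forms a triangle with two edges of `H`: there is a vertex `w` with
`uw ∈ H` and `vw ∈ H`. -/
def Closes (f : Sym2 V) (H : Finset (Sym2 V)) : Prop :=
  ∃ x y w : V, x ≠ y ∧ f = s(x, y) ∧ s(x, w) ∈ H ∧ s(y, w) ∈ H

/-- `O' = {f ∈ O \ G₁ : f does not form a triangle with two edges of G' ∪ G₁}`,
for the realisation `G₁ = S`. -/
noncomputable def Opp [DecidableEq V] (O G' S : Finset (Sym2 V)) : Finset (Sym2 V) :=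
  (O \ S).filter fun f => ¬ Closes f (G' ∪ S)

/-- A random subset of `O` keeping each element independently with probability `p` contains `B`
and contains none of the sets `A i`, `i ∈ I`, with probability `p ^ |B| * ∏ i ∈ I, (1 - p ^ |A i|)`,
provided `B` and the sets `A i` are pairwise disjoint subsets of `O`. -/
theorem sum_powerset_superset_avoiding {α ι : Type*} [DecidableEq α]
    (O : Finset α) (A : ι → Finset α) (p : ℝ) (I : Finset ι)
    (hA : ∀ i ∈ I, A i ⊆ O) (hI : (I : Set ι).PairwiseDisjoint A)
    (B : Finset α) (hB : B ⊆ O) (hBA : ∀ i ∈ I, Disjoint B (A i)) :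
    (∑ S ∈ O.powerset, if B ⊆ S ∧ ∀ i ∈ I, ¬ A i ⊆ S then
        p ^ S.card * (1 - p) ^ (O \ S).card else 0)
      = p ^ B.card * ∏ i ∈ I, (1 - p ^ (A i).card) := by
  induction I using Finset.induction_on generalizing B with
  | empty =>
    have h := Finset.prod_add (fun _ => p) (fun a => if a ∈ B then 0 else 1 - p) O
    have hprod : ∏ a ∈ O, (p + if a ∈ B then 0 else 1 - p) = p ^ B.card := by
      rw [← Finset.prod_sdiff hB, Finset.prod_congr rfl (g := fun _ => (1 : ℝ)),
        Finset.prod_congr (s₁ := B) rfl (g := fun _ => p)]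
      · simp
      · intro a ha
        simp [ha]
      · intro a ha
        simp [(Finset.mem_sdiff.1 ha).2]
    rw [Finset.prod_empty, mul_one, ← hprod, h]
    refine Finset.sum_congr rfl fun S _ => ?_
    rw [Finset.prod_const]
    by_cases hBS : B ⊆ S
    · rw [if_pos ⟨hBS, by simp⟩, Finset.prod_congr rfl (g := fun _ => 1 - p), Finset.prod_const]
      intro a ha
      exact if_neg fun haB => (Finset.mem_sdiff.1 ha).2 (hBS haB)
    · rw [if_neg fun h => hBS h.1]
      obtain ⟨b, hb, hbS⟩ := Finset.not_subset.1 hBS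
      have hb0 : (if b ∈ B then 0 else 1 - p) = 0 := if_pos hb
      rw [Finset.prod_eq_zero (Finset.mem_sdiff.2 ⟨hB hb, hbS⟩) hb0, mul_zero]
  | insert j I hj ih =>
    have hA' : ∀ i ∈ I, A i ⊆ O := fun i hi => hA i (Finset.mem_insert_of_mem hi)
    have hI' : (I : Set ι).PairwiseDisjoint A :=
      hI.subset (Finset.coe_subset.2 (Finset.subset_insert j I))
    have hBA' : ∀ i ∈ I, Disjoint B (A i) := fun i hi => hBA i (Finset.mem_insert_of_mem hi)
    have hBj : Disjoint B (A j) := hBA j (Finset.mem_insert_self j I)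
    have h₁ := ih hA' hI' B hB hBA'
    have h₂ := ih hA' hI' (B ∪ A j)
      (Finset.union_subset hB (hA j (Finset.mem_insert_self j I))) fun i hi =>
        Finset.disjoint_union_left.2 ⟨hBA' i hi, hI (Finset.mem_insert_self j I)
          (Finset.mem_insert_of_mem hi) fun h => hj (h ▸ hi)⟩
    rw [Finset.card_union_of_disjoint hBj, pow_add] at h₂
    rw [Finset.prod_insert hj]
    trans p ^ B.card * ∏ i ∈ I, (1 - p ^ (A i).card)
        - p ^ B.card * p ^ (A j).card * ∏ i ∈ I, (1 - p ^ (A i).card)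
    · rw [← h₁, ← h₂, ← Finset.sum_sub_distrib]
      refine Finset.sum_congr rfl fun S _ => ?_
      simp only [Finset.forall_mem_insert, Finset.union_subset_iff]
      by_cases hBS : B ⊆ S <;> by_cases hjS : A j ⊆ S <;>
        by_cases hIS : ∀ i ∈ I, ¬ A i ⊆ S <;> simp only [hBS, hjS, hIS] <;> simp
    · ring

theorem mem_openTrianglePairs_iff {O : Set (Sym2 V)} {x y : V} (hxy : x ≠ y)
    {q : Sym2 (Sym2 V)} :
    q ∈ openTrianglePairs O s(x, y) ↔
      ∃ v, v ≠ x ∧ v ≠ y ∧ q = s(s(x, v), s(y, v)) ∧ s(x, v) ∈ O ∧ s(y, v) ∈ O := by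
  constructor
  · rintro ⟨f, g, rfl, hf, hg, a, b, z, -, haz, hbz, he, rfl, rfl⟩
    rcases Sym2.eq_iff.1 he with ⟨rfl, rfl⟩ | ⟨rfl, rfl⟩
    · exact ⟨z, haz.symm, hbz.symm, rfl, hf, hg⟩
    · exact ⟨z, hbz.symm, haz.symm, Sym2.eq_swap, hg, hf⟩
  · rintro ⟨v, hvx, hvy, rfl, hf, hg⟩
    exact ⟨_, _, rfl, hf, hg, x, y, v, hxy, hvx.symm, hvy.symm, rfl, rfl, rfl⟩

theorem mem_Yset_iff {O G' : Set (Sym2 V)} {x y : V} (hxy : x ≠ y) {f : Sym2 V} :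
    f ∈ Yset O G' s(x, y) ↔
      f = s(x, y) ∨ ∃ v, v ≠ x ∧ v ≠ y ∧ f ∈ O ∧
        (f = s(x, v) ∧ s(y, v) ∈ G' ∨ f = s(y, v) ∧ s(x, v) ∈ G') := by
  constructor
  · rintro (⟨hf, g, hg, a, b, z, -, haz, hbz, he, rfl, rfl⟩ | h)
    · rcases Sym2.eq_iff.1 he with ⟨rfl, rfl⟩ | ⟨rfl, rfl⟩
      · exact Or.inr ⟨z, haz.symm, hbz.symm, hf, Or.inl ⟨rfl, hg⟩⟩
      · exact Or.inr ⟨z, hbz.symm, haz.symm, hf, Or.inr ⟨rfl, hg⟩⟩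
    · exact Or.inl h
  · rintro (h | ⟨v, hvx, hvy, hf, ⟨rfl, hg⟩ | ⟨rfl, hg⟩⟩)
    · exact Or.inr h
    · exact Or.inl ⟨hf, _, hg, x, y, v, hxy, hvx.symm, hvy.symm, rfl, rfl, rfl⟩
    · exact Or.inl ⟨hf, _, hg, y, x, v, hxy.symm, hvy.symm, hvx.symm, Sym2.eq_swap, rfl, rfl⟩

theorem closes_mk_iff {x y : V} (hxy : x ≠ y) {H : Finset (Sym2 V)} :
    Closes s(x, y) H ↔ ∃ w, s(x, w) ∈ H ∧ s(y, w) ∈ H := by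
  constructor
  · rintro ⟨a, b, w, -, he, ha, hb⟩
    rcases Sym2.eq_iff.1 he with ⟨rfl, rfl⟩ | ⟨rfl, rfl⟩
    · exact ⟨w, ha, hb⟩
    · exact ⟨w, hb, ha⟩
  · rintro ⟨w, hx, hy⟩
    exact ⟨x, y, w, hxy, rfl, hx, hy⟩

/-- The edge `xy` stays open exactly when no open pair and no edge of `Yset` is selected. -/
theorem mem_Opp_iff [DecidableEq V] {O G' S : Finset (Sym2 V)} (hS : S ⊆ O)
    (hOgraph : ∀ a ∈ O, ¬ a.IsDiag) (hG'graph : ∀ a ∈ G', ¬ a.IsDiag)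
    {x y : V} (hxy : x ≠ y) (he : s(x, y) ∈ O)
    (hnoG' : ¬ ∃ v : V, s(x, v) ∈ G' ∧ s(y, v) ∈ G') :
    s(x, y) ∈ Opp O G' S ↔
      (∀ q ∈ openTrianglePairs (↑O : Set (Sym2 V)) s(x, y), ¬ q.toFinset ⊆ S) ∧
        ∀ f ∈ Yset (↑O : Set (Sym2 V)) ↑G' s(x, y), f ∉ S := by
  simp only [Opp, Finset.mem_filter, Finset.mem_sdiff, closes_mk_iff hxy, Finset.mem_union]
  constructor
  · rintro ⟨⟨-, heS⟩, hno⟩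
    refine ⟨fun q hq hqS => ?_, fun f hf hfS => ?_⟩
    · obtain ⟨v, -, -, rfl, -, -⟩ := (mem_openTrianglePairs_iff hxy).1 hq
      exact hno ⟨v, Or.inr (hqS (by simp)), Or.inr (hqS (by simp))⟩
    · rcases (mem_Yset_iff hxy).1 hf with rfl | ⟨v, -, -, -, ⟨rfl, hg⟩ | ⟨rfl, hg⟩⟩
      · exact heS hfS
      · exact hno ⟨v, Or.inr hfS, Or.inl hg⟩
      · exact hno ⟨v, Or.inl hg, Or.inr hfS⟩
  · rintro ⟨hX, hY⟩
    refine ⟨⟨he, hY _ ((mem_Yset_iff hxy).2 (Or.inl rfl))⟩, ?_⟩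
    rintro ⟨w, hxw, hyw⟩
    have hwx : w ≠ x := by
      rintro rfl
      exact hxw.elim (fun h => hG'graph _ h rfl) fun h => hOgraph _ (hS h) rfl
    have hwy : w ≠ y := by
      rintro rfl
      exact hyw.elim (fun h => hG'graph _ h rfl) fun h => hOgraph _ (hS h) rfl
    rcases hxw with hxw | hxw <;> rcases hyw with hyw | hyw
    · exact hnoG' ⟨w, hxw, hyw⟩
    · exact hY _ ((mem_Yset_iff hxy).2
        (Or.inr ⟨w, hwx, hwy, hS hyw, Or.inr ⟨rfl, hxw⟩⟩)) hyw
    · exact hY _ ((mem_Yset_iff hxy).2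
        (Or.inr ⟨w, hwx, hwy, hS hxw, Or.inl ⟨rfl, hyw⟩⟩)) hxw
    · refine hX _ ((mem_openTrianglePairs_iff hxy).2
        ⟨w, hwx, hwy, rfl, hS hxw, hS hyw⟩) fun a ha => ?_
      rw [Sym2.mem_toFinset, Sym2.mem_iff] at ha
      rcases ha with rfl | rfl
      exacts [hxw, hyw]

/-- Distinct open pairs at the edge `xy` have no edge in common. -/
theorem openTrianglePairs_eq_of_mem {O : Set (Sym2 V)} {x y : V} (hxy : x ≠ y)
    {q r : Sym2 (Sym2 V)} (hq : q ∈ openTrianglePairs O s(x, y))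
    (hr : r ∈ openTrianglePairs O s(x, y)) {a : Sym2 V} (haq : a ∈ q) (har : a ∈ r) : q = r := by
  obtain ⟨v, hvx, hvy, rfl, -, -⟩ := (mem_openTrianglePairs_iff hxy).1 hq
  obtain ⟨w, hwx, hwy, rfl, -, -⟩ := (mem_openTrianglePairs_iff hxy).1 hr
  suffices v = w by rw [this]
  simp only [Sym2.mem_iff] at haq har
  rcases haq with rfl | rfl <;> simp only [Sym2.eq_iff] at har <;> grind

/-- No edge of an open pair lies in `Yset`. -/
theorem notMem_Yset_of_mem_openTrianglePairs {O G' : Set (Sym2 V)} (hdisj : Disjoint O G')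
    {x y : V} (hxy : x ≠ y) {q : Sym2 (Sym2 V)} (hq : q ∈ openTrianglePairs O s(x, y))
    {a : Sym2 V} (haq : a ∈ q) : a ∉ Yset O G' s(x, y) := by
  obtain ⟨v, hvx, hvy, rfl, hxv, hyv⟩ := (mem_openTrianglePairs_iff hxy).1 hq
  have hno : ∀ b ∈ O, b ∉ G' := fun b hb hb' => Set.disjoint_left.1 hdisj hb hb'
  rw [mem_Yset_iff hxy]
  rintro (rfl | ⟨w, hwx, hwy, -, h⟩)
  · simp only [Sym2.mem_iff, Sym2.eq_iff] at haq
    grind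
  · have hvw : v = w := by
      simp only [Sym2.mem_iff] at haq
      rcases haq with rfl | rfl <;> simp only [Sym2.eq_iff] at h <;> grind
    subst hvw
    rcases h with ⟨-, h⟩ | ⟨-, h⟩
    exacts [hno _ hyv h, hno _ hxv h]

/-- **The exact survival probability of an open edge (cf. (3.14) of the paper).**
Let `O, G'` be disjoint graphs on a finite vertex set, and let `e = xy ∈ O` be an edge
that does not form a triangle with two edges of `G'`.  If `G₁` is a `p`-random subgraph
of `O`, then the probability that `e` lies in
`O' = {f ∈ O \ G₁ : f forms no triangle with two edges of G' ∪ G₁}` is exactly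
`(1−p²)^{X(e)}·(1−p)^{Y(e)}`.  (The probability is written as a sum over all
realisations `S ⊆ O` of `G₁`.) -/
theorem prob_edge_stays_open [Fintype V] [DecidableEq V]
    (O G' : Finset (Sym2 V)) (hdisj : O ∩ G' = ∅)
    (hOgraph : ∀ a ∈ O, ¬ a.IsDiag) (hG'graph : ∀ a ∈ G', ¬ a.IsDiag)
    (x y : V) (hxy : x ≠ y) (he : s(x, y) ∈ O)
    (hnoG' : ¬ ∃ v : V, s(x, v) ∈ G' ∧ s(y, v) ∈ G')
    (p : ℝ) (hp0 : 0 ≤ p) (hp1 : p ≤ 1) :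
    (∑ S ∈ O.powerset,
        if s(x, y) ∈ Opp O G' S then p ^ S.card * (1 - p) ^ (O \ S).card else 0)
      = (1 - p ^ 2) ^ X (↑O : Set (Sym2 V)) (s(x, y))
          * (1 - p) ^ Y (↑O : Set (Sym2 V)) (↑G' : Set (Sym2 V)) (s(x, y)) := by
  have hX := Set.toFinite (openTrianglePairs (↑O : Set (Sym2 V)) s(x, y))
  have hY := Set.toFinite (Yset (↑O : Set (Sym2 V)) (↑G' : Set (Sym2 V)) s(x, y))
  have hdisj' : Disjoint (↑O : Set (Sym2 V)) ↑G' :=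
    Finset.disjoint_coe.2 (Finset.disjoint_iff_inter_eq_empty.2 hdisj)
  let A : Sym2 (Sym2 V) ⊕ Sym2 V → Finset (Sym2 V) := Sum.elim Sym2.toFinset singleton
  let I := hX.toFinset.disjSum hY.toFinset
  have hsub : ∀ i ∈ I, A i ⊆ O := by
    rintro (q | f) hi a ha
    · obtain ⟨v, -, -, rfl, hxv, hyv⟩ := (mem_openTrianglePairs_iff hxy).1
        (hX.mem_toFinset.1 (Finset.inl_mem_disjSum.1 hi))
      rcases Sym2.mem_iff.1 (Sym2.mem_toFinset.1 ha) with rfl | rfl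
      exacts [hxv, hyv]
    · obtain rfl := Finset.mem_singleton.1 ha
      rcases (mem_Yset_iff hxy).1 (hY.mem_toFinset.1 (Finset.inr_mem_disjSum.1 hi)) with
        rfl | ⟨v, -, -, hf, -⟩
      exacts [he, hf]
  have hpd : (I : Set _).PairwiseDisjoint A := by
    have hXY : ∀ q f, Sum.inl q ∈ I → Sum.inr f ∈ I → f ∉ q := fun q f hq hf hfq =>
      notMem_Yset_of_mem_openTrianglePairs hdisj' hxy
        (hX.mem_toFinset.1 (Finset.inl_mem_disjSum.1 hq)) hfq
        (hY.mem_toFinset.1 (Finset.inr_mem_disjSum.1 hf))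
    rintro (q | f) hi (r | g) hj hne
    · refine Finset.disjoint_left.2 fun a haq har => hne (congrArg _ ?_)
      exact openTrianglePairs_eq_of_mem hxy
        (hX.mem_toFinset.1 (Finset.inl_mem_disjSum.1 hi))
        (hX.mem_toFinset.1 (Finset.inl_mem_disjSum.1 hj))
        (Sym2.mem_toFinset.1 haq) (Sym2.mem_toFinset.1 har)
    · exact Finset.disjoint_singleton_right.2 fun h => hXY q g hi hj (Sym2.mem_toFinset.1 h)
    · exact Finset.disjoint_singleton_left.2 fun h => hXY r f hj hi (Sym2.mem_toFinset.1 h)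
    · exact Finset.disjoint_singleton.2 fun h => hne (congrArg _ h)
  have hcard : ∀ q ∈ hX.toFinset, (1 - p ^ q.toFinset.card) = 1 - p ^ 2 := by
    intro q hq
    obtain ⟨v, hvx, hvy, rfl, -, -⟩ := (mem_openTrianglePairs_iff hxy).1 (hX.mem_toFinset.1 hq)
    rw [Sym2.card_toFinset_of_not_isDiag]
    rw [Sym2.mk_isDiag_iff, Sym2.eq_iff]
    grind
  have key := sum_powerset_superset_avoiding O A p I hsub hpd ∅ (Finset.empty_subset O)
    fun i _ => Finset.disjoint_empty_left _
  rw [Finset.prod_disjSum] at key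
  simp only [A, Sum.elim_inl, Sum.elim_inr, Finset.card_singleton, pow_one, Finset.card_empty,
    pow_zero, one_mul] at key
  rw [Finset.prod_congr rfl hcard, Finset.prod_const, Finset.prod_const,
    ← Set.ncard_eq_toFinset_card _ hX, ← Set.ncard_eq_toFinset_card _ hY] at key
  rw [X, Y, ← key]
  refine Finset.sum_congr rfl fun S hS => ?_
  have hiff : s(x, y) ∈ Opp O G' S ↔ ∅ ⊆ S ∧ ∀ i ∈ I, ¬ A i ⊆ S := by
    rw [mem_Opp_iff (Finset.mem_powerset.1 hS) hOgraph hG'graph hxy he hnoG']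
    simp [I, A, Finset.mem_disjSum]
  by_cases h : s(x, y) ∈ Opp O G' S
  · rw [if_pos h, if_pos (hiff.1 h)]
  · rw [if_neg h, if_neg (hiff.not.1 h)]

end Stmt4
end

section
/- Fix δ ∈ (0,1/8). There exists n₀ = n₀(δ) such that the following holds for all n ≥ n₀. Let V = [n] be partitioned into parts V₁,…,V_m, and let O and G' be graphs on V with O ∩ G' = ∅ satisfying: (i) no edge of O forms a triangle with two edges of G'; (ii) O contains no edges within a part and at most one edge between any two distinct parts; (iii) |N_{G'}(x) ∩ N_{G'}(y)| ≤ (log n)^{10} − 2 whenever x and y lie in distinct parts. Let p ∈ (0, n^{−δ}] and suppose p²·X(e) + p·Y(e) ≤ (log n)^{−9} for every e ∈ O. Let G₁ be a p-random subgraph of O (each edge independently with probability p), set O'' = { f ∈ O \ G₁ : f forms no triangle with two edges of G' ∪ G₁ }, put s = min_{f∈O} P(f ∈ O''), for each e ∈ O put q_e = s / P(e ∈ O''), let Q ⊆ O be a random subgraph, independent of G₁, in which each e ∈ O is included independently with probability q_e, and set O₁ = Q ∩ O''. Then for all graphs H, K ⊆ O with Δ(H) ≤ n^{δ/4}, Δ(K)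 ≤ n^{δ/4} and Δ(G'[V(H)]) ≤ n^{δ/4}: P( H ⊆ O₁ and K ⊆ G₁ ) ≤ (1 + n^{−δ/4})^{e(H)} · s^{e(H)} · p^{e(K)}. -/
open scoped Classical

namespace Stmt5

variable {V : Type*}

/-- `e`, `f`, `g` are the three edges of a triangle.  (With this parametrization the
predicate is symmetric in `f` and `g`.) -/
def FormTriangle (e f g : Sym2 V) : Prop :=
  ∃ x y z : V, x ≠ y ∧ x ≠ z ∧ y ≠ z ∧ e = s(x, y) ∧ f = s(x, z) ∧ g = s(y, z)

/-- `𝒳(e)`: the set of unordered pairs `{f, g} ⊆ O` such that `e, f, g` form an open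
triangle. -/
def openTrianglePairs (O : Set (Sym2 V)) (e : Sym2 V) : Set (Sym2 (Sym2 V)) :=
  {p | ∃ f g : Sym2 V, p = s(f, g) ∧ f ∈ O ∧ g ∈ O ∧ FormTriangle e f g}

/-- `X(e) = |𝒳(e)|`. -/
noncomputable def X (O : Set (Sym2 V)) (e : Sym2 V) : ℕ := (openTrianglePairs O e).ncard

/-- `e` and `f ∈ O` span a clopen triangle: the third edge of the triangle lies in `G'`. -/
def SpanClopen (O G' : Set (Sym2 V)) (e f : Sym2 V) : Prop :=
  f ∈ O ∧ ∃ g ∈ G', FormTriangle e f g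

/-- `𝒴(e) = {f ∈ O : e, f span a clopen triangle} ∪ {e}`. -/
def Yset (O G' : Set (Sym2 V)) (e : Sym2 V) : Set (Sym2 V) :=
  {f | SpanClopen O G' e f} ∪ {e}

/-- `Y(e) = |𝒴(e)|`. -/
noncomputable def Y (O G' : Set (Sym2 V)) (e : Sym2 V) : ℕ := (Yset O G' e).ncard

/-- The edge `f = uv` forms a triangle with two edges of `H`: there is a vertex `w` with
`uw ∈ H` and `vw ∈ H`. -/
def Closes (f : Sym2 V) (H : Finset (Sym2 V)) : Prop :=
  ∃ x y w : V, x ≠ y ∧ f = s(x, y) ∧ s(x, w) ∈ H ∧ s(y, w) ∈ H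

/-- `O'' = {f ∈ O \ G₁ : f forms no triangle with two edges of G' ∪ G₁}`,
for the realisation `G₁ = S`. -/
noncomputable def Opp [DecidableEq V] (O G' S : Finset (Sym2 V)) : Finset (Sym2 V) :=
  (O \ S).filter fun f => ¬ Closes f (G' ∪ S)

/-- `P(f ∈ O'')` for a `p`-random subgraph `G₁ ⊆ O`, as a sum over realisations. -/
noncomputable def pOpen [Fintype V] [DecidableEq V] (O G' : Finset (Sym2 V)) (p : ℝ)
    (f : Sym2 V) : ℝ :=
  ∑ S ∈ O.powerset,
    if f ∈ Opp O G' S then p ^ S.card * (1 - p) ^ (O \ S).card else 0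

/-- The joint probability of an event `E G₁ Q`, where `G₁ ⊆ O` is a `p`-random subgraph
and, independently, `Q ⊆ O` contains each `e ∈ O` with probability `q e`; written as a
double sum over the realisations `S` of `G₁` and `T` of `Q`. -/
noncomputable def jointProb [Fintype V] [DecidableEq V] (O : Finset (Sym2 V)) (p : ℝ)
    (q : Sym2 V → ℝ) (E : Finset (Sym2 V) → Finset (Sym2 V) → Prop) : ℝ :=
  ∑ S ∈ O.powerset, ∑ T ∈ O.powerset,
    (p ^ S.card * (1 - p) ^ (O \ S).card) *
      ((∏ e ∈ T, q e) * ∏ e ∈ O \ T, (1 - q e)) *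
      (if E S T then 1 else 0)

/-- The degree of `x` in the graph (edge set) `H`. -/
noncomputable def degF [Fintype V] (H : Finset (Sym2 V)) (x : V) : ℕ :=
  (Finset.univ.filter fun y => s(x, y) ∈ H).card

/-- The maximum degree `Δ(H)`. -/
noncomputable def maxDeg [Fintype V] (H : Finset (Sym2 V)) : ℕ :=
  Finset.univ.sup (degF H)

/-- `V(H)`: the set of vertices covered by the edges of `H`. -/
noncomputable def verts [Fintype V] (H : Finset (Sym2 V)) : Finset V :=
  Finset.univ.filter fun x => ∃ y, s(x, y) ∈ H

/-- `G[S]`: the subgraph of `G` induced on the vertex set `S`. -/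
noncomputable def induce (G : Finset (Sym2 V)) (S : Finset V) : Finset (Sym2 V) :=
  G.filter fun a => ∀ x ∈ a, x ∈ S

section RandomSubset

variable {α ι : Type*}

/-- The random set contains none of the sets `A i`, `i ∈ I`. -/
def Avoids (A : ι → Finset α) (I : Finset ι) (S : Finset α) : Prop :=
  ∀ i ∈ I, ¬ A i ⊆ S

lemma Avoids.anti {A : ι → Finset α} {I : Finset ι} (S T : Finset α) (hST : S ⊆ T)
    (h : Avoids A I T) : Avoids A I S :=
  fun i hi hS => h i hi (hS.trans hST)

lemma avoids_empty (A : ι → Finset α) : Avoids A ∅ = fun _ => True := by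
  funext S
  simp [Avoids]

lemma avoids_insert [DecidableEq ι] {A : ι → Finset α} {I : Finset ι} {i : ι} (S : Finset α) :
    Avoids A (insert i I) S ↔ Avoids A I S ∧ ¬ A i ⊆ S := by
  simp [Avoids, and_comm]

variable [DecidableEq α]

/-- The probability of the event `E` for a `p`-random subset of `O`. -/
noncomputable def pr (O : Finset α) (p : ℝ) (E : Finset α → Prop) : ℝ :=
  ∑ S ∈ O.powerset, if E S then p ^ S.card * (1 - p) ^ (O \ S).card else 0

variable {O : Finset α} {p : ℝ}

lemma weight_nonneg (hp0 : 0 ≤ p) (hp1 : p ≤ 1) (m k : ℕ) : 0 ≤ p ^ m * (1 - p) ^ k :=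
  mul_nonneg (pow_nonneg hp0 _) (pow_nonneg (sub_nonneg.2 hp1) _)

lemma ite_zero_nonneg {P : Prop} {_ : Decidable P} {w : ℝ} (hw : 0 ≤ w) :
    0 ≤ if P then w else 0 := by
  split_ifs
  exacts [hw, le_rfl]

lemma pr_nonneg (hp0 : 0 ≤ p) (hp1 : p ≤ 1) (E : Finset α → Prop) : 0 ≤ pr O p E :=
  Finset.sum_nonneg fun _ _ => ite_zero_nonneg (weight_nonneg hp0 hp1 _ _)

lemma pr_mono (hp0 : 0 ≤ p) (hp1 : p ≤ 1) {E F : Finset α → Prop}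
    (h : ∀ S ⊆ O, E S → F S) : pr O p E ≤ pr O p F := by
  refine Finset.sum_le_sum fun S hS => ?_
  have hEF := h S (Finset.mem_powerset.1 hS)
  have hw := weight_nonneg hp0 hp1 S.card (O \ S).card
  by_cases hE : E S
  · simp [hE, hEF hE]
  · rw [if_neg hE]
    exact ite_zero_nonneg hw

lemma pr_congr {E F : Finset α → Prop} (h : ∀ S ⊆ O, (E S ↔ F S)) :
    pr O p E = pr O p F :=
  Finset.sum_congr rfl fun S hS => by simp only [h S (Finset.mem_powerset.1 hS)]

lemma pr_true : pr O p (fun _ => True) = 1 := by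
  have h := Finset.prod_add (fun _ : α => p) (fun _ => 1 - p) O
  simp only [add_sub_cancel, Finset.prod_const, one_pow] at h
  simp only [pr, if_true, ← h]

lemma pr_and_not (E F : Finset α → Prop) :
    pr O p (fun S => E S ∧ ¬ F S) = pr O p E - pr O p (fun S => E S ∧ F S) := by
  rw [pr, pr, pr, ← Finset.sum_sub_distrib]
  refine Finset.sum_congr rfl fun S _ => ?_
  by_cases hE : E S <;> by_cases hF : F S <;> simp [hE, hF]

lemma pr_mem_and {a : α} (ha : a ∈ O) {E : Finset α → Prop}
    (hE : ∀ S, E (insert a S) ↔ E S) :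
    pr O p (fun S => a ∈ S ∧ E S) = p * pr O p E := by
  obtain ⟨U, haU, rfl⟩ : ∃ U, a ∉ U ∧ insert a U = O :=
    ⟨O.erase a, Finset.notMem_erase a O, Finset.insert_erase ha⟩
  rw [pr, pr, Finset.sum_powerset_insert haU, Finset.sum_powerset_insert haU,
    ← Finset.sum_add_distrib, ← Finset.sum_add_distrib, Finset.mul_sum]
  refine Finset.sum_congr rfl fun S hS => ?_
  have hSU := Finset.mem_powerset.1 hS
  have haS : a ∉ S := fun h => haU (hSU h)
  have h1 : insert a U \ S = insert a (U \ S) := Finset.insert_sdiff_of_notMem _ haS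
  have h2 : insert a U \ insert a S = U \ S := by
    ext b
    simp only [Finset.mem_sdiff, Finset.mem_insert]
    grind
  have h3 : a ∉ U \ S := fun h => haU (Finset.mem_sdiff.1 h).1
  rw [h1, h2, Finset.card_insert_of_notMem haS, Finset.card_insert_of_notMem h3]
  by_cases h : E S
  · simp [haS, h, hE]
    ring
  · simp [haS, h, hE]

lemma pr_subset_and {A : Finset α} (hA : A ⊆ O) {E : Finset α → Prop}
    (hE : ∀ a ∈ A, ∀ S, E (insert a S) ↔ E S) :
    pr O p (fun S => A ⊆ S ∧ E S) = p ^ A.card * pr O p E := by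
  induction A using Finset.induction_on with
  | empty => simp
  | insert a A haA ih =>
    have ih' := ih (fun x hx => hA (Finset.mem_insert_of_mem hx))
      (fun x hx => hE x (Finset.mem_insert_of_mem hx))
    have h := pr_mem_and (p := p) (hA (Finset.mem_insert_self a A))
      (E := fun S => A ⊆ S ∧ E S) (fun S => by
        rw [hE a (Finset.mem_insert_self a A), Finset.subset_insert_iff_of_notMem haA])
    rw [Finset.card_insert_of_notMem haA, pow_succ', mul_assoc, ← ih', ← h]
    refine pr_congr fun S _ => ?_
    rw [Finset.insert_subset_iff, and_assoc]

lemma pr_subset {A : Finset α} (hA : A ⊆ O) :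
    pr O p (fun S => A ⊆ S) = p ^ A.card := by
  have h := pr_subset_and (p := p) hA (E := fun _ => True) (by simp)
  simpa [pr_true] using h

/-- The Harris inequality for an increasing and a decreasing event. -/
lemma pr_and_le [Fintype α] (hp0 : 0 ≤ p) (hp1 : p ≤ 1) {E F : Finset α → Prop}
    (hE : ∀ S T, S ⊆ T → E S → E T) (hF : ∀ S T, S ⊆ T → F T → F S) :
    pr O p (fun S => E S ∧ F S) ≤ pr O p E * pr O p F := by
  let μ : Finset α → ℝ := fun S => if S ⊆ O then p ^ S.card * (1 - p) ^ (O \ S).card else 0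
  have key : ∀ (G : Finset α → Prop) [DecidablePred G],
      ∑ S, μ S * (if G S then 1 else 0) = pr O p G := by
    intro G _
    have : O.powerset = Finset.univ.filter (fun S => S ⊆ O) := by ext; simp
    rw [pr, this, Finset.sum_filter]
    refine Finset.sum_congr rfl fun S _ => ?_
    by_cases h1 : S ⊆ O <;> by_cases h2 : G S <;> simp [μ, h1, h2]
  have hμ : ∀ a b, μ a * μ b ≤ μ (a ⊓ b) * μ (a ⊔ b) := by
    intro S T
    by_cases hS : S ⊆ O
    swap
    · have : ¬ (S ∪ T ⊆ O) := fun h => hS (Finset.subset_union_left.trans h)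
      simp [μ, hS, this]
    by_cases hT : T ⊆ O
    swap
    · have : ¬ (S ∪ T ⊆ O) := fun h => hT (Finset.subset_union_right.trans h)
      simp [μ, hT, this]
    have h1 : S ∪ T ⊆ O := Finset.union_subset hS hT
    have h2 : S ∩ T ⊆ O := Finset.inter_subset_left.trans hS
    have e1 := Finset.card_inter_add_card_union S T
    have e2 : (O \ (S ∩ T)).card + (O \ (S ∪ T)).card = (O \ S).card + (O \ T).card := by
      rw [Finset.card_sdiff_of_subset h1, Finset.card_sdiff_of_subset h2,
        Finset.card_sdiff_of_subset hS, Finset.card_sdiff_of_subset hT]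
      have := Finset.card_le_card h1
      have := Finset.card_le_card h2
      have := Finset.card_le_card hS
      have := Finset.card_le_card hT
      omega
    simp only [μ, hS, hT, if_true, Finset.inf_eq_inter, Finset.sup_eq_union, h1, h2]
    apply le_of_eq
    calc _ = p ^ (S.card + T.card) * (1 - p) ^ ((O \ S).card + (O \ T).card) := by ring
      _ = p ^ ((S ∩ T).card + (S ∪ T).card)
          * (1 - p) ^ ((O \ (S ∩ T)).card + (O \ (S ∪ T)).card) := by rw [e1, e2]
      _ = _ := by ring
  have h := fkg (μ := μ) (fun S : Finset α => if E S then (1 : ℝ) else 0)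
    (fun S => if ¬ F S then (1 : ℝ) else 0)
    (fun S => ite_zero_nonneg (weight_nonneg hp0 hp1 _ _))
    (fun S => ite_zero_nonneg zero_le_one) (fun S => ite_zero_nonneg zero_le_one)
    (fun S T hST => by
      by_cases h : E S
      · simp [h, hE S T hST h]
      · simp only [h, if_false]; split_ifs <;> simp)
    (fun S T hST => by
      by_cases h : F T
      · simp [h, hF S T hST h]
      · simp only [h, not_false_eq_true, if_true]; split_ifs <;> simp)
    hμ
  have h1 : ∑ S, μ S = 1 := by
    rw [← pr_true (O := O) (p := p), ← key]; simp
  have hprod : ∀ S, ((if E S then (1 : ℝ) else 0) * if ¬ F S then (1 : ℝ) else 0)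
      = if E S ∧ ¬ F S then (1 : ℝ) else 0 := by
    intro S
    by_cases hE : E S <;> by_cases hF : F S <;> simp [hE, hF]
  simp only [hprod, key, h1, one_mul] at h
  have h2 := pr_and_not (O := O) (p := p) (fun _ => True) F
  simp only [true_and, pr_true] at h2
  rw [pr_and_not, h2] at h
  linarith

/-- The Harris inequality for two decreasing events. -/
lemma le_pr_and [Fintype α] (hp0 : 0 ≤ p) (hp1 : p ≤ 1) {E F : Finset α → Prop}
    (hE : ∀ S T, S ⊆ T → E T → E S) (hF : ∀ S T, S ⊆ T → F T → F S) :
    pr O p E * pr O p F ≤ pr O p (fun S => E S ∧ F S) := by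
  have h := pr_and_le (O := O) hp0 hp1 (E := fun S => ¬ E S) (F := F)
    (fun S T hST h h' => h (hE S T hST h')) hF
  have h2 := pr_and_not (O := O) (p := p) (fun _ => True) E
  have h3 := pr_and_not (O := O) (p := p) F E
  simp only [true_and, pr_true] at h2
  have h4 : pr O p (fun S => ¬ E S ∧ F S) = pr O p (fun S => F S ∧ ¬ E S) :=
    pr_congr fun S _ => and_comm
  have h5 : pr O p (fun S => E S ∧ F S) = pr O p (fun S => F S ∧ E S) :=
    pr_congr fun S _ => and_comm
  rw [h4, h3, h2] at h
  rw [h5]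
  linarith

lemma prod_le_pr_avoids [Fintype α] (hp0 : 0 ≤ p) (hp1 : p ≤ 1) (A : ι → Finset α)
    (I : Finset ι) (hA : ∀ i ∈ I, A i ⊆ O) :
    ∏ i ∈ I, (1 - p ^ (A i).card) ≤ pr O p (Avoids A I) := by
  induction I using Finset.induction_on with
  | empty => simp [avoids_empty, pr_true]
  | insert i I hi ih =>
    have ih' := ih fun j hj => hA j (Finset.mem_insert_of_mem hj)
    have hAi := hA i (Finset.mem_insert_self i I)
    have h2 := pr_and_not (O := O) (p := p) (fun _ => True) (fun S => A i ⊆ S)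
    simp only [true_and, pr_true, pr_subset hAi] at h2
    have h := le_pr_and (O := O) hp0 hp1 (E := Avoids A I) (F := fun S => ¬ A i ⊆ S)
      Avoids.anti (fun S T hST h h' => h (h'.trans hST))
    rw [Finset.prod_insert hi, pr_congr (fun S _ => avoids_insert S)]
    refine le_trans ?_ h
    rw [h2, mul_comm]
    exact mul_le_mul_of_nonneg_right ih' (sub_nonneg.2 (pow_le_one₀ hp0 hp1))

/-- The cost of a clash between the sets `A` and `B` in Janson's inequality. -/
noncomputable def clash (p : ℝ) (A B : Finset α) : ℝ :=
  if Disjoint A B then 0 else p ^ (A ∪ B).card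

lemma clash_nonneg (hp0 : 0 ≤ p) (A B : Finset α) : 0 ≤ clash p A B := by
  exact ite_nonneg le_rfl (pow_nonneg hp0 _)

lemma clash_comm (A B : Finset α) : clash p A B = clash p B A := by
  simp only [clash, disjoint_comm, Finset.union_comm]

lemma le_pr_avoids_and_subset [Fintype α] (hp0 : 0 ≤ p) (hp1 : p ≤ 1) (A : ι → Finset α)
    (I : Finset ι) (hA : ∀ i ∈ I, A i ⊆ O) {B : Finset α} (hB : B ⊆ O) :
    pr O p (Avoids A I) * (p ^ B.card - ∑ i ∈ I, clash p B (A i))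
      ≤ pr O p (fun S => Avoids A I S ∧ B ⊆ S) := by
  rcases lt_or_ge (p ^ B.card - ∑ i ∈ I, clash p B (A i)) 0 with hneg | hpos
  · exact (mul_nonpos_of_nonneg_of_nonpos (pr_nonneg hp0 hp1 _) hneg.le).trans
      (pr_nonneg hp0 hp1 _)
  let J := I.filter fun i => Disjoint B (A i)
  have hJ : pr O p (fun S => B ⊆ S ∧ Avoids A J S) = p ^ B.card * pr O p (Avoids A J) := by
    refine pr_subset_and hB fun b hb S => ?_
    refine forall₂_congr fun i hi => ?_
    have hbi : b ∉ A i := Finset.disjoint_left.1 (Finset.mem_filter.1 hi).2 hb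
    rw [Finset.subset_insert_iff_of_notMem hbi]
  have hunion : pr O p (fun S => B ⊆ S ∧ Avoids A J S) ≤
      pr O p (fun S => Avoids A I S ∧ B ⊆ S) +
        ∑ i ∈ I.filter (fun i => ¬ Disjoint B (A i)),
          pr O p (fun S => B ∪ A i ⊆ S ∧ Avoids A J S) := by
    simp only [pr]
    rw [Finset.sum_comm, ← Finset.sum_add_distrib]
    refine Finset.sum_le_sum fun S _ => ?_
    have hw := weight_nonneg hp0 hp1 S.card (O \ S).card
    by_cases h1 : B ⊆ S ∧ Avoids A J S
    · by_cases h2 : Avoids A I S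
      · rw [if_pos h1, if_pos ⟨h2, h1.1⟩]
        exact le_add_of_nonneg_right (Finset.sum_nonneg fun i _ => ite_zero_nonneg hw)
      · simp only [Avoids, not_forall, not_not] at h2
        obtain ⟨i, hi, hiS⟩ := h2
        have hiJ : i ∈ I.filter (fun i => ¬ Disjoint B (A i)) :=
          Finset.mem_filter.2 ⟨hi, fun hd => h1.2 i (Finset.mem_filter.2 ⟨hi, hd⟩) hiS⟩
        rw [if_pos h1]
        refine le_trans ?_ (le_add_of_nonneg_left (ite_zero_nonneg hw))
        refine le_trans ?_ (Finset.single_le_sum (fun i _ => ite_zero_nonneg hw) hiJ)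
        rw [if_pos ⟨Finset.union_subset h1.1 hiS, h1.2⟩]
    · rw [if_neg h1]
      exact add_nonneg (ite_zero_nonneg hw) (Finset.sum_nonneg fun i _ => ite_zero_nonneg hw)
  have hterm : ∑ i ∈ I.filter (fun i => ¬ Disjoint B (A i)),
      pr O p (fun S => B ∪ A i ⊆ S ∧ Avoids A J S)
        ≤ (∑ i ∈ I, clash p B (A i)) * pr O p (Avoids A J) := by
    rw [Finset.sum_filter, Finset.sum_mul]
    refine Finset.sum_le_sum fun i hi => ?_
    by_cases hd : Disjoint B (A i)
    · simp [hd, clash]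
    · rw [if_pos hd, clash, if_neg hd, ← pr_subset (Finset.union_subset hB (hA i hi))]
      exact pr_and_le hp0 hp1 (fun S T hST h => h.trans hST) Avoids.anti
  have hIJ : pr O p (Avoids A I) ≤ pr O p (Avoids A J) :=
    pr_mono hp0 hp1 fun S _ h i hi => h i (Finset.mem_filter.1 hi).1
  have := mul_le_mul_of_nonneg_right hIJ hpos
  linarith

/-- A product form of Janson's inequality. -/
lemma pr_avoids_le [Fintype α] [DecidableEq ι] (hp0 : 0 ≤ p) (hp1 : p ≤ 1 / 2) (A : ι → Finset α)
    (I : Finset ι) (hA : ∀ i ∈ I, A i ⊆ O) (hne : ∀ i ∈ I, (A i).Nonempty) :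
    pr O p (Avoids A I) ≤ (∏ i ∈ I, (1 - p ^ (A i).card)) *
      Real.exp (2 * ∑ i ∈ I, ∑ j ∈ I.erase i, clash p (A i) (A j)) := by
  have hp1' : p ≤ 1 := hp1.trans (by norm_num)
  induction I using Finset.induction_on with
  | empty => simp [avoids_empty, pr_true]
  | insert i I hi ih =>
    have ih' := ih (fun j hj => hA j (Finset.mem_insert_of_mem hj))
      (fun j hj => hne j (Finset.mem_insert_of_mem hj))
    have hAi := hA i (Finset.mem_insert_self i I)
    have hnei := hne i (Finset.mem_insert_self i I)
    have hstep := le_pr_avoids_and_subset hp0 hp1' A I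
      (fun j hj => hA j (Finset.mem_insert_of_mem hj)) hAi
    have hpi : p ^ (A i).card ≤ 1 / 2 :=
      (pow_le_of_le_one hp0 hp1' hnei.card_pos.ne').trans hp1
    set d := ∑ j ∈ I, clash p (A i) (A j) with hd
    have hd0 : 0 ≤ d := Finset.sum_nonneg fun j _ => clash_nonneg hp0 _ _
    have hsum : (∑ k ∈ I, ∑ j ∈ I.erase k, clash p (A k) (A j)) + d ≤
        ∑ k ∈ insert i I, ∑ j ∈ (insert i I).erase k, clash p (A k) (A j) := by
      rw [Finset.sum_insert hi, Finset.erase_insert hi, add_comm]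
      gcongr with k hk
      · exact fun _ _ _ => clash_nonneg hp0 _ _
      · exact Finset.subset_insert _ _
    have hfac : 1 - p ^ (A i).card + d ≤ (1 - p ^ (A i).card) * Real.exp (2 * d) := by
      have := Real.add_one_le_exp (2 * d)
      nlinarith
    rw [pr_congr (fun S _ => avoids_insert S), pr_and_not, Finset.prod_insert hi]
    have hprod : 0 ≤ ∏ j ∈ I, (1 - p ^ (A j).card) :=
      Finset.prod_nonneg fun j _ => sub_nonneg.2 (pow_le_one₀ hp0 hp1')
    calc _ ≤ pr O p (Avoids A I) * (1 - p ^ (A i).card + d) := by linarith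
      _ ≤ ((∏ j ∈ I, (1 - p ^ (A j).card)) *
          Real.exp (2 * ∑ k ∈ I, ∑ j ∈ I.erase k, clash p (A k) (A j))) *
          ((1 - p ^ (A i).card) * Real.exp (2 * d)) := by
        gcongr
        linarith
      _ = ((1 - p ^ (A i).card) * ∏ j ∈ I, (1 - p ^ (A j).card)) *
          Real.exp (2 * ((∑ k ∈ I, ∑ j ∈ I.erase k, clash p (A k) (A j)) + d)) := by
        rw [mul_add, Real.exp_add]; ring
      _ ≤ _ := by
        have : 0 ≤ 1 - p ^ (A i).card := by linarith
        gcongr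

end RandomSubset
section Forbidden

lemma FormTriangle.ne {e f g : Sym2 V} (h : FormTriangle e f g) : f ≠ g := by
  obtain ⟨x, y, z, hxy, hxz, hyz, rfl, rfl, rfl⟩ := h
  simp [hxy, hxz]

lemma FormTriangle.eq_of_pair [DecidableEq V] {e e' f g f' g' : Sym2 V} (h : FormTriangle e f g)
    (h' : FormTriangle e' f' g') (hfg : ({f', g'} : Finset (Sym2 V)) ⊆ {f, g}) : e = e' := by
  have hn := h'.ne
  have h1 : f' = f ∨ f' = g := by simpa using hfg (Finset.mem_insert_self f' _)
  have h2 : g' = f ∨ g' = g := by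
    simpa using hfg (Finset.mem_insert_of_mem (Finset.mem_singleton_self g'))
  obtain ⟨x, y, z, hxy, hxz, hyz, rfl, rfl, rfl⟩ := h
  obtain ⟨x', y', z', hxy', hxz', hyz', rfl, rfl, rfl⟩ := h'
  simp only [ne_eq, Sym2.eq_iff] at hn h1 h2 ⊢
  grind

variable [Fintype V] [DecidableEq V]

/-- The sets of edges which, once contained in `G₁`, prevent `e` from being open. -/
noncomputable def forb (O G' : Finset (Sym2 V)) (e : Sym2 V) : Finset (Finset (Sym2 V)) :=
  (Finset.univ.filter fun f => f ∈ Yset (O : Set (Sym2 V)) G' e).image singleton ∪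
    (Finset.univ.filter fun q => q ∈ openTrianglePairs (O : Set (Sym2 V)) e).image Sym2.toFinset

variable {O G' H : Finset (Sym2 V)} {e : Sym2 V}

lemma mem_forb {A : Finset (Sym2 V)} : A ∈ forb O G' e ↔
    (∃ f ∈ Yset (O : Set (Sym2 V)) G' e, A = {f}) ∨
      ∃ f g, f ∈ O ∧ g ∈ O ∧ FormTriangle e f g ∧ A = {f, g} := by
  simp only [forb, Finset.mem_union, Finset.mem_image, Finset.mem_filter, Finset.mem_univ,
    true_and, openTrianglePairs, Set.mem_ofPred_eq, Finset.mem_coe]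
  refine or_congr ⟨?_, ?_⟩ ⟨?_, ?_⟩
  · rintro ⟨f, hf, rfl⟩
    exact ⟨f, hf, rfl⟩
  · rintro ⟨f, hf, rfl⟩
    exact ⟨f, hf, rfl⟩
  · rintro ⟨_, ⟨f, g, rfl, hf, hg, h⟩, rfl⟩
    exact ⟨f, g, hf, hg, h, Sym2.toFinset_mk_eq⟩
  · rintro ⟨f, g, hf, hg, h, rfl⟩
    exact ⟨s(f, g), ⟨f, g, rfl, hf, hg, h⟩, Sym2.toFinset_mk_eq⟩

lemma subset_of_mem_forb (he : e ∈ O) {A : Finset (Sym2 V)} (hA : A ∈ forb O G' e) :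
    A ⊆ O := by
  rcases mem_forb.1 hA with ⟨f, hf, rfl⟩ | ⟨f, g, hf, hg, -, rfl⟩
  · rcases hf with hf | rfl
    · simpa using hf.1
    · simpa using he
  · simp [Finset.insert_subset_iff, hf, hg]

lemma nonempty_of_mem_forb {A : Finset (Sym2 V)} (hA : A ∈ forb O G' e) : A.Nonempty := by
  rcases mem_forb.1 hA with ⟨f, -, rfl⟩ | ⟨f, g, -, -, -, rfl⟩ <;> simp

lemma exists_pair_of_card {A : Finset (Sym2 V)} (hA : A ∈ forb O G' e) (h2 : A.card = 2) :
    ∃ f g, f ∈ O ∧ g ∈ O ∧ FormTriangle e f g ∧ A = {f, g} := by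
  rcases mem_forb.1 hA with ⟨f, -, rfl⟩ | h
  · simp at h2
  · exact h

lemma exists_single_of_card {A : Finset (Sym2 V)} (hA : A ∈ forb O G' e) (h2 : A.card ≠ 2) :
    ∃ f ∈ Yset (O : Set (Sym2 V)) G' e, A = {f} := by
  rcases mem_forb.1 hA with h | ⟨f, g, -, -, h, rfl⟩
  · exact h
  · exact absurd (Finset.card_pair h.ne) h2

lemma card_le_two {A : Finset (Sym2 V)} (hA : A ∈ forb O G' e) : A.card ≤ 2 := by
  by_cases h : A.card = 2
  · exact h.le
  · obtain ⟨f, -, rfl⟩ := exists_single_of_card hA h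
    simp

lemma sum_forb_le {p : ℝ} (hp0 : 0 ≤ p) :
    ∑ A ∈ forb O G' e, p ^ A.card ≤
      p ^ 2 * (X (O : Set (Sym2 V)) e : ℝ) + p * (Y (O : Set (Sym2 V)) G' e : ℝ) := by
  have hY : ((Finset.univ.filter fun A => A ∈ forb O G' e ∧ A.card = 1).card : ℝ)
      ≤ Y (O : Set (Sym2 V)) G' e := by
    have h : (Finset.univ.filter fun f => f ∈ Yset (O : Set (Sym2 V)) G' e).card
        = Y (O : Set (Sym2 V)) G' e := by
      rw [Y, ← Set.ncard_coe_finset]; simp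
    rw [← h]
    refine mod_cast (Finset.card_le_card ?_).trans
      (Finset.card_image_le (f := fun f => ({f} : Finset (Sym2 V))))
    intro A hA
    obtain ⟨hA, h1⟩ := (Finset.mem_filter.1 hA).2
    obtain ⟨f, hf, rfl⟩ := exists_single_of_card hA (by omega)
    exact Finset.mem_image_of_mem _ (by simpa using hf)
  have hX : ((Finset.univ.filter fun A => A ∈ forb O G' e ∧ A.card = 2).card : ℝ)
      ≤ X (O : Set (Sym2 V)) e := by
    have h : (Finset.univ.filter fun q => q ∈ openTrianglePairs (O : Set (Sym2 V)) e).card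
        = X (O : Set (Sym2 V)) e := by
      rw [X, ← Set.ncard_coe_finset]; simp
    rw [← h]
    refine mod_cast (Finset.card_le_card ?_).trans
      (Finset.card_image_le (f := Sym2.toFinset))
    intro A hA
    obtain ⟨hA, h1⟩ := (Finset.mem_filter.1 hA).2
    obtain ⟨f, g, hf, hg, ht, rfl⟩ := exists_pair_of_card hA h1
    exact Finset.mem_image.2 ⟨s(f, g), by simpa using ⟨f, g, rfl, hf, hg, ht⟩,
      Sym2.toFinset_mk_eq⟩
  have hsplit : forb O G' e = (Finset.univ.filter fun A => A ∈ forb O G' e ∧ A.card = 2) ∪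
      (Finset.univ.filter fun A => A ∈ forb O G' e ∧ A.card = 1) := by
    ext A
    simp only [Finset.mem_union, Finset.mem_filter, Finset.mem_univ, true_and, ← and_or_left]
    refine ⟨fun h => ⟨h, ?_⟩, fun h => h.1⟩
    have := card_le_two h
    have := (nonempty_of_mem_forb h).card_pos
    omega
  have hdisj : Disjoint (Finset.univ.filter fun A => A ∈ forb O G' e ∧ A.card = 2)
      (Finset.univ.filter fun A => A ∈ forb O G' e ∧ A.card = 1) := by
    refine Finset.disjoint_left.2 fun A h h' => ?_
    have := (Finset.mem_filter.1 h).2.2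
    have := (Finset.mem_filter.1 h').2.2
    omega
  rw [hsplit, Finset.sum_union hdisj,
    Finset.sum_congr rfl (g := fun _ => p ^ 2) (fun A hA => by rw [(Finset.mem_filter.1 hA).2.2]),
    Finset.sum_congr (s₁ := Finset.univ.filter fun A => A ∈ forb O G' e ∧ A.card = 1) rfl
      (g := fun _ => p) (fun A hA => by rw [(Finset.mem_filter.1 hA).2.2, pow_one]),
    Finset.sum_const, Finset.sum_const, nsmul_eq_mul, nsmul_eq_mul, mul_comm, mul_comm _ p]
  gcongr

lemma mem_Opp_iff (hdisj : O ∩ G' = ∅) (hcl : ∀ f ∈ O, ¬ Closes f G') (he : e ∈ O)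
    {S : Finset (Sym2 V)} (hS : S ⊆ O) :
    e ∈ Opp O G' S ↔ ∀ A ∈ forb O G' e, ¬ A ⊆ S := by
  have heG : e ∉ G' := fun h => by
    have : e ∈ O ∩ G' := Finset.mem_inter.2 ⟨he, h⟩
    simp [hdisj] at this
  simp only [Opp, Finset.mem_filter, Finset.mem_sdiff]
  constructor
  · rintro ⟨⟨-, heS⟩, hn⟩ A hA hAS
    rcases mem_forb.1 hA with ⟨f, hf, rfl⟩ | ⟨f, g, hf, hg, ht, rfl⟩
    · have hfS : f ∈ S := hAS (Finset.mem_singleton_self f)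
      rcases hf with ⟨hfO, g, hg, ht⟩ | hfe
      · obtain ⟨x, y, z, hxy, -, -, rfl, rfl, rfl⟩ := ht
        exact hn ⟨x, y, z, hxy, rfl, Finset.mem_union_right _ hfS,
          Finset.mem_union_left _ hg⟩
      · rw [Set.mem_singleton_iff] at hfe
        exact heS (hfe ▸ hfS)
    · obtain ⟨x, y, z, hxy, -, -, rfl, rfl, rfl⟩ := ht
      exact hn ⟨x, y, z, hxy, rfl, Finset.mem_union_right _ (hAS (by simp)),
        Finset.mem_union_right _ (hAS (by simp))⟩
  · intro h
    have heS : e ∉ S := fun heS =>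
      h {e} (mem_forb.2 (Or.inl ⟨e, Or.inr rfl, rfl⟩)) (by simpa using heS)
    have hGS : ∀ {g}, g ∈ G' ∪ S → g ≠ e := by
      rintro g hg rfl
      exact (Finset.mem_union.1 hg).elim heG heS
    refine ⟨⟨he, heS⟩, ?_⟩
    rintro ⟨x, y, w, hxy, rfl, h1, h2⟩
    have hyw : y ≠ w := by
      rintro rfl
      exact hGS h1 rfl
    have hxw : x ≠ w := by
      rintro rfl
      exact hGS h2 Sym2.eq_swap
    have hO : ∀ {a b}, a ≠ b → a ≠ w → b ≠ w → s(x, y) = s(a, b) →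
        s(a, w) ∈ S → s(b, w) ∈ G' → False := fun {a b} hab haw hbw hxyab haS hbG =>
      h {s(a, w)} (mem_forb.2 (Or.inl ⟨s(a, w), Or.inl ⟨by simpa using hS haS, s(b, w),
        by simpa using hbG, a, b, w, hab, haw, hbw, hxyab, rfl, rfl⟩, rfl⟩)) (by simpa using haS)
    rcases Finset.mem_union.1 h1 with h1 | h1 <;> rcases Finset.mem_union.1 h2 with h2 | h2
    · exact hcl _ he ⟨x, y, w, hxy, rfl, h1, h2⟩
    · exact hO hxy.symm hyw hxw Sym2.eq_swap h2 h1
    · exact hO hxy hxw hyw rfl h1 h2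
    · exact h {s(x, w), s(y, w)} (mem_forb.2 (Or.inr ⟨_, _, hS h1, hS h2,
        ⟨x, y, w, hxy, hxw, hyw, rfl, rfl, rfl⟩, rfl⟩)) (by simp [Finset.insert_subset_iff, h1, h2])

lemma disjoint_of_mem_forb (hdisj : O ∩ G' = ∅) {A B : Finset (Sym2 V)}
    (hA : A ∈ forb O G' e) (hB : B ∈ forb O G' e) (hAB : A ≠ B) : Disjoint A B := by
  have hOG : ∀ {f}, f ∈ O → f ∈ G' → False := fun h h' => by
    simpa [hdisj] using Finset.mem_inter.2 ⟨h, h'⟩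
  have hne : ∀ {f g h}, FormTriangle e f g → FormTriangle e h f → g = h := by
    rintro f g h ⟨x, y, z, hxy, hxz, hyz, rfl, rfl, rfl⟩ ⟨x', y', z', hxy', hxz', hyz', h1, rfl, h2⟩
    simp only [Sym2.eq_iff] at h1 h2 ⊢
    grind
  have hne' : ∀ {f g h}, FormTriangle e f g → FormTriangle e f h → g = h := by
    rintro f g h ⟨x, y, z, hxy, hxz, hyz, rfl, rfl, rfl⟩ ⟨x', y', z', hxy', hxz', hyz', h1, h2, rfl⟩
    simp only [Sym2.eq_iff] at h1 h2 ⊢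
    grind
  have hne'' : ∀ {f g h}, FormTriangle e f g → FormTriangle e h g → f = h := by
    rintro f g h ⟨x, y, z, hxy, hxz, hyz, rfl, rfl, rfl⟩ ⟨x', y', z', hxy', hxz', hyz', h1, rfl, h2⟩
    simp only [Sym2.eq_iff] at h1 h2 ⊢
    grind
  have hself : ∀ {g}, FormTriangle e e g → False := by
    rintro g ⟨x, y, z, hxy, hxz, hyz, rfl, h1, rfl⟩
    simp only [Sym2.eq_iff] at h1
    grind
  have hself' : ∀ {g}, FormTriangle e g e → False := by
    rintro g ⟨x, y, z, hxy, hxz, hyz, rfl, rfl, h1⟩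
    simp only [Sym2.eq_iff] at h1
    grind
  have hSP : ∀ {f g h}, f ∈ Yset (O : Set (Sym2 V)) G' e → g ∈ O → h ∈ O →
      FormTriangle e g h → f ≠ g ∧ f ≠ h := by
    rintro f g h (⟨-, k, hk, ht⟩ | rfl) hg hh ht'
    · refine ⟨?_, ?_⟩
      · rintro rfl
        exact hOG hh (hne' ht ht' ▸ hk)
      · rintro rfl
        exact hOG hg (hne ht ht' ▸ hk)
    · refine ⟨?_, ?_⟩
      · rintro rfl
        exact hself ht'
      · rintro rfl
        exact hself' ht'
  rcases mem_forb.1 hA with ⟨f, hf, rfl⟩ | ⟨f, g, hf, hg, ht, rfl⟩ <;>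
    rcases mem_forb.1 hB with ⟨f', hf', rfl⟩ | ⟨f', g', hf', hg', ht', rfl⟩
  · simpa using hAB
  · have := hSP hf hf' hg' ht'
    simp [this.1, this.2]
  · have := hSP hf' hf hg ht
    simp [this.1, this.2]
  · rw [Finset.disjoint_left]
    intro k hk hk'
    apply hAB
    simp only [Finset.mem_insert, Finset.mem_singleton] at hk hk'
    rcases hk with rfl | rfl <;> rcases hk' with rfl | rfl
    · rw [hne' ht ht']
    · rw [hne ht ht', Finset.pair_comm]
    · rw [← hne ht' ht, Finset.pair_comm]
    · rw [hne'' ht ht']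

lemma not_subset_of_mem_forb {e' : Sym2 V} {A B : Finset (Sym2 V)} (hA : A ∈ forb O G' e)
    (hB : B ∈ forb O G' e') (hB2 : B.card = 2) (hee : e ≠ e') : ¬ B ⊆ A := by
  intro hBA
  obtain ⟨f', g', -, -, ht', rfl⟩ := exists_pair_of_card hB hB2
  rcases mem_forb.1 hA with ⟨f, -, rfl⟩ | ⟨f, g, -, -, ht, rfl⟩
  · have := Finset.card_le_card hBA
    simp [hB2] at this
  · exact hee (ht.eq_of_pair ht' hBA)

lemma card_neighbors_le (H : Finset (Sym2 V)) (x : V) :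
    (Finset.univ.filter fun w => s(x, w) ∈ H).card ≤ maxDeg H := by
  have h : degF H x ≤ maxDeg H := Finset.le_sup (f := degF H) (Finset.mem_univ x)
  rw [degF] at h
  convert h

lemma card_pairs_containing_le (f : Sym2 V) :
    ((H.sigma (forb O G')).filter fun j => j.2.card = 2 ∧ f ∈ j.2).card ≤ 2 * maxDeg H := by
  induction f using Sym2.ind with
  | _ a b =>
  let T : V → V → Finset (Σ _ : Sym2 V, Finset (Sym2 V)) := fun a b =>
    (Finset.univ.filter fun w => s(a, w) ∈ H).image
      fun w => ⟨s(a, w), {s(a, b), s(w, b)}⟩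
  have hT : ∀ a b, (T a b).card ≤ maxDeg H := fun a b =>
    Finset.card_image_le.trans (card_neighbors_le H a)
  have hsub : ((H.sigma (forb O G')).filter fun j => j.2.card = 2 ∧ s(a, b) ∈ j.2)
      ⊆ T a b ∪ T b a := by
    rintro ⟨e', B⟩ hj
    simp only [Finset.mem_filter, Finset.mem_sigma] at hj
    obtain ⟨⟨he', hB⟩, hB2, hf⟩ := hj
    obtain ⟨f, g, -, -, ⟨x, y, z, -, -, -, rfl, rfl, rfl⟩, rfl⟩ := exists_pair_of_card hB hB2
    simp only [Finset.mem_insert, Finset.mem_singleton, Sym2.eq_iff] at hf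
    have key : ∀ w c d, s(c, w) ∈ H → s(x, y) = s(c, w) →
        ({s(x, z), s(y, z)} : Finset (Sym2 V)) = {s(c, d), s(w, d)} →
        (⟨s(x, y), {s(x, z), s(y, z)}⟩ : Σ _ : Sym2 V, Finset (Sym2 V)) ∈ T c d := by
      intro w c d hw h1 h2
      exact Finset.mem_image.2 ⟨w, by simpa using hw, by rw [h1, h2]⟩
    rw [Finset.mem_union]
    have he'' : s(y, x) ∈ H := Sym2.eq_swap ▸ he'
    rcases hf with (⟨rfl, rfl⟩ | ⟨rfl, rfl⟩) | ⟨rfl, rfl⟩ | ⟨rfl, rfl⟩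
    · exact Or.inl (key y _ _ he' rfl rfl)
    · exact Or.inr (key y _ _ he' rfl rfl)
    · exact Or.inl (key x _ _ he'' Sym2.eq_swap (Finset.pair_comm _ _))
    · exact Or.inr (key x _ _ he'' Sym2.eq_swap (Finset.pair_comm _ _))
  calc _ ≤ _ := Finset.card_le_card hsub
    _ ≤ _ := Finset.card_union_le _ _
    _ ≤ _ := by have := hT a b; have := hT b a; omega

/-- The pairs `(f, e')` such that `f` closes both `e` and the edge `e' ≠ e` of `H`. -/
noncomputable def sharedSingles (O G' H : Finset (Sym2 V)) (e : Sym2 V) :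
    Finset (Sym2 V × Sym2 V) :=
  Finset.univ.filter fun q => q.2 ∈ H ∧ q.2 ≠ e ∧ q.1 ∈ Yset (O : Set (Sym2 V)) G' e ∧
    q.1 ∈ Yset (O : Set (Sym2 V)) G' q.2

lemma card_sharedSingles_le (hHO : H ⊆ O) {L D : ℝ} (hL0 : 0 ≤ L)
    (hcommon : ∀ x y w : V, s(x, y) ∈ O → s(x, w) ∈ O → w ≠ y →
      ((Finset.univ.filter fun z => s(y, z) ∈ G' ∧ s(w, z) ∈ G').card : ℝ) ≤ L)
    (hD : (maxDeg H : ℝ) ≤ D) (hD' : (maxDeg (induce G' (verts H)) : ℝ) ≤ D) (he : e ∈ H) :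
    ((sharedSingles O G' H e).card : ℝ) ≤ 2 * (2 * D + D * L + D ^ 2) := by
  induction e using Sym2.ind with
  | _ x y =>
  let N : V → Finset V := fun x => Finset.univ.filter fun w => s(x, w) ∈ H
  let N' : V → Finset V := fun y => Finset.univ.filter fun z => s(y, z) ∈ induce G' (verts H)
  let C : V → V → Finset V := fun y w => Finset.univ.filter fun z => s(y, z) ∈ G' ∧ s(w, z) ∈ G'
  have hN : ∀ x, ((N x).card : ℝ) ≤ D := fun x =>
    le_trans (mod_cast card_neighbors_le H x) hD
  have hN' : ∀ x, ((N' x).card : ℝ) ≤ D := fun x =>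
    le_trans (mod_cast card_neighbors_le (induce G' (verts H)) x) hD'
  have hD0 : 0 ≤ D := le_trans (Nat.cast_nonneg _) hD
  let T : V → V → Finset (Sym2 V × Sym2 V) := fun x y =>
    ((N x).image fun w => (s(x, y), s(x, w))) ∪
    ((N x).image fun z => (s(x, z), s(x, z))) ∪
    ((((N x).erase y).sigma fun w => C y w).image fun t => (s(x, t.2), s(x, t.1))) ∪
    (((N' y).sigma fun z => N z).image fun t => (s(x, t.1), s(t.1, t.2)))
  have hT : ∀ x y, s(x, y) ∈ H → ((T x y).card : ℝ) ≤ 2 * D + D * L + D ^ 2 := by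
    intro x y hxy
    have h3 : ((((N x).erase y).sigma fun w => C y w).card : ℝ) ≤ D * L := by
      rw [Finset.card_sigma, Nat.cast_sum]
      calc _ ≤ ∑ w ∈ (N x).erase y, L := by
            refine Finset.sum_le_sum fun w hw => ?_
            obtain ⟨hwy, hw⟩ := Finset.mem_erase.1 hw
            exact hcommon x y w (hHO hxy) (hHO (Finset.mem_filter.1 hw).2) hwy
        _ = ((N x).erase y).card * L := by simp
        _ ≤ D * L := by
            gcongr
            exact le_trans (mod_cast Finset.card_erase_le) (hN x)
    have h4 : (((N' y).sigma fun z => N z).card : ℝ) ≤ D ^ 2 := by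
      rw [Finset.card_sigma, Nat.cast_sum]
      calc _ ≤ ∑ z ∈ N' y, D := Finset.sum_le_sum fun z _ => hN z
        _ = (N' y).card * D := by simp
        _ ≤ D * D := by gcongr; exact hN' y
        _ = D ^ 2 := by ring
    have hu : (T x y).card ≤ (N x).card + (N x).card +
        (((N x).erase y).sigma fun w => C y w).card + ((N' y).sigma fun z => N z).card := by
      refine (Finset.card_union_le _ _).trans (add_le_add ?_ Finset.card_image_le)
      refine (Finset.card_union_le _ _).trans (add_le_add ?_ Finset.card_image_le)
      exact (Finset.card_union_le _ _).trans
        (add_le_add Finset.card_image_le Finset.card_image_le)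
    have hu' : ((T x y).card : ℝ) ≤ (N x).card + (N x).card +
        (((N x).erase y).sigma fun w => C y w).card + ((N' y).sigma fun z => N z).card := by
      exact_mod_cast hu
    have := hN x
    linarith
  have core : ∀ x y z e', s(x, y) ∈ H → e' ∈ H → e' ≠ s(x, y) → s(y, z) ∈ G' →
      s(x, z) ∈ Yset (O : Set (Sym2 V)) G' e' → (s(x, z), e') ∈ T x y := by
    rintro x y z e' hxy he' hne hyz (⟨-, g, hg, ⟨a, b, t, -, -, -, rfl, h, rfl⟩⟩ | h)
    · rcases Sym2.eq_iff.1 h with ⟨rfl, rfl⟩ | ⟨rfl, rfl⟩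
      · refine Finset.mem_union_left _ (Finset.mem_union_right _ (Finset.mem_image.2
          ⟨⟨b, z⟩, Finset.mem_sigma.2 ⟨Finset.mem_erase.2 ⟨?_, by simpa [N] using he'⟩, ?_⟩, rfl⟩))
        · rintro rfl
          exact hne rfl
        · simpa [C] using ⟨hyz, hg⟩
      · refine Finset.mem_union_right _ (Finset.mem_image.2
          ⟨⟨z, b⟩, Finset.mem_sigma.2 ⟨?_, by simpa [N] using he'⟩, rfl⟩)
        have hy : y ∈ verts H := by
          simpa [verts] using ⟨x, Sym2.eq_swap ▸ hxy⟩
        have hz : z ∈ verts H := by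
          simpa [verts] using ⟨b, he'⟩
        simp [N', induce, hyz, hy, hz]
    · rw [Set.mem_singleton_iff] at h
      subst h
      exact Finset.mem_union_left _ (Finset.mem_union_left _ (Finset.mem_union_right _
        (Finset.mem_image.2 ⟨z, by simpa [N] using he', rfl⟩)))
  have hsub : sharedSingles O G' H s(x, y) ⊆ T x y ∪ T y x := by
    rintro ⟨f, e'⟩ hq
    obtain ⟨he', hne, hf, hf'⟩ := (Finset.mem_filter.1 hq).2
    simp only at he' hne hf hf'
    rw [Finset.mem_union]
    rcases hf with ⟨-, g, hg, ⟨a, b, z, -, -, -, h, rfl, rfl⟩⟩ | hf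
    · have hab : s(a, b) ∈ H := h ▸ he
      have := core a b z e' hab he' (h ▸ hne) hg hf'
      rcases Sym2.eq_iff.1 h with ⟨rfl, rfl⟩ | ⟨rfl, rfl⟩
      exacts [Or.inl this, Or.inr this]
    · rw [Set.mem_singleton_iff] at hf
      subst hf
      rcases hf' with ⟨-, g, hg, ⟨a, b, t, -, -, -, rfl, h, rfl⟩⟩ | h
      · have key : ∀ x y, (x, y) = (a, t) → (s(x, y), s(a, b)) ∈ T x y := by
          rintro _ _ ⟨rfl, rfl⟩
          exact Finset.mem_union_left _ (Finset.mem_union_left _ (Finset.mem_union_left _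
            (Finset.mem_image.2 ⟨b, by simpa [N] using he', rfl⟩)))
        rcases Sym2.eq_iff.1 h with ⟨rfl, rfl⟩ | ⟨rfl, rfl⟩
        · exact Or.inl (key _ _ rfl)
        · refine Or.inr ?_
          rw [Sym2.eq_swap]
          exact key _ _ rfl
      · exact absurd h.symm hne
  have hle : ((sharedSingles O G' H s(x, y)).card : ℝ) ≤ (T x y).card + (T y x).card := by
    exact_mod_cast (Finset.card_le_card hsub).trans (Finset.card_union_le _ _)
  have := hT x y he
  have := hT y x (Sym2.eq_swap ▸ he)
  linarith

end Forbidden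

section Clashes

variable [Fintype V] [DecidableEq V] {O G' H : Finset (Sym2 V)} {p D : ℝ}

lemma clash_pair_le (hdisj : O ∩ G' = ∅) (hp0 : 0 ≤ p) (hp1 : p ≤ 1)
    {i j : Σ _ : Sym2 V, Finset (Sym2 V)} (hi : i ∈ H.sigma (forb O G'))
    (hj : j ∈ H.sigma (forb O G')) (hij : j ≠ i) (hj2 : j.2.card = 2) :
    clash p i.2 j.2 ≤ if ¬ Disjoint i.2 j.2 then p ^ (i.2.card + 1) else 0 := by
  rw [clash]
  by_cases hd : Disjoint i.2 j.2
  · simp [hd]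
  rw [if_neg hd, if_pos hd]
  obtain ⟨e, A⟩ := i
  obtain ⟨e', B⟩ := j
  rw [Finset.mem_sigma] at hi hj
  dsimp only at *
  have hee : e ≠ e' := by
    rintro rfl
    refine hd (disjoint_of_mem_forb hdisj hi.2 hj.2 ?_)
    rintro rfl
    exact hij rfl
  have hBA := not_subset_of_mem_forb hi.2 hj.2 hj2 hee
  have hlt : A.card < (A ∪ B).card := Finset.card_lt_card
    (Finset.ssubset_iff_subset_ne.2 ⟨Finset.subset_union_left, fun h =>
      hBA (by rw [h]; exact Finset.subset_union_right)⟩)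
  exact pow_le_pow_of_le_one hp0 hp1 hlt

lemma sum_clash_pairs_le (hdisj : O ∩ G' = ∅) (hp0 : 0 ≤ p) (hp1 : p ≤ 1)
    (hD : (maxDeg H : ℝ) ≤ D)
    (hXY : ∀ e ∈ H, ∑ A ∈ forb O G' e, p ^ A.card ≤ 1) :
    ∑ i ∈ H.sigma (forb O G'), ∑ j ∈ H.sigma (forb O G'),
      (if j ≠ i ∧ j.2.card = 2 then clash p i.2 j.2 else 0) ≤ H.card * (4 * D * p) := by
  set I := H.sigma (forb O G') with hI
  have hD0 : 0 ≤ D := le_trans (Nat.cast_nonneg _) hD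
  have hrow : ∀ i ∈ I, ∑ j ∈ I, (if j ≠ i ∧ j.2.card = 2 then clash p i.2 j.2 else 0) ≤
      4 * D * p * p ^ i.2.card := by
    intro i hi
    calc _ ≤ ∑ j ∈ I, ∑ f ∈ i.2, (if j.2.card = 2 ∧ f ∈ j.2 then p ^ (i.2.card + 1) else 0) := by
          refine Finset.sum_le_sum fun j hj => ?_
          have hnn : ∀ f ∈ i.2, 0 ≤ if j.2.card = 2 ∧ f ∈ j.2 then p ^ (i.2.card + 1) else 0 :=
            fun f _ => ite_zero_nonneg (pow_nonneg hp0 _)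
          by_cases h : j ≠ i ∧ j.2.card = 2
          · rw [if_pos h]
            refine (clash_pair_le hdisj hp0 hp1 hi hj h.1 h.2).trans ?_
            by_cases hd : Disjoint i.2 j.2
            · simpa [hd] using Finset.sum_nonneg hnn
            · rw [if_pos hd]
              obtain ⟨f, hf, hf'⟩ := Finset.not_disjoint_iff.1 hd
              refine le_trans ?_ (Finset.single_le_sum hnn hf)
              rw [if_pos ⟨h.2, hf'⟩]
          · rw [if_neg h]
            exact Finset.sum_nonneg hnn
      _ = ∑ f ∈ i.2, ((I.filter fun j => j.2.card = 2 ∧ f ∈ j.2).card : ℝ)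
            * p ^ (i.2.card + 1) := by
          rw [Finset.sum_comm]
          refine Finset.sum_congr rfl fun f _ => ?_
          rw [← Finset.sum_filter, Finset.sum_const, nsmul_eq_mul]
      _ ≤ ∑ f ∈ i.2, (2 * D) * p ^ (i.2.card + 1) := by
          gcongr with f hf
          have h : ((I.filter fun j => j.2.card = 2 ∧ f ∈ j.2).card : ℝ) ≤ 2 * maxDeg H := by
            exact_mod_cast card_pairs_containing_le f
          linarith
      _ = i.2.card * ((2 * D) * p ^ (i.2.card + 1)) := by simp
      _ ≤ 2 * ((2 * D) * p ^ (i.2.card + 1)) := by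
          gcongr
          exact_mod_cast card_le_two (Finset.mem_sigma.1 hi).2
      _ = 4 * D * p * p ^ i.2.card := by ring
  calc _ ≤ ∑ i ∈ I, 4 * D * p * p ^ i.2.card := Finset.sum_le_sum hrow
    _ = ∑ e ∈ H, 4 * D * p * ∑ A ∈ forb O G' e, p ^ A.card := by
        rw [hI, Finset.sum_sigma]
        simp only [Finset.mul_sum]
    _ ≤ ∑ e ∈ H, 4 * D * p * 1 := by
        refine Finset.sum_le_sum fun e he => ?_
        have := hXY e he
        gcongr
    _ = _ := by simp

lemma sum_clash_singles_le (hp0 : 0 ≤ p) (hp1 : p ≤ 1) {M : ℝ}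
    (hM : ∀ e ∈ H, ((sharedSingles O G' H e).card : ℝ) ≤ M) :
    ∑ i ∈ H.sigma (forb O G'), ∑ j ∈ H.sigma (forb O G'),
      (if j ≠ i ∧ i.2.card ≠ 2 ∧ j.2.card ≠ 2 then clash p i.2 j.2 else 0)
        ≤ H.card * (p * M) := by
  set I := H.sigma (forb O G') with hI
  have hrow : ∀ e ∈ H, ∑ A ∈ forb O G' e, ∑ j ∈ I,
      (if j ≠ ⟨e, A⟩ ∧ A.card ≠ 2 ∧ j.2.card ≠ 2 then clash p A j.2 else 0) ≤ p * M := by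
    intro e he
    let g : Sym2 V × Sym2 V → Finset (Sym2 V) × Σ _ : Sym2 V, Finset (Sym2 V) :=
      fun q => ({q.1}, ⟨q.2, {q.1}⟩)
    calc _ ≤ ∑ A ∈ forb O G' e, ∑ j ∈ I,
          (if (A, j) ∈ (sharedSingles O G' H e).image g then p else 0) := by
          refine Finset.sum_le_sum fun A hA => Finset.sum_le_sum fun j hj => ?_
          obtain ⟨e', B⟩ := j
          rw [hI, Finset.mem_sigma] at hj
          split_ifs with h1 h2 h2
          · rw [clash]
            split_ifs with hd
            · exact hp0
            · exact pow_le_of_le_one hp0 hp1 (Finset.card_pos.2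
                ((nonempty_of_mem_forb hA).mono Finset.subset_union_left)).ne'
          · obtain ⟨hne, hA2, hB2⟩ := h1
            obtain ⟨f, hf, rfl⟩ := exists_single_of_card hA hA2
            obtain ⟨f', hf', rfl⟩ := exists_single_of_card hj.2 hB2
            rw [clash, if_pos]
            simp only [Finset.disjoint_singleton]
            rintro rfl
            refine h2 (Finset.mem_image.2 ⟨(f, e'), ?_, rfl⟩)
            refine Finset.mem_filter.2 ⟨Finset.mem_univ _, hj.1, ?_, hf, hf'⟩
            rintro rfl
            exact hne rfl
          · exact hp0
          · exact le_rfl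
      _ = ∑ x ∈ forb O G' e ×ˢ I,
          (if x ∈ (sharedSingles O G' H e).image g then p else 0) := by
          rw [Finset.sum_product]
      _ ≤ ∑ x ∈ (sharedSingles O G' H e).image g, p := by
          rw [← Finset.sum_filter]
          refine Finset.sum_le_sum_of_subset_of_nonneg (fun x hx => (Finset.mem_filter.1 hx).2)
            fun _ _ _ => hp0
      _ = ((sharedSingles O G' H e).image g).card * p := by simp
      _ ≤ (sharedSingles O G' H e).card * p := by
          gcongr
          exact Finset.card_image_le
      _ ≤ p * M := by
          rw [mul_comm]
          have := hM e he
          gcongr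
  rw [hI, Finset.sum_sigma]
  calc _ ≤ ∑ e ∈ H, p * M := Finset.sum_le_sum hrow
    _ = _ := by simp

lemma sum_clash_le (hdisj : O ∩ G' = ∅) (hp0 : 0 ≤ p) (hp1 : p ≤ 1)
    (hD : (maxDeg H : ℝ) ≤ D) (hXY : ∀ e ∈ H, ∑ A ∈ forb O G' e, p ^ A.card ≤ 1) {M : ℝ}
    (hM : ∀ e ∈ H, ((sharedSingles O G' H e).card : ℝ) ≤ M) :
    ∑ i ∈ H.sigma (forb O G'), ∑ j ∈ (H.sigma (forb O G')).erase i, clash p i.2 j.2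
      ≤ H.card * (p * (8 * D + M)) := by
  have h1 := sum_clash_pairs_le hdisj hp0 hp1 hD hXY
  have h2 := sum_clash_singles_le hp0 hp1 hM
  set I := H.sigma (forb O G')
  have h3 : ∑ i ∈ I, ∑ j ∈ I, (if i ≠ j ∧ i.2.card = 2 then clash p j.2 i.2 else 0)
      ≤ H.card * (4 * D * p) := by
    rw [Finset.sum_comm]
    exact h1
  have h4 : ∑ i ∈ I, ∑ j ∈ I.erase i, clash p i.2 j.2 ≤
      ∑ i ∈ I, ∑ j ∈ I, (if j ≠ i ∧ j.2.card = 2 then clash p i.2 j.2 else 0) +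
      ∑ i ∈ I, ∑ j ∈ I, (if i ≠ j ∧ i.2.card = 2 then clash p j.2 i.2 else 0) +
      ∑ i ∈ I, ∑ j ∈ I,
        (if j ≠ i ∧ i.2.card ≠ 2 ∧ j.2.card ≠ 2 then clash p i.2 j.2 else 0) := by
    simp only [← Finset.sum_add_distrib]
    refine Finset.sum_le_sum fun i _ => ?_
    rw [← Finset.filter_ne', Finset.sum_filter]
    refine Finset.sum_le_sum fun j _ => ?_
    have hc := clash_nonneg hp0 i.2 j.2
    rw [clash_comm j.2 i.2]
    by_cases hij : j = i
    · simp [hij]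
    · by_cases hi2 : i.2.card = 2 <;> by_cases hj2 : j.2.card = 2 <;>
        simp [hij, Ne.symm hij, hi2, hj2, hc]
  linarith

end Clashes

lemma pOpen_eq_pr [Fintype V] [DecidableEq V] {O G' : Finset (Sym2 V)} {p : ℝ} {e : Sym2 V}
    (hdisj : O ∩ G' = ∅) (hcl : ∀ f ∈ O, ¬ Closes f G') (he : e ∈ O) :
    pOpen O G' p e = pr O p (Avoids id (forb O G' e)) := by
  rw [pOpen, pr]
  refine Finset.sum_congr rfl fun S hS => if_congr ?_ rfl rfl
  exact mem_Opp_iff hdisj hcl he (Finset.mem_powerset.1 hS)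

/-- An upper bound for the probability that all edges of `H` stay open. -/
lemma pr_subset_Opp_le [Fintype V] [DecidableEq V] {O G' H : Finset (Sym2 V)} {p t : ℝ}
    (hdisj : O ∩ G' = ∅) (hcl : ∀ f ∈ O, ¬ Closes f G') (hHO : H ⊆ O)
    (hp0 : 0 ≤ p) (hp1 : p ≤ 1 / 2)
    (ht : ∑ i ∈ H.sigma (forb O G'), ∑ j ∈ (H.sigma (forb O G')).erase i, clash p i.2 j.2
      ≤ H.card * t) :
    pr O p (fun S => H ⊆ Opp O G' S) ≤ (∏ e ∈ H, pOpen O G' p e) * Real.exp (2 * t) ^ H.card := by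
  have hp1' : p ≤ 1 := hp1.trans (by norm_num)
  have hev : pr O p (fun S => H ⊆ Opp O G' S) =
      pr O p (Avoids (fun i : Σ _ : Sym2 V, Finset (Sym2 V) => i.2) (H.sigma (forb O G'))) := by
    refine pr_congr fun S hS => ?_
    simp only [Avoids, Finset.mem_sigma, Sigma.forall, and_imp]
    refine ⟨fun h e A he hA => ?_, fun h e he => ?_⟩
    · exact (mem_Opp_iff hdisj hcl (hHO he) hS).1 (h he) A hA
    · exact (mem_Opp_iff hdisj hcl (hHO he) hS).2 (h e · he)
  have hpo : ∀ e ∈ H, ∏ A ∈ forb O G' e, (1 - p ^ A.card) ≤ pOpen O G' p e := by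
    intro e he
    refine (prod_le_pr_avoids hp0 hp1' id _ fun A hA => subset_of_mem_forb (hHO he) hA).trans
      (pOpen_eq_pr hdisj hcl (hHO he)).ge
  rw [hev]
  refine (pr_avoids_le hp0 hp1 _ _ (fun i hi => ?_) (fun i hi => ?_)).trans ?_
  · exact subset_of_mem_forb (hHO (Finset.mem_sigma.1 hi).1) (Finset.mem_sigma.1 hi).2
  · exact nonempty_of_mem_forb (Finset.mem_sigma.1 hi).2
  rw [Finset.prod_sigma, ← Real.exp_nat_mul]
  have hnn : ∀ e ∈ H, 0 ≤ ∏ A ∈ forb O G' e, (1 - p ^ A.card) := fun e _ =>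
    Finset.prod_nonneg fun A _ => sub_nonneg.2 (pow_le_one₀ hp0 hp1')
  gcongr ?_ * ?_
  · exact Finset.prod_nonneg fun e he => (hnn e he).trans (hpo e he)
  · exact Finset.prod_le_prod hnn hpo
  · rw [Real.exp_le_exp]
    linarith

lemma pOpen_pos [Fintype V] [DecidableEq V] {O G' : Finset (Sym2 V)} {p : ℝ} {e : Sym2 V}
    (hdisj : O ∩ G' = ∅) (hcl : ∀ f ∈ O, ¬ Closes f G') (he : e ∈ O)
    (hp0 : 0 ≤ p) (hp1 : p < 1) : 0 < pOpen O G' p e := by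
  have h := prod_le_pr_avoids hp0 hp1.le id (forb O G' e) fun A hA => subset_of_mem_forb he hA
  rw [pOpen_eq_pr hdisj hcl he]
  refine lt_of_lt_of_le (Finset.prod_pos fun A hA => sub_pos.2 ?_) h
  exact pow_lt_one₀ hp0 hp1 (nonempty_of_mem_forb hA).card_pos.ne'

lemma sum_weight_subset {α : Type*} [DecidableEq α] {O H : Finset α} (hHO : H ⊆ O)
    (q : α → ℝ) :
    ∑ T ∈ O.powerset, ((∏ e ∈ T, q e) * ∏ e ∈ O \ T, (1 - q e)) * (if H ⊆ T then 1 else 0)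
      = ∏ e ∈ H, q e := by
  have h := Finset.prod_add q (fun e => if e ∈ H then 0 else 1 - q e) O
  have h1 : ∏ e ∈ O, (q e + if e ∈ H then 0 else 1 - q e) = ∏ e ∈ H, q e := by
    rw [← Finset.prod_subset hHO]
    · exact Finset.prod_congr rfl fun e he => by simp [he]
    · intro e _ he
      simp [he]
  rw [← h1, h]
  refine Finset.sum_congr rfl fun T _ => ?_
  by_cases hT : H ⊆ T
  · rw [if_pos hT, mul_one]
    congr 1
    refine Finset.prod_congr rfl fun e he => ?_
    rw [if_neg fun heH => (Finset.mem_sdiff.1 he).2 (hT heH)]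
  · obtain ⟨e, heH, heT⟩ := Finset.not_subset.1 hT
    rw [if_neg hT, mul_zero, Finset.prod_eq_zero (Finset.mem_sdiff.2 ⟨hHO heH, heT⟩) (by simp [heH]),
      mul_zero]

lemma jointProb_eq [Fintype V] [DecidableEq V] {O G' H K : Finset (Sym2 V)} (hHO : H ⊆ O)
    (p : ℝ) (q : Sym2 V → ℝ) :
    jointProb O p q (fun S T => H ⊆ T ∩ Opp O G' S ∧ K ⊆ S) =
      pr O p (fun S => K ⊆ S ∧ H ⊆ Opp O G' S) * ∏ e ∈ H, q e := by
  rw [jointProb, pr, Finset.sum_mul]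
  refine Finset.sum_congr rfl fun S _ => ?_
  rw [← sum_weight_subset hHO q, Finset.mul_sum]
  refine Finset.sum_congr rfl fun T _ => ?_
  simp only [Finset.subset_inter_iff]
  by_cases h1 : H ⊆ T <;> by_cases h2 : H ⊆ Opp O G' S <;> by_cases h3 : K ⊆ S <;>
    simp [h1, h2, h3]

lemma Opp_anti [DecidableEq V] {O G' S T : Finset (Sym2 V)} (hST : S ⊆ T) :
    Opp O G' T ⊆ Opp O G' S := by
  intro f hf
  simp only [Opp, Finset.mem_filter, Finset.mem_sdiff] at hf ⊢
  refine ⟨⟨hf.1.1, fun h => hf.1.2 (hST h)⟩, ?_⟩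
  rintro ⟨x, y, w, hxy, rfl, h1, h2⟩
  exact hf.2 ⟨x, y, w, hxy, rfl, Finset.union_subset_union_right hST h1,
    Finset.union_subset_union_right hST h2⟩

open Filter Asymptotics in
lemma eventually_growth {δ : ℝ} (hδ : 0 < δ) :
    ∀ᶠ n : ℕ in atTop, 1 ≤ Real.log n ∧ 24 ≤ (n : ℝ) ^ (δ / 4) ∧
      24 * Real.log n ^ 10 ≤ ((n : ℝ) ^ (δ / 4)) ^ 2 := by
  have h1 : ∀ᶠ x : ℝ in atTop, 1 ≤ Real.log x := Real.tendsto_log_atTop.eventually_ge_atTop 1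
  have h2 : ∀ᶠ x : ℝ in atTop, 24 ≤ x ^ (δ / 4) :=
    (tendsto_rpow_atTop (by positivity)).eventually_ge_atTop 24
  have h3 := (isLittleO_log_rpow_rpow_atTop (10 : ℝ) (s := δ / 2) (by positivity)).bound
    (c := 1 / 24) (by norm_num)
  refine (tendsto_natCast_atTop_atTop (R := ℝ)).eventually (p := fun x => 1 ≤ Real.log x ∧
    24 ≤ x ^ (δ / 4) ∧ 24 * Real.log x ^ 10 ≤ (x ^ (δ / 4)) ^ 2) ?_
  filter_upwards [h1, h2, h3, eventually_gt_atTop 0] with x h1 h2 h3 hx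
  refine ⟨h1, h2, ?_⟩
  have e1 : Real.log x ^ (10 : ℝ) = Real.log x ^ 10 := by
    exact_mod_cast Real.rpow_natCast (Real.log x) 10
  have e2 : x ^ (δ / 2) = (x ^ (δ / 4)) ^ 2 := by
    rw [← Real.rpow_natCast, ← Real.rpow_mul hx.le]
    congr 1
    push_cast
    ring
  rw [e1, e2, Real.norm_of_nonneg (by positivity), Real.norm_of_nonneg (by positivity)] at h3
  linarith

lemma exp_error_le {D L p : ℝ} (hD : 24 ≤ D) (hL : 24 * L ≤ D ^ 2) (hL0 : 0 ≤ L) (hp0 : 0 ≤ p)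
    (hp : p ≤ (D ^ 4)⁻¹) :
    Real.exp (2 * (p * (8 * D + 2 * (2 * D + D * L + D ^ 2)))) ≤ 1 + D⁻¹ := by
  have hD0 : 0 < D := by linarith
  set t := 2 * (p * (8 * D + 2 * (2 * D + D * L + D ^ 2))) with ht
  have ht0 : 0 ≤ t := by positivity
  have htD : t ≤ D⁻¹ / 2 := by
    calc t ≤ 2 * ((D ^ 4)⁻¹ * (8 * D + 2 * (2 * D + D * L + D ^ 2))) := by
          rw [ht]; gcongr
      _ = (D ^ 3)⁻¹ * (24 + 4 * L + 4 * D) := by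
          field_simp
          ring
      _ ≤ (D ^ 3)⁻¹ * (D ^ 2 / 2) := by
          gcongr
          nlinarith
      _ = D⁻¹ / 2 := by
          field_simp
  have hD1 : D⁻¹ ≤ 1 := inv_le_one_of_one_le₀ (by linarith)
  have h := Real.abs_exp_sub_one_le (x := t) (by rw [abs_of_nonneg ht0]; linarith)
  rw [abs_of_nonneg ht0] at h
  have := (abs_le.1 h).2
  linarith

/-- **Lemma 5.1 of the paper (probability of small subgraphs).**
Fix `δ ∈ (0,1/8)`.  For all large `n`: let `[n]` be partitioned into parts (the fibres of
`c`), and let `O, G'` be disjoint graphs such that no edge of `O` forms a triangle with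
two edges of `G'`, `O` has no edge inside a part and at most one edge between any two
parts, and `|N_{G'}(x) ∩ N_{G'}(y)| ≤ (log n)^{10} − 2` for `x, y` in distinct parts.
Suppose `0 < p ≤ n^{−δ}` and `p²X(e) + pY(e) ≤ (log n)^{−9}` for every `e ∈ O`.  Run the
step of the process: `G₁ ⊆ O` is `p`-random, `O'' = {f ∈ O \ G₁ : f` forms no triangle
with two edges of `G' ∪ G₁}`, `s = min_{f∈O} P(f ∈ O'')`, `q_e = s/P(e ∈ O'')`, `Q ⊆ O`
is `q`-random independent of `G₁`, and `O₁ = Q ∩ O''`.  Then for all `H, K ⊆ O` with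
`Δ(H), Δ(K) ≤ n^{δ/4}` and `Δ(G'[V(H)]) ≤ n^{δ/4}`,
`P(H ⊆ O₁ ∧ K ⊆ G₁) ≤ (1 + n^{−δ/4})^{e(H)}·s^{e(H)}·p^{e(K)}`. -/
theorem prob_small_subgraphs :
    ∀ δ : ℝ, 0 < δ → δ < 1 / 8 →
      ∃ n₀ : ℕ, ∀ n : ℕ, n₀ ≤ n →
        ∀ (c : Fin n → ℕ) (O G' : Finset (Sym2 (Fin n))),
          O ∩ G' = ∅ →
          (∀ f ∈ O, ¬ Closes f G') →
          (∀ f ∈ O, ∀ x y : Fin n, f = s(x, y) → c x ≠ c y) →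
          (∀ f ∈ O, ∀ g ∈ O, Sym2.map c f = Sym2.map c g → f = g) →
          (∀ x y : Fin n, c x ≠ c y →
            (((Finset.univ.filter fun z => s(x, z) ∈ G' ∧ s(y, z) ∈ G').card : ℝ))
              ≤ (Real.log n) ^ 10 - 2) →
          ∀ p : ℝ, 0 < p → p ≤ (n : ℝ) ^ (-δ) →
            (∀ e ∈ O,
              p ^ 2 * (X (↑O : Set (Sym2 (Fin n))) e : ℝ)
                + p * (Y (↑O : Set (Sym2 (Fin n))) (↑G' : Set (Sym2 (Fin n))) e : ℝ)
                ≤ ((Real.log n) ^ 9)⁻¹) →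
          ∀ hO : O.Nonempty,
          ∀ H K : Finset (Sym2 (Fin n)), H ⊆ O → K ⊆ O →
            (maxDeg H : ℝ) ≤ (n : ℝ) ^ (δ / 4) →
            (maxDeg K : ℝ) ≤ (n : ℝ) ^ (δ / 4) →
            (maxDeg (induce G' (verts H)) : ℝ) ≤ (n : ℝ) ^ (δ / 4) →
            jointProb O p
                (fun e => O.inf' hO (pOpen O G' p) / pOpen O G' p e)
                (fun S T => H ⊆ T ∩ Opp O G' S ∧ K ⊆ S)
              ≤ (1 + (n : ℝ) ^ (-(δ / 4))) ^ H.card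
                  * (O.inf' hO (pOpen O G' p)) ^ H.card * p ^ K.card := by
  intro δ hδ0 _
  obtain ⟨n₀, hn₀⟩ := Filter.eventually_atTop.1 (eventually_growth hδ0)
  refine ⟨max n₀ 1, fun n hn c O G' hdisj hcl _ hpart hcommon p hp0 hp hXY hO H K hHO hKO
    hDH _ hDG => ?_⟩
  obtain ⟨hlog, hD, hL⟩ := hn₀ n ((le_max_left _ _).trans hn)
  have hnpos : (0 : ℝ) < n := by
    exact_mod_cast (le_max_right n₀ 1).trans hn
  set D : ℝ := (n : ℝ) ^ (δ / 4) with hDdef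
  have hD0 : 0 < D := by linarith
  have hpD : p ≤ (D ^ 4)⁻¹ := by
    refine hp.trans (le_of_eq ?_)
    rw [Real.rpow_neg hnpos.le, hDdef, ← Real.rpow_natCast, ← Real.rpow_mul hnpos.le]
    congr 2
    push_cast
    ring
  have hp1 : p ≤ 1 / 2 := by
    refine hpD.trans ?_
    rw [one_div]
    refine inv_anti₀ (by norm_num) ?_
    exact (by linarith : (2 : ℝ) ≤ D).trans (le_self_pow₀ (by linarith) (by norm_num))
  have hε : (n : ℝ) ^ (-(δ / 4)) = D⁻¹ := Real.rpow_neg hnpos.le _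
  have hsum : ∀ e ∈ H, ∑ A ∈ forb O G' e, p ^ A.card ≤ 1 := fun e he =>
    (sum_forb_le hp0.le).trans ((hXY e (hHO he)).trans
      (inv_le_one_of_one_le₀ (one_le_pow₀ hlog)))
  have hL0 : 0 ≤ Real.log n ^ 10 := by positivity
  have hshared : ∀ e ∈ H, ((sharedSingles O G' H e).card : ℝ) ≤
      2 * (2 * D + D * Real.log n ^ 10 + D ^ 2) := by
    refine fun e he => card_sharedSingles_le hHO hL0 (fun x y w hxy hxw hwy => ?_) hDH hDG he
    refine (hcommon y w fun hc => hwy ?_).trans (by linarith)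
    have h := hpart _ hxy _ hxw (by simp [hc])
    exact (Sym2.congr_right.1 h).symm
  have hclash := sum_clash_le hdisj hp0.le (hp1.trans (by norm_num)) hDH hsum hshared
  have hopen := pr_subset_Opp_le hdisj hcl hHO hp0.le hp1 hclash
  have hexp := exp_error_le hD hL hL0 hp0.le hpD
  have hpos : ∀ e ∈ O, 0 < pOpen O G' p e := fun e he =>
    pOpen_pos hdisj hcl he hp0.le (by linarith)
  have hharris := pr_and_le (O := O) hp0.le (hp1.trans (by norm_num))
    (E := fun S => K ⊆ S) (F := fun S => H ⊆ Opp O G' S)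
    (fun S T hST h => h.trans hST) (fun S T hST h => h.trans (Opp_anti hST))
  rw [pr_subset hKO] at hharris
  rw [hε, jointProb_eq hHO]
  set s := O.inf' hO (pOpen O G' p)
  have hs0 : 0 < s := (Finset.lt_inf'_iff hO).2 hpos
  have hprod0 : 0 < ∏ e ∈ H, pOpen O G' p e := Finset.prod_pos fun e he => hpos e (hHO he)
  rw [Finset.prod_div_distrib, Finset.prod_const]
  calc _ ≤ (p ^ K.card * ((∏ e ∈ H, pOpen O G' p e) * (1 + D⁻¹) ^ H.card)) *
        (s ^ H.card / ∏ e ∈ H, pOpen O G' p e) := by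
        gcongr
        refine hharris.trans ?_
        gcongr
        refine hopen.trans ?_
        gcongr
    _ = _ := by
        field_simp

end Stmt5
end

section
/- Fix δ ∈ (0,1/8). There exists n₀ = n₀(δ) such that the following holds for all n ≥ n₀. Let V = [n] be partitioned into parts V₁,…,V_m, and let O and G' be graphs on V with O ∩ G' = ∅ such that O contains no edges within a part and at most one edge between any two distinct parts, and |N_{G'}(y) ∩ N_{G'}(z)| ≤ (log n)^{10} − 2 whenever y and z lie in distinct parts. Let H ⊆ O be a subgraph with Δ(H) ≤ n^{δ/4} and Δ(G'[V(H)]) ≤ n^{δ/4}. Then for every e ∈ H: Σ_{f ∈ H, f ≠ e} |𝒴(e) ∩ 𝒴(f)| ≤ 8·n^{δ/2}. -/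
open scoped Classical

namespace Stmt6

variable {V : Type*}

/-- `e`, `f`, `g` are the three edges of a triangle.  (With this parametrization the
predicate is symmetric in `f` and `g`.) -/
def FormTriangle (e f g : Sym2 V) : Prop :=
  ∃ x y z : V, x ≠ y ∧ x ≠ z ∧ y ≠ z ∧ e = s(x, y) ∧ f = s(x, z) ∧ g = s(y, z)

/-- `e` and `f ∈ O` span a clopen triangle: the third edge of the triangle lies in `G'`. -/
def SpanClopen (O G' : Set (Sym2 V)) (e f : Sym2 V) : Prop :=
  f ∈ O ∧ ∃ g ∈ G', FormTriangle e f g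

/-- `𝒴(e) = {f ∈ O : e, f span a clopen triangle} ∪ {e}`. -/
def Yset (O G' : Set (Sym2 V)) (e : Sym2 V) : Set (Sym2 V) :=
  {f | SpanClopen O G' e f} ∪ {e}

/-- The degree of `x` in the graph (edge set) `H`. -/
noncomputable def degF [Fintype V] (H : Finset (Sym2 V)) (x : V) : ℕ :=
  (Finset.univ.filter fun y => s(x, y) ∈ H).card

/-- The maximum degree `Δ(H)`. -/
noncomputable def maxDeg [Fintype V] (H : Finset (Sym2 V)) : ℕ :=
  Finset.univ.sup (degF H)

/-- `V(H)`: the set of vertices covered by the edges of `H`. -/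
noncomputable def verts [Fintype V] (H : Finset (Sym2 V)) : Finset V :=
  Finset.univ.filter fun x => ∃ y, s(x, y) ∈ H

/-- `G[S]`: the subgraph of `G` induced on the vertex set `S`. -/
noncomputable def induce (G : Finset (Sym2 V)) (S : Finset V) : Finset (Sym2 V) :=
  G.filter fun a => ∀ x ∈ a, x ∈ S

/-- An element of `𝒴(ab)` other than `ab` shares one endpoint with `ab`, and its other endpoint
is joined in `G'` to the remaining endpoint of `ab`. -/
lemma exists_of_mem_Yset {O G' : Set (Sym2 V)} {a b : V} {k : Sym2 V}
    (hk : k ∈ Yset O G' s(a, b)) :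
    k = s(a, b) ∨ k ∈ O ∧
      ∃ z, k = s(a, z) ∧ s(b, z) ∈ G' ∨ k = s(b, z) ∧ s(a, z) ∈ G' := by
  rcases hk with ⟨hkO, g, hg, x, y, z, -, -, -, he, rfl, rfl⟩ | hk
  · right
    rcases Sym2.eq_iff.1 he with ⟨rfl, rfl⟩ | ⟨rfl, rfl⟩
    · exact ⟨hkO, z, Or.inl ⟨rfl, hg⟩⟩
    · exact ⟨hkO, z, Or.inr ⟨rfl, hg⟩⟩
  · exact Or.inl hk

lemma card_le_maxDeg_of_mem [Fintype V] {H S : Finset (Sym2 V)} {x : V}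
    (hS : ∀ f ∈ S, f ∈ H ∧ x ∈ f) : S.card ≤ maxDeg H := by
  have hsub : S ⊆
      (Finset.univ.filter fun y => s(x, y) ∈ H).image fun y => s(x, y) := by
    intro f hf
    obtain ⟨hfH, y, rfl⟩ := hS f hf
    exact Finset.mem_image.2 ⟨y, by simpa using hfH, rfl⟩
  calc _ ≤ _ := Finset.card_le_card hsub
    _ ≤ degF H x := Finset.card_image_le
    _ ≤ maxDeg H := Finset.le_sup (f := degF H) (Finset.mem_univ x)

/-- For two edges `xy`, `xz` of `O`, apart from the two edges themselves `𝒴(xy) ∩ 𝒴(xz)` only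
contains edges `xw` with `w ∈ C`, where `C` contains every common `G'`-neighbour of `y` and `z`. -/
lemma ncard_Yset_inter_le_of_common_vertex {O G' : Set (Sym2 V)}
    (hOG : Disjoint O G') {x y z : V} (hxy : s(x, y) ∈ O) (hxz : s(x, z) ∈ O)
    (hx : x ≠ y) (hx' : x ≠ z) (hyz : y ≠ z)
    {C : Finset V} (hC : ∀ w, s(y, w) ∈ G' → s(z, w) ∈ G' → w ∈ C) :
    (Yset O G' s(x, y) ∩ Yset O G' s(x, z)).ncard ≤ C.card + 2 := by
  have hsub : Yset O G' s(x, y) ∩ Yset O G' s(x, z) ⊆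
      ((C.image fun w => s(x, w)) ∪ {s(x, y), s(x, z)} : Finset (Sym2 V)) := by
    rintro k ⟨hk₁, hk₂⟩
    simp only [Finset.coe_union, Set.mem_union, Finset.mem_coe, Finset.mem_image,
      Finset.mem_insert, Finset.mem_singleton]
    rcases exists_of_mem_Yset hk₁ with h | ⟨-, u, h₁⟩
    · exact Or.inr (Or.inl h)
    rcases exists_of_mem_Yset hk₂ with h | ⟨-, v, h₂⟩
    · exact Or.inr (Or.inr h)
    rcases h₁ with ⟨rfl, h₁⟩ | ⟨rfl, h₁⟩ <;> rcases h₂ with ⟨h, h₂⟩ | ⟨h, h₂⟩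
    · obtain rfl : u = v := Sym2.congr_right.1 h
      exact Or.inl ⟨u, hC u h₁ h₂, rfl⟩
    · rcases Sym2.eq_iff.1 h with ⟨h, -⟩ | ⟨-, rfl⟩
      · exact absurd h hx'
      · exact Or.inr (Or.inr rfl)
    · rcases Sym2.eq_iff.1 h with ⟨h, -⟩ | ⟨-, rfl⟩
      · exact absurd h.symm hx
      · exact Or.inr (Or.inl Sym2.eq_swap)
    · rcases Sym2.eq_iff.1 h with ⟨h, -⟩ | ⟨-, rfl⟩
      · exact absurd h hyz
      · exact absurd h₁ (hOG.notMem_of_mem_left hxz)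
  calc _ ≤ _ := Set.ncard_le_ncard hsub (Finset.finite_toSet _)
    _ = _ := Set.ncard_coe_finset _
    _ ≤ _ := Finset.card_union_le _ _
    _ ≤ C.card + 2 := add_le_add Finset.card_image_le Finset.card_le_two

/-- For disjoint pairs `xy`, `zw`, an element of `𝒴(xy) ∩ 𝒴(zw)` is one of the four crossing pairs,
and forces `G'`-edges from `x` and `y` to the pair `zw`. -/
lemma mem_Yset_inter_of_disjoint {O G' : Set (Sym2 V)} {x y z w : V}
    (hxz : x ≠ z) (hxw : x ≠ w) (hyz : y ≠ z) (hyw : y ≠ w) {k : Sym2 V}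
    (hk₁ : k ∈ Yset O G' s(x, y)) (hk₂ : k ∈ Yset O G' s(z, w)) :
    (k = s(x, z) ∨ k = s(x, w) ∨ k = s(y, z) ∨ k = s(y, w)) ∧
      (s(x, z) ∈ G' ∧ s(y, w) ∈ G' ∨ s(x, w) ∈ G' ∧ s(y, z) ∈ G') := by
  rcases exists_of_mem_Yset hk₁ with rfl | ⟨-, u, h₁⟩
  · rcases exists_of_mem_Yset hk₂ with h | ⟨-, v, ⟨h, -⟩ | ⟨h, -⟩⟩ <;>
      rcases Sym2.eq_iff.1 h with ⟨h, h'⟩ | ⟨h, h'⟩ <;> contradiction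
  rcases exists_of_mem_Yset hk₂ with rfl | ⟨-, v, h₂⟩
  · rcases h₁ with ⟨h, -⟩ | ⟨h, -⟩ <;>
      rcases Sym2.eq_iff.1 h.symm with ⟨h, h'⟩ | ⟨h, h'⟩ <;> contradiction
  · rcases h₁ with ⟨rfl, h₁⟩ | ⟨rfl, h₁⟩ <;> rcases h₂ with ⟨h, h₂⟩ | ⟨h, h₂⟩ <;>
      rcases Sym2.eq_iff.1 h with ⟨h, h'⟩ | ⟨h, h'⟩ <;> subst_vars <;>
      simp_all [Sym2.eq_swap]

/-- A set `S` of edges of `H` disjoint from `xy ∈ H` contributes at most `4 Δ(G'[V(H)])²`. -/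
lemma sum_ncard_Yset_inter_disjoint_le [Fintype V] (O G' : Finset (Sym2 V))
    {H S : Finset (Sym2 V)} {x y : V} (he : s(x, y) ∈ H)
    (hS : ∀ f ∈ S, f ∈ H ∧ x ∉ f ∧ y ∉ f) :
    ∑ f ∈ S,
      (Yset (O : Set (Sym2 V)) G' s(x, y) ∩ Yset (O : Set (Sym2 V)) G' f).ncard ≤
      4 * maxDeg (induce G' (verts H)) ^ 2 := by
  set D := maxDeg (induce G' (verts H)) with hD
  let N : V → Finset V := fun a => Finset.univ.filter fun b => s(a, b) ∈ induce G' (verts H)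
  let P : Finset (Sym2 V) := (N x ×ˢ N y).image fun p => s(p.1, p.2)
  have hN : ∀ a, (N a).card ≤ D := fun a =>
    Finset.le_sup (f := degF (induce G' (verts H))) (Finset.mem_univ a)
  have hP : P.card ≤ D ^ 2 := by
    calc P.card ≤ (N x ×ˢ N y).card := Finset.card_image_le
      _ = (N x).card * (N y).card := Finset.card_product _ _
      _ ≤ D * D := Nat.mul_le_mul (hN x) (hN y)
      _ = D ^ 2 := (sq D).symm
  have hmem : ∀ {a b : V}, a ∈ verts H → b ∈ verts H → s(a, b) ∈ G' → b ∈ N a := by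
    intro a b ha hb hab
    simp only [N, induce, Finset.mem_filter, Finset.mem_univ, true_and, Sym2.mem_iff]
    exact ⟨hab, by rintro c (rfl | rfl) <;> assumption⟩
  have hverts : ∀ {a b : V}, s(a, b) ∈ H → a ∈ verts H ∧ b ∈ verts H := by
    intro a b hab
    simp only [verts, Finset.mem_filter, Finset.mem_univ, true_and]
    exact ⟨⟨b, hab⟩, ⟨a, Sym2.eq_swap ▸ hab⟩⟩
  have hterm : ∀ f ∈ S,
      (Yset (O : Set (Sym2 V)) G' s(x, y) ∩ Yset (O : Set (Sym2 V)) G' f).ncard ≤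
        if f ∈ P then 4 else 0 := by
    intro f hf
    induction f with | _ z w
    replace hf := hS _ hf
    simp only [Sym2.mem_iff, not_or] at hf
    obtain ⟨hfH, ⟨hxz, hxw⟩, hyz, hyw⟩ := hf
    have key := fun k hk₁ hk₂ => mem_Yset_inter_of_disjoint (O := (O : Set (Sym2 V)))
      (G' := (G' : Set (Sym2 V))) hxz hxw hyz hyw (k := k) hk₁ hk₂
    split_ifs with hfP
    · have hsub : Yset (O : Set (Sym2 V)) G' s(x, y) ∩ Yset (O : Set (Sym2 V)) G' s(z, w) ⊆
          ({s(x, z), s(x, w), s(y, z), s(y, w)} : Finset (Sym2 V)) := by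
        rintro k ⟨hk₁, hk₂⟩
        simpa using (key k hk₁ hk₂).1
      calc _ ≤ _ := Set.ncard_le_ncard hsub (Finset.finite_toSet _)
        _ = _ := Set.ncard_coe_finset _
        _ ≤ 4 := Finset.card_le_four
    · rw [Nat.le_zero, Set.ncard_eq_zero (Set.toFinite _), Set.eq_empty_iff_forall_notMem]
      rintro k ⟨hk₁, hk₂⟩
      apply hfP
      obtain ⟨hx, hy⟩ := hverts he
      obtain ⟨hz, hw⟩ := hverts hfH
      rcases (key k hk₁ hk₂).2 with ⟨h₁, h₂⟩ | ⟨h₁, h₂⟩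
      · exact Finset.mem_image.2
          ⟨(z, w), Finset.mem_product.2 ⟨hmem hx hz h₁, hmem hy hw h₂⟩, rfl⟩
      · exact Finset.mem_image.2
          ⟨(w, z), Finset.mem_product.2 ⟨hmem hx hw h₁, hmem hy hz h₂⟩, Sym2.eq_swap⟩
  calc _ ≤ _ := Finset.sum_le_sum hterm
    _ = (S.filter (· ∈ P)).card * 4 := by
      rw [← Finset.sum_filter, Finset.sum_const, smul_eq_mul]
    _ ≤ P.card * 4 := Nat.mul_le_mul_right _ <| Finset.card_le_card fun f hf =>
      (Finset.mem_filter.1 hf).2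
    _ ≤ 4 * D ^ 2 := by omega

lemma exists_forall_log_pow_le_rpow {ε : ℝ} (hε : 0 < ε) (k : ℕ) :
    ∃ n₀ : ℕ, ∀ n : ℕ, n₀ ≤ n → Real.log n ^ k ≤ (n : ℝ) ^ ε := by
  have h := ((isLittleO_log_rpow_rpow_atTop (k : ℝ) hε).bound one_pos).natCast_atTop
  obtain ⟨n₀, hn₀⟩ := Filter.eventually_atTop.1 h
  refine ⟨n₀, fun n hn => ?_⟩
  have := hn₀ n hn
  rw [one_mul, Real.rpow_natCast, Real.norm_of_nonneg (Real.rpow_nonneg n.cast_nonneg _)] at this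
  exact (le_abs_self _).trans this

/-- **Observation 5.3 of the paper.**
Fix `δ ∈ (0,1/8)`.  For all large `n`: let `[n]` be partitioned into parts (the fibres of
`c`), and let `O, G'` be graphs with `O ∩ G' = ∅` such that `O` has no edge inside a part
and at most one edge between any two parts, and `|N_{G'}(y) ∩ N_{G'}(z)| ≤ (log n)^{10} − 2`
for `y, z` in distinct parts.  If `H ⊆ O` satisfies `Δ(H) ≤ n^{δ/4}` and
`Δ(G'[V(H)]) ≤ n^{δ/4}`, then for every `e ∈ H`,
`Σ_{f ∈ H, f ≠ e} |𝒴(e) ∩ 𝒴(f)| ≤ 8·n^{δ/2}`. -/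
theorem sum_Yset_intersections :
    ∀ δ : ℝ, 0 < δ → δ < 1 / 8 →
      ∃ n₀ : ℕ, ∀ n : ℕ, n₀ ≤ n →
        ∀ (c : Fin n → ℕ) (O G' : Finset (Sym2 (Fin n))),
          O ∩ G' = ∅ →
          (∀ f ∈ O, ∀ x y : Fin n, f = s(x, y) → c x ≠ c y) →
          (∀ f ∈ O, ∀ g ∈ O, Sym2.map c f = Sym2.map c g → f = g) →
          (∀ y z : Fin n, c y ≠ c z →
            (((Finset.univ.filter fun w => s(y, w) ∈ G' ∧ s(z, w) ∈ G').card : ℝ))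
              ≤ (Real.log n) ^ 10 - 2) →
          ∀ H : Finset (Sym2 (Fin n)), H ⊆ O →
            (maxDeg H : ℝ) ≤ (n : ℝ) ^ (δ / 4) →
            (maxDeg (induce G' (verts H)) : ℝ) ≤ (n : ℝ) ^ (δ / 4) →
            ∀ e ∈ H,
              (∑ f ∈ H.erase e,
                  ((Yset (↑O : Set (Sym2 (Fin n))) (↑G' : Set (Sym2 (Fin n))) e ∩
                      Yset (↑O : Set (Sym2 (Fin n))) (↑G' : Set (Sym2 (Fin n))) f).ncard : ℝ))
                ≤ 8 * (n : ℝ) ^ (δ / 2) := by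
  intro δ hδ _
  obtain ⟨n₀, hn₀⟩ := exists_forall_log_pow_le_rpow (ε := δ / 4) (by linarith) 10
  refine ⟨n₀, fun n hn c O G' hOG hO hO' hcodeg H hHO hH hG e he => ?_⟩
  have hlog := hn₀ n hn
  set t : ℝ := (n : ℝ) ^ (δ / 4) with ht
  have ht0 : 0 ≤ t := Real.rpow_nonneg n.cast_nonneg _
  have htt : (n : ℝ) ^ (δ / 2) = t ^ 2 := by
    rw [ht, ← Real.rpow_mul_natCast n.cast_nonneg]
    congr 1
    push_cast
    ring
  have hOG' : Disjoint (O : Set (Sym2 (Fin n))) G' :=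
    Finset.disjoint_coe.2 (Finset.disjoint_iff_inter_eq_empty.2 hOG)
  induction e with | _ x y
  have hadj : ∀ a b : Fin n, s(a, b) ∈ H → ∀ f ∈ H, f ≠ s(a, b) → a ∈ f →
      ((Yset (O : Set (Sym2 (Fin n))) G' s(a, b) ∩
        Yset (O : Set (Sym2 (Fin n))) G' f).ncard : ℝ) ≤ t := by
    rintro a b hab f hf hne ⟨z, rfl⟩
    have hbz : c b ≠ c z := fun h =>
      hne (hO' _ (hHO hf) _ (hHO hab) (by simp [h]))
    have hcab := hO _ (hHO hab) a b rfl
    have hcaz := hO _ (hHO hf) a z rfl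
    have h := ncard_Yset_inter_le_of_common_vertex hOG' (hHO hab) (hHO hf)
      (ne_of_apply_ne c hcab) (ne_of_apply_ne c hcaz) (ne_of_apply_ne c hbz)
      (C := Finset.univ.filter fun w => s(b, w) ∈ G' ∧ s(z, w) ∈ G')
      fun w h₁ h₂ => Finset.mem_filter.2 ⟨Finset.mem_univ w, h₁, h₂⟩
    have h' := (Nat.cast_le (α := ℝ)).2 h
    push_cast at h'
    linarith [hcodeg b z hbz]
  rw [htt, ← Finset.sum_filter_add_sum_filter_not _ (fun f => x ∈ f ∨ y ∈ f)]
  have hmeet : ∑ f ∈ (H.erase s(x, y)).filter (fun f => x ∈ f ∨ y ∈ f),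
      ((Yset (O : Set (Sym2 (Fin n))) G' s(x, y) ∩
        Yset (O : Set (Sym2 (Fin n))) G' f).ncard : ℝ) ≤ 2 * t * t := by
    have hcard : ((H.erase s(x, y)).filter (fun f => x ∈ f ∨ y ∈ f)).card ≤
        maxDeg H + maxDeg H := by
      rw [Finset.filter_or]
      refine (Finset.card_union_le _ _).trans (add_le_add ?_ ?_) <;>
      exact card_le_maxDeg_of_mem fun f hf =>
        ⟨Finset.mem_of_mem_erase (Finset.mem_filter.1 hf).1, (Finset.mem_filter.1 hf).2⟩
    have hcard' : (((H.erase s(x, y)).filter (fun f => x ∈ f ∨ y ∈ f)).card : ℝ) ≤ 2 * t := by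
      have : (((H.erase s(x, y)).filter (fun f => x ∈ f ∨ y ∈ f)).card : ℝ) ≤
        maxDeg H + maxDeg H := by exact_mod_cast hcard
      linarith
    refine (Finset.sum_le_card_nsmul _ _ t fun f hf => ?_).trans ?_
    · simp only [Finset.mem_filter, Finset.mem_erase] at hf
      obtain ⟨⟨hne, hfH⟩, hx | hy⟩ := hf
      · exact hadj x y he f hfH hne hx
      · rw [Sym2.eq_swap] at he hne ⊢
        exact hadj y x he f hfH hne hy
    · rw [nsmul_eq_mul]
      exact mul_le_mul_of_nonneg_right hcard' ht0
  have hdisj : ∑ f ∈ (H.erase s(x, y)).filter (fun f => ¬(x ∈ f ∨ y ∈ f)),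
      ((Yset (O : Set (Sym2 (Fin n))) G' s(x, y) ∩
        Yset (O : Set (Sym2 (Fin n))) G' f).ncard : ℝ) ≤ 4 * t ^ 2 := by
    have h := sum_ncard_Yset_inter_disjoint_le O G' he
      (S := (H.erase s(x, y)).filter (fun f => ¬(x ∈ f ∨ y ∈ f))) fun f hf =>
        ⟨Finset.mem_of_mem_erase (Finset.mem_filter.1 hf).1,
          not_or.1 (Finset.mem_filter.1 hf).2⟩
    calc _ ≤ 4 * (maxDeg (induce G' (verts H)) : ℝ) ^ 2 := by exact_mod_cast h
      _ ≤ 4 * t ^ 2 := by gcongr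
  nlinarith

end Stmt6
end

section
/- Let O be a graph on a finite vertex set V, let G' be a further graph on V, let D ≥ 0, and let H ⊆ O be a subgraph with Δ(H) ≤ D. Define the hypergraph edge families ℋ₁ = { {f} : f ∈ 𝒴(e) for some e ∈ H } and ℋ₂ = ⋃_{e∈H} 𝒳(e). Then: (i) the number of pairs (σ, τ) ∈ ℋ₁ × ℋ₂ with σ ∩ τ ≠ ∅ is at most 2·D·|ℋ₁|; and (ii) the number of pairs (σ, τ) ∈ ℋ₂ × ℋ₂ with σ ∩ τ ≠ ∅ is at most 6·D·|ℋ₂|. -/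
open scoped Classical

namespace Stmt7

variable {V : Type*}

/-- `e`, `f`, `g` are the three edges of a triangle.  (With this parametrization the
predicate is symmetric in `f` and `g`.) -/
def FormTriangle (e f g : Sym2 V) : Prop :=
  ∃ x y z : V, x ≠ y ∧ x ≠ z ∧ y ≠ z ∧ e = s(x, y) ∧ f = s(x, z) ∧ g = s(y, z)

/-- `𝒳(e)`: the set of unordered pairs `{f, g} ⊆ O` such that `e, f, g` form an open
triangle. -/
def openTrianglePairs (O : Set (Sym2 V)) (e : Sym2 V) : Set (Sym2 (Sym2 V)) :=
  {p | ∃ f g : Sym2 V, p = s(f, g) ∧ f ∈ O ∧ g ∈ O ∧ FormTriangle e f g}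

/-- `e` and `f ∈ O` span a clopen triangle: the third edge of the triangle lies in `G'`. -/
def SpanClopen (O G' : Set (Sym2 V)) (e f : Sym2 V) : Prop :=
  f ∈ O ∧ ∃ g ∈ G', FormTriangle e f g

/-- `𝒴(e) = {f ∈ O : e, f span a clopen triangle} ∪ {e}`. -/
def Yset (O G' : Set (Sym2 V)) (e : Sym2 V) : Set (Sym2 V) :=
  {f | SpanClopen O G' e f} ∪ {e}

/-- The neighbourhood of `x` in the graph (edge set) `H`. -/
def nbhd (H : Set (Sym2 V)) (x : V) : Set V := {y | s(x, y) ∈ H}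

/-- `ℋ₁`: the edges appearing in some `𝒴(e)`, `e ∈ H` (the singleton hyperedges). -/
def H1 (O G' H : Set (Sym2 V)) : Set (Sym2 V) :=
  {f | ∃ e ∈ H, f ∈ Yset O G' e}

/-- `ℋ₂ = ⋃_{e ∈ H} 𝒳(e)` (the hyperedges which are pairs of edges). -/
def H2 (O H : Set (Sym2 V)) : Set (Sym2 (Sym2 V)) :=
  {τ | ∃ e ∈ H, τ ∈ openTrianglePairs O e}

/-- If every element of `A` is related to at most `k` elements, then the number of related
pairs with first coordinate in `A` is at most `k * |A|`. -/
lemma ncard_related_pairs_le {α β : Type*} [Finite α] [Finite β] (A : Set α)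
    (R : α → β → Prop) (k : ℕ) (hk : ∀ a ∈ A, {b | R a b}.ncard ≤ k) :
    {q : α × β | q.1 ∈ A ∧ R q.1 q.2}.ncard ≤ k * A.ncard := by
  have := Fintype.ofFinite α
  have := Fintype.ofFinite β
  rw [Set.ncard_eq_toFinset_card', Set.ncard_eq_toFinset_card']
  refine Finset.card_le_mul_card_image_of_maps_to (f := Prod.fst) (by simp +contextual) k ?_
  intro a ha
  rw [Set.mem_toFinset] at ha
  refine le_trans ?_ (hk a ha)
  rw [Set.ncard_eq_toFinset_card']
  refine Finset.card_le_card_of_injOn Prod.snd ?_ ?_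
  · rintro ⟨x, y⟩ h
    simp only [Finset.coe_filter, Set.mem_toFinset, Set.mem_ofPred_eq] at h
    obtain ⟨⟨-, h⟩, rfl⟩ := h
    simpa using h
  · rintro ⟨x, y⟩ h ⟨x', y'⟩ h' hy
    simp only [Finset.coe_filter, Set.mem_ofPred_eq] at h h'
    exact Prod.ext (h.2.trans h'.2.symm) hy

/-- An open pair of `ℋ₂` through the edge `ab` is completed by an edge of `H` at `a` or `b`. -/
lemma H2_through_edge_subset (O H : Set (Sym2 V)) (a b : V) :
    {τ | τ ∈ H2 O H ∧ s(a, b) ∈ τ} ⊆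
      (fun z => s(s(a, b), s(b, z))) '' nbhd H a ∪
        (fun z => s(s(a, b), s(a, z))) '' nbhd H b := by
  rintro _ ⟨⟨_, he, f, g, rfl, -, -, x, y, z, -, -, -, rfl, rfl, rfl⟩, hab⟩
  have he' : s(y, x) ∈ H := Sym2.eq_swap (a := x) ▸ he
  simp only [Sym2.mem_iff, Sym2.eq_iff] at hab
  rcases hab with (⟨rfl, rfl⟩ | ⟨rfl, rfl⟩) | (⟨rfl, rfl⟩ | ⟨rfl, rfl⟩)
  · exact Or.inl ⟨y, he, by simp [Sym2.eq_swap]⟩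
  · exact Or.inr ⟨y, he, by simp [Sym2.eq_swap]⟩
  · exact Or.inl ⟨x, he', by simp [Sym2.eq_swap]⟩
  · exact Or.inr ⟨x, he', by simp [Sym2.eq_swap]⟩

/-- If `H` has maximum degree at most `d`, every edge lies in at most `2 * d` pairs of `ℋ₂`. -/
lemma ncard_H2_through_edge_le [Finite V] (O H : Set (Sym2 V)) (d : ℕ)
    (hd : ∀ x : V, (nbhd H x).ncard ≤ d) (f : Sym2 V) :
    {τ | τ ∈ H2 O H ∧ f ∈ τ}.ncard ≤ 2 * d := by
  induction f with | _ a b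
  calc _ ≤ _ := Set.ncard_le_ncard (H2_through_edge_subset O H a b) (Set.toFinite _)
    _ ≤ _ := Set.ncard_union_le _ _
    _ ≤ d + d := add_le_add ((Set.ncard_image_le (Set.toFinite _)).trans (hd a))
        ((Set.ncard_image_le (Set.toFinite _)).trans (hd b))
    _ = 2 * d := (two_mul d).symm

/-- If `H` has maximum degree at most `d`, every pair of edges shares an edge with at most
`4 * d` pairs of `ℋ₂`. -/
lemma ncard_H2_meeting_pair_le [Finite V] (O H : Set (Sym2 V)) (d : ℕ)
    (hd : ∀ x : V, (nbhd H x).ncard ≤ d) (σ : Sym2 (Sym2 V)) :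
    {τ | τ ∈ H2 O H ∧ ∃ g, g ∈ σ ∧ g ∈ τ}.ncard ≤ 4 * d := by
  induction σ with | _ f g
  have hsub : {τ | τ ∈ H2 O H ∧ ∃ h, h ∈ s(f, g) ∧ h ∈ τ} ⊆
      {τ | τ ∈ H2 O H ∧ f ∈ τ} ∪ {τ | τ ∈ H2 O H ∧ g ∈ τ} := by
    rintro τ ⟨hτ, h, hh, hhτ⟩
    rcases Sym2.mem_iff.mp hh with rfl | rfl
    · exact Or.inl ⟨hτ, hhτ⟩
    · exact Or.inr ⟨hτ, hhτ⟩
  have h₁ := Set.ncard_le_ncard hsub (Set.toFinite _)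
  have h₂ := Set.ncard_union_le {τ | τ ∈ H2 O H ∧ f ∈ τ} {τ | τ ∈ H2 O H ∧ g ∈ τ}
  have hf := ncard_H2_through_edge_le O H d hd f
  have hg := ncard_H2_through_edge_le O H d hd g
  omega

/-- **Observation 5.4 of the paper.**
If `H ⊆ O` has maximum degree at most `D`, then the number of pairs
`(σ, τ) ∈ ℋ₁ × ℋ₂` sharing an edge is at most `2·D·|ℋ₁|`, and the number of pairs
`(σ, τ) ∈ ℋ₂ × ℋ₂` sharing an edge is at most `6·D·|ℋ₂|`. -/
theorem hypergraph_intersection_counts [Fintype V]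
    (O G' H : Set (Sym2 V)) (hHO : H ⊆ O) (D : ℝ) (hD : 0 ≤ D)
    (hΔ : ∀ x : V, ((nbhd H x).ncard : ℝ) ≤ D) :
    (({q : Sym2 V × Sym2 (Sym2 V) |
          q.1 ∈ H1 O G' H ∧ q.2 ∈ H2 O H ∧ q.1 ∈ q.2}).ncard : ℝ)
        ≤ 2 * D * ((H1 O G' H).ncard : ℝ) ∧
    (({q : Sym2 (Sym2 V) × Sym2 (Sym2 V) |
          q.1 ∈ H2 O H ∧ q.2 ∈ H2 O H ∧ ∃ g, g ∈ q.1 ∧ g ∈ q.2}).ncard : ℝ)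
        ≤ 6 * D * ((H2 O H).ncard : ℝ) := by
  have hd : ∀ x : V, (nbhd H x).ncard ≤ ⌊D⌋₊ := fun x => Nat.le_floor (hΔ x)
  have hfloor : (⌊D⌋₊ : ℝ) ≤ D := Nat.floor_le hD
  constructor
  · have h := ncard_related_pairs_le (H1 O G' H) (fun f τ => τ ∈ H2 O H ∧ f ∈ τ) (2 * ⌊D⌋₊)
      fun f _ => ncard_H2_through_edge_le O H _ hd f
    refine (Nat.cast_le (α := ℝ).mpr h).trans ?_
    push_cast
    gcongr
  · have h := ncard_related_pairs_le (H2 O H)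
      (fun σ τ => τ ∈ H2 O H ∧ ∃ g, g ∈ σ ∧ g ∈ τ) (4 * ⌊D⌋₊)
      fun σ _ => ncard_H2_meeting_pair_le O H _ hd σ
    refine (Nat.cast_le (α := ℝ).mpr h).trans ?_
    push_cast
    gcongr
    norm_num

end Stmt7
end

section
/- Fix β ∈ (0,1). There exists n₀ = n₀(β) such that for all n ≥ n₀, all integers k with 1 ≤ k ≤ n, and every set I with |I| = k, the family Λ(I) of all sets of the form I^{(2)} \ (S₁^{(2)} ∪ ⋯ ∪ S_ℓ^{(2)}), where ℓ ≥ 0 and S₁,…,S_ℓ ⊆ I satisfy |S_i| ≥ n^{2β} for every i and Σ_i |S_i| ≤ 2·k·n^{β}, has size |Λ(I)| ≤ 2^{k·n^{2β}}. -/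
open scoped Classical

namespace Stmt8

/-- `S^{(2)}`: the unordered pairs of distinct elements of `S`, encoded as the
2-element subsets of `S`. -/
def pairs {α : Type*} (S : Finset α) : Finset (Finset α) :=
  Finset.powersetCard 2 S

/-- The family `Λ(I)` of "potential cores": all sets of the form
`I^{(2)} \ (S₁^{(2)} ∪ ⋯ ∪ S_ℓ^{(2)})` with each `Sᵢ ⊆ I`, `|Sᵢ| ≥ n^{2β}`, and
`Σᵢ |Sᵢ| ≤ 2·k·n^{β}`. -/
noncomputable def Lambda {α : Type*} (n k : ℕ) (β : ℝ) (I : Finset α) :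
    Set (Finset (Finset α)) :=
  {C | ∃ (l : ℕ) (S : Fin l → Finset α),
        (∀ i, S i ⊆ I ∧ (n : ℝ) ^ (2 * β) ≤ ((S i).card : ℝ)) ∧
        (∑ i, ((S i).card : ℝ)) ≤ 2 * k * (n : ℝ) ^ β ∧
        C = pairs I \ Finset.univ.biUnion fun i => pairs (S i)}

/-- The member of `Λ(I)` whose incidences `v ∈ Sᵢ` are listed by `f`. -/
noncomputable def decode {α : Type*} (I : Finset α) {L M : ℕ}
    (f : Fin M → Option (Fin L × I)) : Finset (Finset α) :=
  pairs I \ Finset.univ.biUnion fun i =>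
    pairs (I.filter fun v => ∃ (h : v ∈ I) (j : Fin M), f j = some (i, ⟨v, h⟩))

lemma exists_eq_some_iff_mem {T : Type*} (F : Finset T) {M : ℕ} (hF : F.card ≤ M) :
    ∃ f : Fin M → Option T, ∀ x, (∃ j, f j = some x) ↔ x ∈ F := by
  refine ⟨fun j => F.toList[(j : ℕ)]?, fun x => ?_⟩
  rw [← Finset.mem_toList, List.mem_iff_getElem?]
  refine ⟨fun ⟨j, hj⟩ => ⟨j, hj⟩, fun ⟨j, hj⟩ => ?_⟩
  obtain ⟨hlt, -⟩ := List.getElem?_eq_some_iff.1 hj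
  rw [Finset.length_toList] at hlt
  exact ⟨⟨j, hlt.trans_le hF⟩, hj⟩

lemma exists_decode_eq {α : Type*} (I : Finset α) {l L M : ℕ} (S : Fin l → Finset α)
    (hS : ∀ i, S i ⊆ I) (hl : l ≤ L) (hM : ∑ i, (S i).card ≤ M) :
    ∃ f : Fin M → Option (Fin L × I),
      decode I f = pairs I \ Finset.univ.biUnion fun i => pairs (S i) := by
  let F : Finset (Fin L × I) := Finset.univ.biUnion fun i : Fin l =>
    ((S i).subtype (· ∈ I)).image fun v => (Fin.castLE hl i, v)
  have hF : F.card ≤ M := by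
    refine (Finset.card_biUnion_le.trans (Finset.sum_le_sum fun i _ => ?_)).trans hM
    refine Finset.card_image_le.trans ?_
    rw [Finset.card_subtype]
    exact Finset.card_filter_le _ _
  obtain ⟨f, hf⟩ := exists_eq_some_iff_mem F hF
  have hmem : ∀ i v, (i, v) ∈ F ↔ ∃ a : Fin l, Fin.castLE hl a = i ∧ (v : α) ∈ S a := by
    intro i v
    simp only [F, Finset.mem_biUnion, Finset.mem_univ, true_and, Finset.mem_image,
      Finset.mem_subtype, Prod.mk.injEq]
    constructor
    · rintro ⟨a, w, hw, rfl, rfl⟩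
      exact ⟨a, rfl, hw⟩
    · rintro ⟨a, rfl, hv⟩
      exact ⟨a, v, hv, rfl, rfl⟩
  refine ⟨f, ?_⟩
  unfold decode
  congr 1
  ext p
  simp only [Finset.mem_biUnion, Finset.mem_univ, true_and, pairs, Finset.mem_powersetCard, hf,
    hmem]
  constructor
  · rintro ⟨i, hp, hc⟩
    obtain ⟨v, hv⟩ := Finset.card_pos.1 (hc ▸ two_pos : 0 < p.card)
    obtain ⟨-, -, a, rfl, -⟩ := Finset.mem_filter.1 (hp hv)
    refine ⟨a, fun w hw => ?_, hc⟩
    obtain ⟨-, -, b, hb, hwb⟩ := Finset.mem_filter.1 (hp hw)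
    rwa [Fin.castLE_injective hl hb] at hwb
  · rintro ⟨a, hp, hc⟩
    exact ⟨Fin.castLE hl a, fun w hw => Finset.mem_filter.2
      ⟨hS a (hp hw), hS a (hp hw), a, rfl, hp hw⟩, hc⟩

lemma Lambda_subset_range_decode {α : Type*} {n k : ℕ} {β : ℝ} (hβ : 0 < β) (hn : 1 ≤ n)
    (I : Finset α) :
    Lambda n k β I ⊆ Set.range
      (decode I : (Fin ⌊2 * k * (n : ℝ) ^ β⌋₊ → Option (Fin (2 * k) × I)) → _) := by
  rintro C ⟨l, S, hS, hsum, rfl⟩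
  have hn1 : (1 : ℝ) ≤ n := by exact_mod_cast hn
  have hpos : (0 : ℝ) < (n : ℝ) ^ β := by positivity
  have hone : (1 : ℝ) ≤ (n : ℝ) ^ β := Real.one_le_rpow hn1 hβ.le
  have hsq : (n : ℝ) ^ (2 * β) = (n : ℝ) ^ β * (n : ℝ) ^ β := by
    rw [two_mul, Real.rpow_add (by positivity)]
  refine exists_decode_eq I S (fun i => (hS i).1) ?_ ?_
  · have h1 : (l : ℝ) * (n : ℝ) ^ (2 * β) ≤ 2 * k * (n : ℝ) ^ β := by
      refine le_trans ?_ hsum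
      simpa using Finset.card_nsmul_le_sum Finset.univ (fun i => ((S i).card : ℝ)) _
        fun i _ => (hS i).2
    have h2 : (l : ℝ) * (n : ℝ) ^ β ≤ 2 * k := by
      rw [hsq, ← mul_assoc] at h1
      exact le_of_mul_le_mul_right h1 hpos
    have h3 : (l : ℝ) ≤ 2 * k := (le_mul_of_one_le_right (Nat.cast_nonneg l) hone).trans h2
    exact_mod_cast h3
  · apply Nat.le_floor
    exact_mod_cast hsum

lemma ncard_Lambda_le {α : Type*} {n k : ℕ} {β : ℝ} (hβ : 0 < β) (hn : 1 ≤ n)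
    (I : Finset α) (hI : I.card = k) :
    (Lambda n k β I).ncard ≤ (2 * k * k + 1) ^ ⌊2 * k * (n : ℝ) ^ β⌋₊ := by
  refine (Set.ncard_le_ncard (Lambda_subset_range_decode hβ hn I) (Set.finite_range _)).trans ?_
  rw [← Set.image_univ]
  refine (Set.ncard_image_le Set.finite_univ).trans ?_
  simp [Set.ncard_univ, Nat.card_eq_fintype_card, hI]

lemma eventually_two_mul_sq_add_one_le {β : ℝ} (hβ : 0 < β) :
    ∀ᶠ n : ℕ in Filter.atTop, 2 * (n : ℝ) * n + 1 ≤ 2 ^ ((n : ℝ) ^ β / 2) := by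
  have hlog : 0 < Real.log 2 := Real.log_pos one_lt_two
  have h := (isLittleO_log_rpow_atTop hβ).bound (show 0 < Real.log 2 / 6 by positivity)
  filter_upwards [tendsto_natCast_atTop_atTop.eventually h, Filter.eventually_ge_atTop 3]
    with n hn hn3
  have hn3' : (3 : ℝ) ≤ n := by exact_mod_cast hn3
  have hpos : (0 : ℝ) < n := by linarith
  rw [Real.norm_of_nonneg (Real.log_nonneg (by linarith)),
    Real.norm_of_nonneg (by positivity)] at hn
  calc 2 * (n : ℝ) * n + 1 ≤ (n : ℝ) ^ 3 := by nlinarith [mul_pos hpos hpos]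
    _ = Real.exp (3 * Real.log n) := by
      rw [← Real.exp_log (pow_pos hpos 3), Real.log_pow]; norm_num
    _ ≤ Real.exp (Real.log 2 * ((n : ℝ) ^ β / 2)) := Real.exp_le_exp.2 (by linarith)
    _ = 2 ^ ((n : ℝ) ^ β / 2) := (Real.rpow_def_of_pos two_pos _).symm

/-- **Observation 8.1 of the paper.**  For fixed `β ∈ (0,1)` and all large `n`,
for every `1 ≤ k ≤ n` and every set `I` of size `k`, `|Λ(I)| ≤ 2^{k·n^{2β}}`. -/
theorem Lambda_card_bound :
    ∀ β : ℝ, 0 < β → β < 1 →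
      ∃ n₀ : ℕ, ∀ n : ℕ, n₀ ≤ n →
        ∀ k : ℕ, 1 ≤ k → k ≤ n →
          ∀ (α : Type) (I : Finset α), I.card = k →
            ((Lambda n k β I).ncard : ℝ) ≤ 2 ^ ((k : ℝ) * (n : ℝ) ^ (2 * β)) := by
  intro β hβ _
  obtain ⟨N, hN⟩ := Filter.eventually_atTop.1 (eventually_two_mul_sq_add_one_le hβ)
  refine ⟨max N 1, fun n hn k _ hkn α I hI => ?_⟩
  have hn1 : 1 ≤ n := (le_max_right _ _).trans hn
  have hn0 : (0 : ℝ) < n := by exact_mod_cast hn1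
  have hkn' : (k : ℝ) ≤ n := by exact_mod_cast hkn
  calc ((Lambda n k β I).ncard : ℝ)
      ≤ (2 * (k : ℝ) * k + 1) ^ ⌊2 * k * (n : ℝ) ^ β⌋₊ := by
        exact_mod_cast ncard_Lambda_le hβ hn1 I hI
    _ ≤ (2 ^ ((n : ℝ) ^ β / 2)) ^ ⌊2 * k * (n : ℝ) ^ β⌋₊ := by
        gcongr
        refine le_trans ?_ (hN n ((le_max_left _ _).trans hn))
        gcongr
    _ = 2 ^ ((n : ℝ) ^ β / 2 * ⌊2 * k * (n : ℝ) ^ β⌋₊) :=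
        (Real.rpow_mul_natCast two_pos.le _ _).symm
    _ ≤ 2 ^ ((n : ℝ) ^ β / 2 * (2 * k * (n : ℝ) ^ β)) := by
        gcongr
        · exact one_le_two
        · exact Nat.floor_le (by positivity)
    _ = 2 ^ ((k : ℝ) * (n : ℝ) ^ (2 * β)) := by
        rw [two_mul β, Real.rpow_add hn0]
        ring_nf

end Stmt8
end

section
/- Let n, k be positive integers, let β > 0, let G' be a graph on vertex set [n], let I ⊆ [n] with |I| = k, and let L' ⊆ L ⊆ [n]. Suppose that the number of edges of G' with one endpoint in L and the other in I is at most k·n^{β}, and that |N_{G'}(x) ∩ I| ≤ k·n^{−2β} for every x ∈ L \ L'. Define C_L = I^{(2)} \ ⋃_{x∈L} (N_{G'}(x))^{(2)} and C_{L'} = I^{(2)} \ ⋃_{x∈L'} (N_{G'}(x))^{(2)}. Then |C_L| ≥ |C_{L'}| − 2·k²·n^{−β}. -/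
open scoped Classical

namespace Stmt9

/-- `S^{(2)}`: the unordered pairs of distinct elements of `S`, encoded as the
2-element subsets of `S`. -/
def pairs {α : Type*} (S : Finset α) : Finset (Finset α) :=
  Finset.powersetCard 2 S

/-- The neighbourhood of `x` in the graph (edge set) `G`. -/
noncomputable def nbr {n : ℕ} (G : Finset (Sym2 (Fin n))) (x : Fin n) : Finset (Fin n) :=
  Finset.univ.filter fun y => s(x, y) ∈ G

/-- The core of `I` with respect to a set `L` of vertices:
`C_L = I^{(2)} \ ⋃_{x ∈ L} (N_{G'}(x))^{(2)}`. -/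
noncomputable def core {n : ℕ} (G' : Finset (Sym2 (Fin n))) (I L : Finset (Fin n)) :
    Finset (Finset (Fin n)) :=
  pairs I \ L.biUnion fun x => pairs (nbr G' x)

/-- Passing from `L'` to `L` loses at most the pairs in `I` inside neighbourhoods of `L \ L'`. -/
theorem core_subset_union {n : ℕ} (G : Finset (Sym2 (Fin n))) (I L L' : Finset (Fin n)) :
    core G I L' ⊆ core G I L ∪ (L \ L').biUnion fun x => pairs (nbr G x ∩ I) := by
  intro p hp
  simp only [core, pairs, Finset.mem_sdiff, Finset.mem_biUnion, Finset.mem_union,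
    Finset.mem_powersetCard, Finset.subset_inter_iff] at hp ⊢
  obtain ⟨⟨hpI, hcard⟩, hp'⟩ := hp
  by_cases h : ∃ x ∈ L, p ⊆ nbr G x ∧ p.card = 2
  · obtain ⟨x, hx, hpx, -⟩ := h
    exact Or.inr ⟨x, ⟨hx, fun hx' => hp' ⟨x, hx', hpx, hcard⟩⟩, ⟨hpx, hpI⟩, hcard⟩
  · exact Or.inl ⟨⟨hpI, hcard⟩, h⟩

/-- Degrees into `I` summed over `S ⊆ L` count each edge between `L` and `I` at most twice. -/
theorem sum_card_nbr_inter_le {n : ℕ} (G : Finset (Sym2 (Fin n))) {I L S : Finset (Fin n)}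
    (hS : S ⊆ L) :
    ∑ x ∈ S, (nbr G x ∩ I).card
      ≤ 2 * (G.filter fun e => ∃ x y : Fin n, e = s(x, y) ∧ x ∈ L ∧ y ∈ I).card := by
  rw [← Finset.card_sigma]
  refine Finset.card_le_mul_card_image_of_maps_to
    (f := fun q : (_ : Fin n) × Fin n => s(q.1, q.2)) ?_ 2 ?_
  · rintro ⟨x, y⟩ hq
    simp only [Finset.mem_inter, nbr,
      Finset.mem_sigma, Finset.mem_filter, Finset.mem_univ, true_and] at hq ⊢
    exact ⟨hq.2.1, x, y, rfl, hS hq.1, hq.2.2⟩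
  · intro e _
    induction e with
    | _ a b =>
      refine (Finset.card_le_card (t := {⟨a, b⟩, ⟨b, a⟩}) ?_).trans Finset.card_le_two
      rintro ⟨x, y⟩ hq
      have h := (Finset.mem_filter.mp hq).2
      rcases Sym2.eq_iff.mp h with ⟨rfl, rfl⟩ | ⟨rfl, rfl⟩ <;> simp

/-- **Lemma 9.4 of the paper.**  If `e(G'[L, I]) ≤ k·n^{β}` and
`|N_{G'}(x) ∩ I| ≤ k·n^{−2β}` for all `x ∈ L \ L'`, then
`|C_L| ≥ |C_{L'}| − 2k²n^{−β}`. -/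
theorem core_comparison (n k : ℕ) (hn : 0 < n) (hk : 0 < k) (β : ℝ) (hβ : 0 < β)
    (G' : Finset (Sym2 (Fin n))) (I L L' : Finset (Fin n))
    (hI : I.card = k) (hL'L : L' ⊆ L)
    (hedges :
      (((G'.filter fun e => ∃ x y : Fin n, e = s(x, y) ∧ x ∈ L ∧ y ∈ I).card : ℝ))
        ≤ k * (n : ℝ) ^ β)
    (hdeg : ∀ x ∈ L \ L', ((nbr G' x ∩ I).card : ℝ) ≤ k * (n : ℝ) ^ (-(2 * β))) :
    ((core G' I L').card : ℝ) - 2 * k ^ 2 * (n : ℝ) ^ (-β)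
      ≤ ((core G' I L).card : ℝ) := by
  have hn' : (0 : ℝ) < n := by exact_mod_cast hn
  have hcard : (core G' I L').card
      ≤ (core G' I L).card + ∑ x ∈ L \ L', (nbr G' x ∩ I).card ^ 2 := by
    refine (Finset.card_le_card (core_subset_union G' I L L')).trans
      ((Finset.card_union_le _ _).trans (Nat.add_le_add_left ?_ _))
    refine Finset.card_biUnion_le.trans (Finset.sum_le_sum fun x _ => ?_)
    rw [pairs, Finset.card_powersetCard]
    exact Nat.choose_le_pow _ _
  have hsum : (∑ x ∈ L \ L', ((nbr G' x ∩ I).card : ℝ)) ≤ 2 * (k * (n : ℝ) ^ β) := by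
    refine le_trans ?_ (mul_le_mul_of_nonneg_left hedges zero_le_two)
    exact_mod_cast sum_card_nbr_inter_le G' (I := I) (Finset.sdiff_subset (s := L) (t := L'))
  have hsq : (∑ x ∈ L \ L', ((nbr G' x ∩ I).card : ℝ) ^ 2) ≤ 2 * k ^ 2 * (n : ℝ) ^ (-β) :=
    calc (∑ x ∈ L \ L', ((nbr G' x ∩ I).card : ℝ) ^ 2)
        ≤ ∑ x ∈ L \ L', k * (n : ℝ) ^ (-(2 * β)) * ((nbr G' x ∩ I).card : ℝ) := by
          refine Finset.sum_le_sum fun x hx => ?_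
          rw [sq]
          exact mul_le_mul_of_nonneg_right (hdeg x hx) (Nat.cast_nonneg _)
      _ = k * (n : ℝ) ^ (-(2 * β)) * ∑ x ∈ L \ L', ((nbr G' x ∩ I).card : ℝ) := by
          rw [Finset.mul_sum]
      _ ≤ k * (n : ℝ) ^ (-(2 * β)) * (2 * (k * (n : ℝ) ^ β)) :=
          mul_le_mul_of_nonneg_left hsum (by positivity)
      _ = 2 * k ^ 2 * ((n : ℝ) ^ (-(2 * β)) * (n : ℝ) ^ β) := by ring
      _ = 2 * k ^ 2 * (n : ℝ) ^ (-β) := by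
          rw [← Real.rpow_add hn']
          ring_nf
  have hcard' : ((core G' I L').card : ℝ)
      ≤ (core G' I L).card + ∑ x ∈ L \ L', ((nbr G' x ∩ I).card : ℝ) ^ 2 := by
    exact_mod_cast hcard
  linarith

end Stmt9
end

section
/- Let n, r, k, ℓ be positive integers with ℓ ≤ k, and let [n] be partitioned into parts V₁,…,V_{m}, each of size r. Let π(I) denote the set of indices j such that I ∩ V_j ≠ ∅. Then the number of k-element subsets I ⊆ [n] with |π(I)| = ℓ is at most C(n, ℓ) · C(r·ℓ, k − ℓ), where C(a,b) denotes the binomial coefficient. -/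
/-- If all fibres of `P` have at most `r` elements, the preimage of `J` has at most `r * |J|`. -/
theorem card_filter_mem_le_mul {α β : Type*} [Fintype α] [DecidableEq β] (P : α → β) (r : ℕ)
    (hP : ∀ j, (Finset.univ.filter fun x => P x = j).card ≤ r) (J : Finset β) :
    (Finset.univ.filter fun x => P x ∈ J).card ≤ r * J.card := by
  refine Finset.card_le_mul_card_image_of_maps_to (f := P) (fun x hx => by simpa using hx) r ?_
  intro j _
  exact (Finset.card_le_card (Finset.filter_subset_filter _ (Finset.subset_univ _))).trans (hP j)

/-- Every finset contains a transversal of its image under `P`. -/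
theorem exists_transversal {α β : Type*} [DecidableEq β] (P : α → β) (I : Finset α) :
    ∃ S ⊆ I, S.image P = I.image P ∧ S.card = (I.image P).card := by
  obtain ⟨S, hSI, hS⟩ := (Set.surjOn_image P (I : Set α)).exists_bijOn_subset
  lift S to Finset α using I.finite_toSet.subset hSI
  have himage : S.image P = I.image P := by
    apply Finset.coe_injective
    simpa using hS.image_eq
  exact ⟨S, by exact_mod_cast hSI, himage, by rw [← himage, Finset.card_image_of_injOn hS.injOn]⟩

open scoped Classical

/-- **The counting bound from the proof of Theorem 3.1.**
If `[n]` is partitioned into parts of size `r` (the fibres of `P`), then the number of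
`k`-element subsets `I ⊆ [n]` meeting exactly `ℓ` parts is at most
`C(n, ℓ)·C(r·ℓ, k − ℓ)`. -/
theorem count_sets_by_projection (n r k ℓ m : ℕ)
    (hn : 0 < n) (hr : 0 < r) (hk : 0 < k) (hℓ : 0 < ℓ) (hℓk : ℓ ≤ k)
    (P : Fin n → Fin m)
    (hparts : ∀ j : Fin m, (Finset.univ.filter fun x => P x = j).card = r) :
    ((Finset.powersetCard k (Finset.univ : Finset (Fin n))).filter
        (fun I => (I.image P).card = ℓ)).card
      ≤ Nat.choose n ℓ * Nat.choose (r * ℓ) (k - ℓ) := by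
  calc
    _ ≤ ((Finset.powersetCard ℓ (Finset.univ : Finset (Fin n))).biUnion fun S =>
          (Finset.powersetCard (k - ℓ) (Finset.univ.filter fun x => P x ∈ S.image P)).image
            (S ∪ ·)).card := by
      apply Finset.card_le_card
      intro I hI
      simp only [Finset.mem_filter, Finset.mem_powersetCard_univ] at hI
      obtain ⟨S, hSI, himage, hcard⟩ := exists_transversal P I
      rw [hI.2] at hcard
      simp only [Finset.mem_biUnion, Finset.mem_powersetCard_univ]
      refine ⟨S, hcard, Finset.mem_image.2 ⟨I \ S, ?_, Finset.union_sdiff_of_subset hSI⟩⟩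
      refine Finset.mem_powersetCard.2 ⟨fun x hx => ?_, ?_⟩
      · rw [himage]
        simpa using ⟨x, (Finset.mem_sdiff.1 hx).1, rfl⟩
      · rw [Finset.card_sdiff_of_subset hSI, hI.1, hcard]
    _ ≤ (Finset.powersetCard ℓ (Finset.univ : Finset (Fin n))).card *
          Nat.choose (r * ℓ) (k - ℓ) := by
      refine Finset.card_biUnion_le_card_mul _ _ _ fun S hS => Finset.card_image_le.trans ?_
      rw [Finset.card_powersetCard]
      refine Nat.choose_le_choose _
        ((card_filter_mem_le_mul P r (fun j => (hparts j).le) _).trans ?_)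
      rw [← Finset.mem_powersetCard_univ.1 hS]
      exact Nat.mul_le_mul_left r Finset.card_image_le
    _ = _ := by rw [Finset.card_powersetCard, Finset.card_univ, Fintype.card_fin]
end

section
/- Let V be a finite vertex set, let A and B be graphs on V with A ∩ B = ∅ and A triangle-free, and let C ⊆ B be maximal (under inclusion) such that A ∪ C is triangle-free; set M = A ∪ C. Let I ⊆ V and let e = xy ∈ B with x, y ∈ I be such that for every vertex v ∉ I it is not the case that both xv ∈ A ∪ B and yv ∈ A ∪ B. Then I is not an independent set of M; that is, M contains an edge with both endpoints in I. -/
namespace Stmt13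

/-- A graph (identified with its edge set) is triangle-free if no three of its edges
form a triangle. -/
def TriangleFree {V : Type*} (H : Set (Sym2 V)) : Prop :=
  ¬ ∃ x y z : V, x ≠ y ∧ x ≠ z ∧ y ≠ z ∧
      s(x, y) ∈ H ∧ s(x, z) ∈ H ∧ s(y, z) ∈ H

/-- If adding the edge `xy` to a triangle-free graph creates a triangle, then `x` and `y`
have a common neighbour. -/
theorem TriangleFree.exists_common_neighbour {V : Type*} {H : Set (Sym2 V)} {x y : V}
    (hH : TriangleFree H) (hins : ¬ TriangleFree (insert s(x, y) H)) :
    ∃ v, v ≠ x ∧ v ≠ y ∧ s(x, v) ∈ H ∧ s(y, v) ∈ H := by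
  obtain ⟨p, q, r, hpq, hpr, hqr, h₁, h₂, h₃⟩ := not_not.mp hins
  have hpqr : ¬ (s(p, q) ∈ H ∧ s(p, r) ∈ H ∧ s(q, r) ∈ H) :=
    fun h => hH ⟨p, q, r, hpq, hpr, hqr, h⟩
  simp only [Set.mem_insert_iff, Sym2.eq_iff] at h₁ h₂ h₃
  have hswap (a b : V) : s(a, b) = s(b, a) := Sym2.eq_swap
  grind

/-- **Claim 9.6 of the paper.**
Let `A`, `B` be disjoint graphs on a finite vertex set with `A` triangle-free, and let
`C ⊆ B` be maximal such that `M = A ∪ C` is triangle-free.  If `e = xy ∈ B` has both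
endpoints in `I`, and no vertex `v ∉ I` satisfies both `xv ∈ A ∪ B` and `yv ∈ A ∪ B`,
then `I` is not independent in `M`: some edge of `M` has both (distinct) endpoints
in `I`. -/
theorem not_independent_of_maximal_cleaning {V : Type*} [Fintype V]
    (A B C : Set (Sym2 V)) (hAB : A ∩ B = ∅) (hA : TriangleFree A)
    (hCB : C ⊆ B) (hAC : TriangleFree (A ∪ C))
    (hmax : ∀ C', C ⊆ C' → C' ⊆ B → TriangleFree (A ∪ C') → C' = C)
    (I : Set V) (x y : V) (hxy : x ≠ y) (hxI : x ∈ I) (hyI : y ∈ I)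
    (heB : s(x, y) ∈ B)
    (hclosed : ∀ v : V, v ∉ I → ¬ (s(x, v) ∈ A ∪ B ∧ s(y, v) ∈ A ∪ B)) :
    ∃ u w : V, u ≠ w ∧ u ∈ I ∧ w ∈ I ∧ s(u, w) ∈ A ∪ C := by
  by_cases hC : s(x, y) ∈ C
  · exact ⟨x, y, hxy, hxI, hyI, Or.inr hC⟩
  have hins : ¬ TriangleFree (insert s(x, y) (A ∪ C)) := by
    rw [← Set.union_insert]
    intro h
    exact hC (hmax _ (Set.subset_insert _ _) (Set.insert_subset heB hCB) h ▸
      Set.mem_insert _ _)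
  obtain ⟨v, hvx, -, hxv, hyv⟩ := hAC.exists_common_neighbour hins
  have hsub : A ∪ C ⊆ A ∪ B := Set.union_subset_union_right A hCB
  have hvI : v ∈ I := by
    by_contra hv
    exact hclosed v hv ⟨hsub hxv, hsub hyv⟩
  exact ⟨x, v, hvx.symm, hxI, hvI, hxv⟩

end Stmt13
end
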